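/- arXiv:1106.0895 — 6 statements merged into one kernel-verified Lean document; each statement's English description precedes it below -/
import Mathlib

section
/- Fix a pmf p on 𝒳ⁿ, a distortion function d: 𝒳ⁿ×𝒳̂ⁿ→[0,∞), and a feed-forward code with delay 1, block length n and M messages. Let X̂ⁿ be the reproduction of Xⁿ ~ p produced by the code, and let I(X̂ⁿ→Xⁿ) be the directed information computed from p and the conditional distribution of X̂ⁿ given Xⁿ induced by the (deterministic) code. Then log₂ M ≥ I(X̂ⁿ→Xⁿ). In particular, if E[d(Xⁿ,X̂ⁿ)] ≤ D then log₂ M ≥ n·Rₙ(D). -/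
open scoped BigOperators
open Filter

noncomputable section

namespace FFRD

variable {X Y : Type} [Fintype X] [DecidableEq X] [Fintype Y] [DecidableEq Y] {n : ℕ}

/-- `p` is a probability mass function on a finite type. -/
def IsPMF {α : Type} [Fintype α] (p : α → ℝ) : Prop :=
  (∀ a, 0 ≤ p a) ∧ ∑ a, p a = 1

/-- `r` is a conditional pmf on `Fin n → Y` given `Fin n → X`. -/
def IsCondPMF (r : (Fin n → X) → (Fin n → Y) → ℝ) : Prop :=
  (∀ x y, 0 ≤ r x y) ∧ ∀ x, ∑ y, r x y = 1

/-- The causal conditioning pmf `q_r(ŷⁿ‖x^{n-1})` induced by the joint pmf `p(x)·r(y|x)`: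
the product over `i` of the conditional probabilities `P(y_i | y^{i-1}, x^{i-1})`. -/
def causalCond (p : (Fin n → X) → ℝ) (r : (Fin n → X) → (Fin n → Y) → ℝ)
    (x : Fin n → X) (y : Fin n → Y) : ℝ :=
  ∏ i : Fin n,
    ((∑ x' : Fin n → X, ∑ y' : Fin n → Y,
        if (∀ j, j < i → x' j = x j) ∧ (∀ j, j ≤ i → y' j = y j)
        then p x' * r x' y' else 0) /
      (∑ x' : Fin n → X, ∑ y' : Fin n → Y,
        if (∀ j, j < i → x' j = x j) ∧ (∀ j, j < i → y' j = y j)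
        then p x' * r x' y' else 0))

/-- Directed information `I(X̂ⁿ → Xⁿ)` computed from source pmf `p` and conditional pmf `r`. -/
def directedInfo (p : (Fin n → X) → ℝ) (r : (Fin n → X) → (Fin n → Y) → ℝ) : ℝ :=
  ∑ x, ∑ y, p x * r x y * Real.logb 2 (r x y / causalCond p r x y)

/-- The `n`-th order rate distortion function with feed-forward. -/
def Rn (n : ℕ) (p : (Fin n → X) → ℝ) (d : (Fin n → X) → (Fin n → Y) → ℝ) (D : ℝ) : ℝ :=
  (1 / (n : ℝ)) *
    sInf {v | ∃ r : (Fin n → X) → (Fin n → Y) → ℝ, IsCondPMF r ∧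
      (∑ x, ∑ y, p x * r x y * d x y) ≤ D ∧ v = directedInfo p r}

/-- Left shift on sequences. -/
def shift (X : Type) : (ℕ → X) → (ℕ → X) := fun ω k => ω (k + 1)

/-- The law of the first `n` coordinates under `μ`. -/
def lawFin [MeasurableSpace X] (μ : MeasureTheory.Measure (ℕ → X)) (n : ℕ)
    (x : Fin n → X) : ℝ :=
  (μ {ω | ∀ i : Fin n, ω (i : ℕ) = x i}).toReal

/-- Per-letter distortion extended to blocks of length `L`. -/
def dBlock (d0 : X → Y → ℝ) (L : ℕ) (x : Fin L → X) (y : Fin L → Y) : ℝ :=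
  (1 / (L : ℝ)) * ∑ i, d0 (x i) (y i)

end FFRD

namespace FFRDaux
open FFRD

variable {X Y : Type} [Fintype X] [DecidableEq X] [Fintype Y] [DecidableEq Y]

lemma sum_prod_le_one [Nonempty X] : ∀ (n : ℕ) (c : Fin n → (Fin n → X) → ℝ),
    (∀ i x, 0 ≤ c i x) →
    (∀ i x x', (∀ j, j ≤ i → x j = x' j) → c i x = c i x') →
    (∀ i x, ∑ a, c i (Function.update x i a) ≤ 1) →
    ∑ x, ∏ i, c i x ≤ 1 := by
  intro n
  induction n with
  | zero => intro c _ _ _; simp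
  | succ n ih =>
    intro c h0 hdep hsum
    obtain ⟨x0⟩ : Nonempty X := inferInstance
    rw [← (Fin.consEquiv (fun _ : Fin (n+1) => X)).sum_comp, Fintype.sum_prod_type]
    have key : ∀ a : X, ∑ t : Fin n → X, ∏ i, c i (Fin.cons a t : Fin (n+1) → X)
        ≤ c 0 (Fin.cons a (fun _ => x0) : Fin (n+1) → X) := by
      intro a
      have h1 : ∀ t : Fin n → X, ∏ i, c i (Fin.cons a t : Fin (n+1) → X)
          = c 0 (Fin.cons a (fun _ => x0) : Fin (n+1) → X) *
            ∏ i : Fin n, c i.succ (Fin.cons a t : Fin (n+1) → X) := by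
        intro t
        rw [Fin.prod_univ_succ]
        congr 1
        apply hdep
        intro j hj
        have : j = 0 := by simpa using hj
        subst this
        simp
      simp_rw [h1]
      rw [← Finset.mul_sum]
      apply mul_le_of_le_one_right (h0 _ _)
      apply ih (fun i t => c i.succ (Fin.cons a t : Fin (n+1) → X))
      · intro i x; exact h0 _ _
      · intro i x x' h
        apply hdep
        intro j hj
        refine Fin.cases ?_ (fun k hk => ?_) j hj
        · intro _; simp
        · simp only [Fin.cons_succ]
          exact h k (by simpa using hk)
      · intro i x
        have := hsum i.succ (Fin.cons a x : Fin (n+1) → X)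
        simpa [Fin.cons_update] using this
    calc _ ≤ ∑ a, c 0 (Fin.cons a (fun _ => x0) : Fin (n+1) → X) :=
          Finset.sum_le_sum (fun a _ => key a)
      _ ≤ 1 := by
          have := hsum 0 (Fin.cons x0 (fun _ => x0) : Fin (n+1) → X)
          simpa [Fin.update_cons_zero] using this

variable {n : ℕ}

lemma causal_nonneg (p : (Fin n → X) → ℝ) (hp : ∀ a, 0 ≤ p a)
    (r : (Fin n → X) → (Fin n → Y) → ℝ) (h : ∀ x y, 0 ≤ r x y) (x y) :
    0 ≤ causalCond p r x y := by
  unfold causalCond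
  refine Finset.prod_nonneg fun i _ => div_nonneg ?_ ?_ <;>
  · refine Finset.sum_nonneg fun a _ => Finset.sum_nonneg fun b _ => ?_
    have := mul_nonneg (hp a) (h a b)
    split_ifs <;> simp [this]

lemma causal_le_one (p : (Fin n → X) → ℝ) (hp : ∀ a, 0 ≤ p a)
    (r : (Fin n → X) → (Fin n → Y) → ℝ) (h : ∀ x y, 0 ≤ r x y) (x y) :
    causalCond p r x y ≤ 1 := by
  unfold causalCond
  have hh : ∀ a b, 0 ≤ p a * r a b := fun a b => mul_nonneg (hp a) (h a b)
  refine Finset.prod_le_one (fun i _ => div_nonneg ?_ ?_) (fun i _ => div_le_one_of_le₀ ?_ ?_)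
  · refine Finset.sum_nonneg fun a _ => Finset.sum_nonneg fun b _ => ?_
    have := hh a b
    split_ifs <;> simp [this]
  · refine Finset.sum_nonneg fun a _ => Finset.sum_nonneg fun b _ => ?_
    have := hh a b
    split_ifs <;> simp [this]
  · refine Finset.sum_le_sum fun a _ => Finset.sum_le_sum fun b _ => ?_
    have := hh a b
    by_cases h1 : (∀ j, j < i → a j = x j) ∧ (∀ j, j ≤ i → b j = y j)
    · rw [if_pos h1, if_pos ⟨h1.1, fun j hj => h1.2 j hj.le⟩]
    · rw [if_neg h1]; split_ifs <;> simp [this]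
  · refine Finset.sum_nonneg fun a _ => Finset.sum_nonneg fun b _ => ?_
    have := hh a b
    split_ifs <;> simp [this]

lemma info_bdd (p : (Fin n → X) → ℝ) (hp : ∀ a, 0 ≤ p a)
    (r : (Fin n → X) → (Fin n → Y) → ℝ) (h : ∀ x y, 0 ≤ r x y) :
    ∑ x, ∑ _y : Fin n → Y, -(p x / Real.log 2) ≤ directedInfo p r := by
  unfold directedInfo
  refine Finset.sum_le_sum fun x _ => Finset.sum_le_sum fun y _ => ?_
  have hl : 0 < Real.log 2 := Real.log_pos (by norm_num)
  have hpl := div_nonneg (hp x) hl.le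
  have hq0 := causal_nonneg p hp r h x y
  have hq1 := causal_le_one p hp r h x y
  set q := causalCond p r x y
  rcases hq0.eq_or_lt with h0 | h0
  · simp [← h0]; exact hpl
  rcases (h x y).eq_or_lt with hr | hr
  · simp [← hr]; exact hpl
  have h1 : 1 - (r x y)⁻¹ ≤ Real.log (r x y / q) := by
    refine (Real.one_sub_inv_le_log_of_pos hr).trans ?_
    apply Real.log_le_log hr
    rw [le_div_iff₀ h0]
    exact mul_le_of_le_one_right hr.le hq1
  have h2 : -1 ≤ r x y * Real.log (r x y / q) := by
    have := mul_le_mul_of_nonneg_left h1 hr.le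
    rw [mul_sub, mul_inv_cancel₀ hr.ne'] at this
    linarith
  have h3 := mul_le_mul_of_nonneg_left h2 hpl
  unfold Real.logb
  calc _ = p x / Real.log 2 * -1 := by ring
    _ ≤ _ := h3
    _ = _ := by ring

/-- partial weights -/
def W (p : (Fin n → X) → ℝ) (xh : (Fin n → X) → (Fin n → Y)) (k l : ℕ)
    (x : Fin n → X) (y : Fin n → Y) : ℝ :=
  ∑ x' : Fin n → X, if (∀ j : Fin n, j.val < k → x' j = x j) ∧
    (∀ j : Fin n, j.val < l → xh x' j = y j) then p x' else 0

lemma W_nonneg (p : (Fin n → X) → ℝ) (hp : ∀ a, 0 ≤ p a) (xh : (Fin n → X) → (Fin n → Y))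
    (k l x y) : 0 ≤ W p xh k l x y := by
  refine Finset.sum_nonneg fun a _ => ?_
  have := hp a
  split_ifs <;> simp [this]

lemma le_W (p : (Fin n → X) → ℝ) (hp : ∀ a, 0 ≤ p a) (xh : (Fin n → X) → (Fin n → Y))
    (k l x) : p x ≤ W p xh k l x (xh x) := by
  have := Finset.single_le_sum (f := fun x' => if (∀ j : Fin n, j.val < k → x' j = x j) ∧
    (∀ j : Fin n, j.val < l → xh x' j = xh x j) then p x' else 0) (s := Finset.univ)
    (fun a _ => by have := hp a; split_ifs <;> simp [this]) (Finset.mem_univ x)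
  simpa [W] using this

lemma W_zero (p : (Fin n → X) → ℝ) (xh : (Fin n → X) → (Fin n → Y)) (x y) :
    W p xh 0 0 x y = ∑ x, p x := by simp [W]

lemma W_last (p : (Fin n → X) → ℝ) (xh : (Fin n → X) → (Fin n → Y)) (x) :
    W p xh n n x (xh x) = p x := by
  unfold W
  rw [Finset.sum_eq_single x]
  · simp
  · intro b _ hb
    rw [if_neg]
    rintro ⟨h, _⟩
    exact hb (funext fun j => h j j.2)
  · simp

lemma W_congr (p : (Fin n → X) → ℝ) (xh : (Fin n → X) → (Fin n → Y)) (k l) {x x' y y'}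
    (hx : ∀ j : Fin n, j.val < k → x j = x' j) (hy : ∀ j : Fin n, j.val < l → y j = y' j) :
    W p xh k l x y = W p xh k l x' y' := by
  unfold W
  refine Finset.sum_congr rfl fun a _ => ?_
  congr 1
  refine propext (and_congr ?_ ?_)
  · exact forall_congr' fun j => forall_congr' fun hj => by rw [hx j hj]
  · exact forall_congr' fun j => forall_congr' fun hj => by rw [hy j hj]

lemma W_sum (p : (Fin n → X) → ℝ) (xh : (Fin n → X) → (Fin n → Y)) (i : Fin n) (l x y) :
    ∑ a, W p xh (i.val+1) l (Function.update x i a) y = W p xh i.val l x y := by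
  unfold W
  rw [Finset.sum_comm]
  refine Finset.sum_congr rfl fun x' _ => ?_
  rw [Finset.sum_eq_single (x' i)]
  · congr 1
    refine propext (and_congr_left fun _ => ?_)
    constructor
    · intro h j hj
      have := h j (by omega)
      rwa [Function.update_of_ne (by rintro rfl; omega)] at this
    · intro h j hj
      by_cases hji : j = i
      · subst hji; simp
      · rw [Function.update_of_ne hji]
        exact h j (by have := Fin.val_ne_of_ne hji; omega)
  · intro b _ hb
    rw [if_neg]
    rintro ⟨h, _⟩
    have := h i (by omega)
    simp at this
    exact hb this.symm
  · simp

lemma causal_eq (p : (Fin n → X) → ℝ) (xh : (Fin n → X) → (Fin n → Y))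
    (r : (Fin n → X) → (Fin n → Y) → ℝ)
    (hr : ∀ x y, r x y = if y = xh x then (1 : ℝ) else 0) (x y) :
    causalCond p r x y = ∏ i : Fin n, (W p xh i.val (i.val+1) x y / W p xh i.val i.val x y) := by
  unfold causalCond W
  refine Finset.prod_congr rfl fun i _ => ?_
  congr 1 <;>
  · refine Finset.sum_congr rfl fun x' _ => ?_
    rw [Finset.sum_eq_single (xh x')]
    · simp only [hr, Fin.lt_def, Fin.le_def, Nat.lt_succ_iff, if_true, mul_one]
    · intro b _ hb
      simp [hr, hb]
    · simp

lemma main_ineq [Nonempty X] (p : (Fin n → X) → ℝ) (hp : IsPMF p)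
    (M : ℕ) (hM : 0 < M)
    (f : (Fin n → X) → Fin M) (g : Fin n → Fin M → (Fin n → X) → Y)
    (hg : ∀ i m x x', (∀ j, j < i → x j = x' j) → g i m x = g i m x')
    (xhat : (Fin n → X) → (Fin n → Y))
    (hxhat : ∀ x i, xhat x i = g i (f x) x)
    (r : (Fin n → X) → (Fin n → Y) → ℝ)
    (hr : ∀ x y, r x y = if y = xhat x then (1 : ℝ) else 0) :
    directedInfo p r ≤ Real.logb 2 (M : ℝ) := by
  have hp0 := hp.1
  let S : (Fin n → X) → (Fin n → Y) → ℝ := fun x y =>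
    ∏ i : Fin n, (W p xhat (i.val+1) (i.val+1) x y / W p xhat i.val (i.val+1) x y)
  have hS0 : ∀ x y, 0 ≤ S x y := fun x y =>
    Finset.prod_nonneg fun i _ => div_nonneg (W_nonneg p hp0 _ _ _ _ _) (W_nonneg p hp0 _ _ _ _ _)
  have hSm : ∀ m : Fin M, ∑ x, S x (fun i => g i m x) ≤ 1 := by
    intro m
    apply sum_prod_le_one n (fun i x => W p xhat (i.val+1) (i.val+1) x (fun i => g i m x) /
      W p xhat i.val (i.val+1) x (fun i => g i m x))
    · intro i x
      exact div_nonneg (W_nonneg p hp0 _ _ _ _ _) (W_nonneg p hp0 _ _ _ _ _)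
    · intro i x x' h
      have hgg : ∀ j : Fin n, j.val < i.val + 1 → g j m x = g j m x' := fun j hj =>
        hg _ _ _ _ fun k hk => h k (by rw [Fin.lt_def] at hk; rw [Fin.le_def]; omega)
      rw [W_congr p xhat _ _ (x := x) (x' := x') (fun j hj => h j (by rw [Fin.le_def]; omega)) hgg,
        W_congr p xhat _ _ (x := x) (x' := x') (fun j hj => h j (by rw [Fin.le_def]; omega)) hgg]
    · intro i x
      have hgg : ∀ a, ∀ j : Fin n, j.val < i.val + 1 →
          g j m (Function.update x i a) = g j m x := fun a j hj =>
        hg _ _ _ _ fun k hk => Function.update_of_ne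
          (by rintro rfl; rw [Fin.lt_def] at hk; omega) _ _
      have e : ∀ a, W p xhat (i.val+1) (i.val+1) (Function.update x i a)
            (fun j => g j m (Function.update x i a)) /
          W p xhat i.val (i.val+1) (Function.update x i a)
            (fun j => g j m (Function.update x i a)) =
          W p xhat (i.val+1) (i.val+1) (Function.update x i a) (fun j => g j m x) /
          W p xhat i.val (i.val+1) x (fun j => g j m x) := by
        intro a
        rw [W_congr p xhat (i.val+1) (i.val+1) (fun j hj => rfl) (hgg a),
          W_congr p xhat i.val (i.val+1) (x := Function.update x i a) (x' := x)
            (fun j hj => Function.update_of_ne (by rintro rfl; omega) _ _) (hgg a)]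
      simp only [e]
      rw [← Finset.sum_div, W_sum]
      exact div_self_le_one _
  have hS : ∑ x, S x (xhat x) ≤ M := by
    calc ∑ x, S x (xhat x) ≤ ∑ x, ∑ m : Fin M, S x (fun i => g i m x) := by
          refine Finset.sum_le_sum fun x _ => ?_
          have : xhat x = fun i => g i (f x) x := funext (hxhat x)
          rw [this]
          exact Finset.single_le_sum (f := fun m => S x (fun i => g i m x))
            (fun m _ => hS0 _ _) (Finset.mem_univ (f x))
      _ = ∑ m : Fin M, ∑ x, S x (fun i => g i m x) := Finset.sum_comm
      _ ≤ ∑ m : Fin M, (1:ℝ) := Finset.sum_le_sum fun m _ => hSm m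
      _ = M := by simp
  have hMr : (0:ℝ) < M := by exact_mod_cast hM
  have hl : 0 < Real.log 2 := Real.log_pos (by norm_num)
  have hprod : ∀ x, 0 < p x → causalCond p r x (xhat x) * S x (xhat x) = p x ∧
      0 < causalCond p r x (xhat x) := by
    intro x hx
    have hW : ∀ k l, 0 < W p xhat k l x (xhat x) := fun k l => hx.trans_le (le_W p hp0 _ _ _ _)
    rw [causal_eq p xhat r hr]
    refine ⟨?_, Finset.prod_pos fun i _ => div_pos (hW _ _) (hW _ _)⟩
    simp only [S]
    rw [← Finset.prod_mul_distrib]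
    have e : ∀ i : Fin n, W p xhat i.val (i.val+1) x (xhat x) / W p xhat i.val i.val x (xhat x) *
       (W p xhat (i.val+1) (i.val+1) x (xhat x) / W p xhat i.val (i.val+1) x (xhat x)) =
       W p xhat (i.val+1) (i.val+1) x (xhat x) / W p xhat i.val i.val x (xhat x) := by
      intro i
      have := (hW i.val (i.val+1)).ne'
      have := (hW i.val i.val).ne'
      field_simp
    simp only [e]
    rw [Fin.prod_univ_eq_prod_range (fun k => W p xhat (k+1) (k+1) x (xhat x) /
      W p xhat k k x (xhat x)) n]
    have tel : ∀ N : ℕ, ∏ k ∈ Finset.range N, (W p xhat (k+1) (k+1) x (xhat x) /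
      W p xhat k k x (xhat x)) = W p xhat N N x (xhat x) := by
      intro N
      induction N with
      | zero => simp [W_zero, hp.2]
      | succ N ih =>
        rw [Finset.prod_range_succ, ih]
        have := (hW N N).ne'
        field_simp
    rw [tel, W_last]
  have hterm : ∀ x, p x * Real.log (1 / causalCond p r x (xhat x)) ≤
      p x * Real.log M + (S x (xhat x) / M - p x) := by
    intro x
    rcases (hp0 x).eq_or_lt with h0 | h0
    · rw [← h0]
      have := div_nonneg (hS0 x (xhat x)) hMr.le
      simpa using this
    obtain ⟨h1, h2⟩ := hprod x h0
    set q := causalCond p r x (xhat x)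
    have h3 : Real.log (1 / q) = Real.log M + Real.log (1 / (q * M)) := by
      rw [← Real.log_mul hMr.ne' (by positivity)]
      congr 1
      field_simp
    have h4 := Real.log_le_sub_one_of_pos (show 0 < 1 / (q * M) by positivity)
    have h5 := mul_le_mul_of_nonneg_left h4 h0.le
    have h6 : S x (xhat x) / M = p x * (1 / (q * M)) := by
      rw [← h1]; field_simp
    rw [h3, h6]
    linarith
  have hdi : directedInfo p r =
      (∑ x, p x * Real.log (1 / causalCond p r x (xhat x))) / Real.log 2 := by
    unfold directedInfo
    rw [Finset.sum_div]
    refine Finset.sum_congr rfl fun x _ => ?_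
    rw [Finset.sum_eq_single (xhat x)]
    · rw [hr, if_pos rfl, Real.logb]; ring
    · intro b _ hb
      simp [hr, hb]
    · simp
  rw [hdi, Real.logb]
  refine div_le_div_of_nonneg_right ?_ hl.le
  refine (Finset.sum_le_sum fun x _ => hterm x).trans ?_
  rw [Finset.sum_add_distrib, Finset.sum_sub_distrib, ← Finset.sum_mul, ← Finset.sum_div, hp.2]
  have : (∑ x, S x (xhat x)) / M ≤ 1 := div_le_one_of_le₀ hS hMr.le
  linarith

end FFRDaux

open FFRD in
/-- converse / Lemma 4: for any feed-forward code with delay 1 and `M`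
messages, `log₂ M ≥ I(X̂ⁿ→Xⁿ)` for the induced (deterministic) conditional distribution;
in particular if the expected distortion is at most `D` then `log₂ M ≥ n·Rₙ(D)`. -/
theorem converse_feed_forward
    {X Y : Type} [Fintype X] [Nonempty X] [DecidableEq X] [Fintype Y] [DecidableEq Y]
    (n : ℕ) (hn : 1 ≤ n)
    (p : (Fin n → X) → ℝ) (hp : IsPMF p)
    (d : (Fin n → X) → (Fin n → Y) → ℝ) (hd : ∀ x y, 0 ≤ d x y)
    (M : ℕ) (hM : 0 < M)
    (f : (Fin n → X) → Fin M) (g : Fin n → Fin M → (Fin n → X) → Y)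
    (hg : ∀ i m x x', (∀ j, j < i → x j = x' j) → g i m x = g i m x')
    (xhat : (Fin n → X) → (Fin n → Y))
    (hxhat : ∀ x i, xhat x i = g i (f x) x)
    (r : (Fin n → X) → (Fin n → Y) → ℝ)
    (hr : ∀ x y, r x y = if y = xhat x then (1 : ℝ) else 0) :
    Real.logb 2 (M : ℝ) ≥ directedInfo p r ∧
      ∀ D : ℝ, (∑ x, p x * d x (xhat x)) ≤ D →
        Real.logb 2 (M : ℝ) ≥ (n : ℝ) * Rn n p d D := by
  have h1 := FFRDaux.main_ineq p hp M hM f g hg xhat hxhat r hr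
  refine ⟨h1, fun D hD => ?_⟩
  have hn' : (n : ℝ) ≠ 0 := by positivity
  unfold Rn
  rw [← mul_assoc, mul_one_div_cancel hn', one_mul]
  refine le_trans (csInf_le ?_ ⟨r, ⟨?_, ?_⟩, ?_, rfl⟩) h1
  · refine ⟨∑ x, ∑ _y : Fin n → Y, -(p x / Real.log 2), ?_⟩
    rintro v ⟨r', hr', _, rfl⟩
    exact FFRDaux.info_bdd p hp.1 r' hr'.1
  · intro x y
    rw [hr]; split_ifs <;> norm_num
  · intro x
    simp [hr]
  · refine le_trans (le_of_eq ?_) hD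
    refine Finset.sum_congr rfl fun x _ => ?_
    simp [hr]
end
end

section
/- Let p be a pmf on 𝒳^{n+l}, let rₙ be a conditional pmf on 𝒳̂ⁿ given 𝒳ⁿ and r_l a conditional pmf on 𝒳̂^l given 𝒳^l, and define the joint pmf of (X^{n+l}, X̂^{n+l}) by p(x^{n+l})·rₙ(x̂₁ⁿ|x₁ⁿ)·r_l(x̂_{n+1}^{n+l}|x_{n+1}^{n+l}). Then the directed informations satisfy I(X̂^{n+l}→X^{n+l}) ≤ I(X̂₁ⁿ→X₁ⁿ) + I(X̂_{n+1}^{n+l}→X_{n+1}^{n+l}), where the directed information of the first block is computed from the marginal of p on the first n coordinates together with rₙ, and that of the second block from the marginal of p on the last l coordinates together with r_l. -/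
open scoped BigOperators
open Filter

noncomputable section

namespace FFRDaux
open FFRD

def mass {Ω A : Type} [Fintype Ω] [DecidableEq A] (P : Ω → ℝ) (F : Ω → A) (a : A) : ℝ :=
  ∑ ω, if F ω = a then P ω else 0

lemma mass_nonneg {Ω A : Type} [Fintype Ω] [DecidableEq A] (P : Ω → ℝ) (hP : ∀ ω, 0 ≤ P ω)
    (F : Ω → A) (a : A) : 0 ≤ mass P F a := by
  unfold mass
  exact Finset.sum_nonneg fun ω _ => by split_ifs <;> simp [hP]

lemma mass_pos {Ω A : Type} [Fintype Ω] [DecidableEq A] (P : Ω → ℝ) (hP : ∀ ω, 0 ≤ P ω)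
    (F : Ω → A) (ω : Ω) (h : 0 < P ω) : 0 < mass P F (F ω) := by
  unfold mass
  refine Finset.sum_pos' (fun ω _ => by split_ifs <;> simp [hP]) ⟨ω, Finset.mem_univ _, by simpa⟩

lemma sum_mass_mul {Ω A : Type} [Fintype Ω] [Fintype A] [DecidableEq A] (P : Ω → ℝ)
    (F : Ω → A) (h : A → ℝ) : ∑ a, mass P F a * h a = ∑ ω, P ω * h (F ω) := by
  unfold mass
  simp_rw [Finset.sum_mul]
  rw [Finset.sum_comm]
  simp [ite_mul]

lemma sum_mass_pair {Ω A C : Type} [Fintype Ω] [DecidableEq A] [Fintype C] [DecidableEq C]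
    (P : Ω → ℝ) (F : Ω → A) (Z : Ω → C) (a : A) :
    ∑ c, mass P (fun ω => (F ω, Z ω)) (a, c) = mass P F a := by
  unfold mass
  rw [Finset.sum_comm]
  refine Finset.sum_congr rfl fun ω _ => ?_
  simp only [Prod.mk.injEq, ite_and]
  split_ifs <;> simp

lemma gibbs {Ω A B C : Type} [Fintype Ω] [Fintype A] [DecidableEq A] [DecidableEq B]
    [Fintype C] [DecidableEq C] (P : Ω → ℝ) (hP : ∀ ω, 0 ≤ P ω)
    (F : Ω → A) (g : A → B) (Z : Ω → C) :
    ∑ ω, P ω * (Real.log (mass P (fun ω => (g (F ω), Z ω)) (g (F ω), Z ω) /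
        mass P (fun ω => g (F ω)) (g (F ω))) -
      Real.log (mass P (fun ω => (F ω, Z ω)) (F ω, Z ω) / mass P F (F ω))) ≤ 0 := by
  set mGZ := mass P (fun ω => (g (F ω), Z ω)) with hGZ
  set mG := mass P (fun ω => g (F ω)) with hG
  set mFZ := mass P (fun ω => (F ω, Z ω)) with hFZ
  set mF := mass P F with hF
  let h : A × C → ℝ := fun ac => (mGZ (g ac.1, ac.2) / mG (g ac.1)) / (mFZ ac / mF ac.1)
  have h1 : ∀ ω, P ω * (Real.log (mGZ (g (F ω), Z ω) / mG (g (F ω))) -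
      Real.log (mFZ (F ω, Z ω) / mF (F ω))) ≤ P ω * h (F ω, Z ω) - P ω := by
    intro ω
    rcases (hP ω).eq_or_lt with h0 | h0
    · simp [← h0]
    have a1 : 0 < mGZ (g (F ω), Z ω) := mass_pos P hP (fun ω => (g (F ω), Z ω)) ω h0
    have a2 : 0 < mG (g (F ω)) := mass_pos P hP (fun ω => g (F ω)) ω h0
    have a3 : 0 < mFZ (F ω, Z ω) := mass_pos P hP (fun ω => (F ω, Z ω)) ω h0
    have a4 : 0 < mF (F ω) := mass_pos P hP F ω h0
    have b1 := div_pos a1 a2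
    have b2 := div_pos a3 a4
    rw [← Real.log_div b1.ne' b2.ne']
    have := Real.log_le_sub_one_of_pos (div_pos b1 b2)
    have := mul_le_mul_of_nonneg_left this h0.le
    simp only [h]
    linarith
  refine (Finset.sum_le_sum fun ω _ => h1 ω).trans ?_
  rw [Finset.sum_sub_distrib, ← sum_mass_mul P (fun ω => (F ω, Z ω)) h, Fintype.sum_prod_type]
  have h2 : ∀ a c, mass P (fun ω => (F ω, Z ω)) (a, c) * h (a, c) ≤
      mGZ (g a, c) * (mF a / mG (g a)) := by
    intro a c
    have c1 : 0 ≤ mGZ (g a, c) := mass_nonneg P hP _ _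
    have c2 : 0 ≤ mG (g a) := mass_nonneg P hP _ _
    have c3 : 0 ≤ mF a := mass_nonneg P hP _ _
    rw [← hFZ]
    rcases eq_or_ne (mFZ (a, c)) 0 with h0 | h0
    · rw [h0, zero_mul]; positivity
    · apply le_of_eq
      simp only [h]
      rw [div_div_eq_mul_div]
      field_simp
  have h3 : ∀ a, ∑ c, mass P (fun ω => (F ω, Z ω)) (a, c) * h (a, c) ≤ mF a := by
    intro a
    refine (Finset.sum_le_sum fun c _ => h2 a c).trans ?_
    rw [← Finset.sum_mul, hGZ, sum_mass_pair P (fun ω => g (F ω)) Z, ← hG]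
    have c3 : 0 ≤ mF a := mass_nonneg P hP _ _
    rcases eq_or_ne (mG (g a)) 0 with h0 | h0
    · simp [h0, c3]
    · apply le_of_eq; field_simp
  have h4 := Finset.sum_le_sum fun a (_ : a ∈ Finset.univ) => h3 a
  have h5 := sum_mass_mul P F (fun _ => 1)
  simp only [mul_one] at h5
  rw [hF, h5] at h4
  linarith

variable {X Y : Type} [Fintype X] [DecidableEq X] [Fintype Y] [DecidableEq Y]

def num {m : ℕ} (p : (Fin m → X) → ℝ) (r : (Fin m → X) → (Fin m → Y) → ℝ)
    (x : Fin m → X) (y : Fin m → Y) (i : Fin m) : ℝ :=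
  ∑ x' : Fin m → X, ∑ y' : Fin m → Y,
        if (∀ j, j < i → x' j = x j) ∧ (∀ j, j ≤ i → y' j = y j)
        then p x' * r x' y' else 0

def den {m : ℕ} (p : (Fin m → X) → ℝ) (r : (Fin m → X) → (Fin m → Y) → ℝ)
    (x : Fin m → X) (y : Fin m → Y) (i : Fin m) : ℝ :=
  ∑ x' : Fin m → X, ∑ y' : Fin m → Y,
        if (∀ j, j < i → x' j = x j) ∧ (∀ j, j < i → y' j = y j)
        then p x' * r x' y' else 0

lemma sum_pos_aux {m : ℕ} (p : (Fin m → X) → ℝ) (r : (Fin m → X) → (Fin m → Y) → ℝ)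
    (hp : ∀ x, 0 ≤ p x) (hr : ∀ x y, 0 ≤ r x y) (x : Fin m → X) (y : Fin m → Y)
    (h : 0 < p x * r x y) (c : (Fin m → X) → (Fin m → Y) → Prop) [∀ a b, Decidable (c a b)]
    (hc : c x y) : 0 < ∑ x', ∑ y', if c x' y' then p x' * r x' y' else 0 := by
  have h0 : ∀ x' y', 0 ≤ if c x' y' then p x' * r x' y' else 0 := by
    intro x' y'
    have := mul_nonneg (hp x') (hr x' y')
    split_ifs <;> simp [this]
  refine Finset.sum_pos' (fun x' _ => Finset.sum_nonneg fun y' _ => h0 x' y')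
    ⟨x, Finset.mem_univ _, Finset.sum_pos' (fun y' _ => h0 x y') ⟨y, Finset.mem_univ _, ?_⟩⟩
  simpa [hc] using h

lemma directedInfo_eq {m : ℕ} (p : (Fin m → X) → ℝ) (r : (Fin m → X) → (Fin m → Y) → ℝ)
    (hp : ∀ x, 0 ≤ p x) (hr : ∀ x y, 0 ≤ r x y) :
    directedInfo p r = ∑ x, ∑ y, p x * r x y * ((Real.log (r x y) -
      ∑ i, Real.log (num p r x y i / den p r x y i)) / Real.log 2) := by
  unfold directedInfo
  refine Finset.sum_congr rfl fun x _ => Finset.sum_congr rfl fun y _ => ?_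
  rcases (mul_nonneg (hp x) (hr x y)).eq_or_lt with h0 | h0
  · rw [← h0]; simp
  have hn : ∀ i, num p r x y i / den p r x y i ≠ 0 := fun i =>
    (div_pos (sum_pos_aux p r hp hr x y h0 _ ⟨fun _ _ => rfl, fun _ _ => rfl⟩)
      (sum_pos_aux p r hp hr x y h0 _ ⟨fun _ _ => rfl, fun _ _ => rfl⟩)).ne'
  have hr0 : r x y ≠ 0 := right_ne_zero_of_mul h0.ne'
  have hcc : causalCond p r x y = ∏ i, (num p r x y i / den p r x y i) := rfl
  rw [hcc, Real.logb, Real.log_div hr0 (Finset.prod_ne_zero_iff.2 fun i _ => hn i),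
    Real.log_prod (fun i _ => hn i)]

lemma sum_append {Y : Type} [Fintype Y] (n l : ℕ) (f : (Fin (n + l) → Y) → ℝ) :
    ∑ y, f y = ∑ u : Fin n → Y, ∑ v : Fin l → Y, f (Fin.append u v) := by
  rw [← (Fin.appendEquiv n l).sum_comp, Fintype.sum_prod_type]
  rfl

lemma push_n (n l : ℕ)
    (p : (Fin (n + l) → X) → ℝ)
    (rn : (Fin n → X) → (Fin n → Y) → ℝ)
    (rl : (Fin l → X) → (Fin l → Y) → ℝ) (hrl : IsCondPMF rl)
    (pn : (Fin n → X) → ℝ)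
    (hpn : ∀ u, pn u = ∑ x : Fin (n + l) → X,
      if (fun i : Fin n => x (Fin.castAdd l i)) = u then p x else 0)
    (rc : (Fin (n + l) → X) → (Fin (n + l) → Y) → ℝ)
    (hrc : ∀ x y, rc x y =
      rn (fun i => x (Fin.castAdd l i)) (fun i => y (Fin.castAdd l i)) *
      rl (fun i => x (Fin.natAdd n i)) (fun i => y (Fin.natAdd n i)))
    (φ : (Fin n → X) → (Fin n → Y) → ℝ) :
    ∑ u, ∑ v, pn u * rn u v * φ u v = ∑ x, ∑ y, p x * rc x y *
      φ (fun i => x (Fin.castAdd l i)) (fun i => y (Fin.castAdd l i)) := by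
  have h := sum_mass_mul p (fun x : Fin (n + l) → X => fun i : Fin n => x (Fin.castAdd l i))
    (fun u => ∑ v, rn u v * φ u v)
  have : ∀ u, mass p (fun x : Fin (n + l) → X => fun i : Fin n => x (Fin.castAdd l i)) u = pn u :=
    fun u => (hpn u).symm
  simp_rw [this] at h
  simp_rw [mul_assoc, ← Finset.mul_sum]
  rw [h]
  refine Finset.sum_congr rfl fun x _ => ?_
  congr 1
  rw [sum_append]
  refine Finset.sum_congr rfl fun u _ => ?_
  simp only [hrc, Fin.append_left, Fin.append_right]
  rw [← Finset.sum_mul, ← Finset.mul_sum, hrl.2, mul_one]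

lemma push_l (n l : ℕ)
    (p : (Fin (n + l) → X) → ℝ)
    (rn : (Fin n → X) → (Fin n → Y) → ℝ) (hrn : IsCondPMF rn)
    (rl : (Fin l → X) → (Fin l → Y) → ℝ)
    (pl : (Fin l → X) → ℝ)
    (hpl : ∀ u, pl u = ∑ x : Fin (n + l) → X,
      if (fun i : Fin l => x (Fin.natAdd n i)) = u then p x else 0)
    (rc : (Fin (n + l) → X) → (Fin (n + l) → Y) → ℝ)
    (hrc : ∀ x y, rc x y =
      rn (fun i => x (Fin.castAdd l i)) (fun i => y (Fin.castAdd l i)) *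
      rl (fun i => x (Fin.natAdd n i)) (fun i => y (Fin.natAdd n i)))
    (φ : (Fin l → X) → (Fin l → Y) → ℝ) :
    ∑ u, ∑ v, pl u * rl u v * φ u v = ∑ x, ∑ y, p x * rc x y *
      φ (fun i => x (Fin.natAdd n i)) (fun i => y (Fin.natAdd n i)) := by
  have h := sum_mass_mul p (fun x : Fin (n + l) → X => fun i : Fin l => x (Fin.natAdd n i))
    (fun u => ∑ v, rl u v * φ u v)
  have : ∀ u, mass p (fun x : Fin (n + l) → X => fun i : Fin l => x (Fin.natAdd n i)) u = pl u :=
    fun u => (hpl u).symm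
  simp_rw [this] at h
  simp_rw [mul_assoc, ← Finset.mul_sum]
  rw [h]
  refine Finset.sum_congr rfl fun x _ => ?_
  congr 1
  rw [sum_append, Finset.sum_comm]
  refine Finset.sum_congr rfl fun u _ => ?_
  simp only [hrc, Fin.append_left, Fin.append_right]
  rw [← Finset.sum_mul, ← Finset.sum_mul, hrn.2, one_mul]

lemma forall_lt_castAdd {n l : ℕ} (i : Fin n) (Q : Fin (n + l) → Prop) :
    (∀ j, j < Fin.castAdd l i → Q j) ↔ ∀ j, j < i → Q (Fin.castAdd l j) := by
  constructor
  · intro h j hj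
    exact h (Fin.castAdd l j) (Fin.lt_def.2 (Fin.lt_def.1 hj))
  · intro h j hj
    have hj' : (j : ℕ) < i := by simpa [Fin.lt_def] using hj
    exact h ⟨j, hj'.trans i.2⟩ (by simpa [Fin.lt_def] using hj')

lemma forall_le_castAdd {n l : ℕ} (i : Fin n) (Q : Fin (n + l) → Prop) :
    (∀ j, j ≤ Fin.castAdd l i → Q j) ↔ ∀ j, j ≤ i → Q (Fin.castAdd l j) := by
  constructor
  · intro h j hj
    exact h (Fin.castAdd l j) (Fin.le_def.2 (Fin.le_def.1 hj))
  · intro h j hj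
    have hj' : (j : ℕ) ≤ i := by simpa [Fin.le_def] using hj
    exact h ⟨j, hj'.trans_lt i.2⟩ (by simpa [Fin.le_def] using hj')

lemma forall_le_iff {m : ℕ} (i : Fin m) (Q : Fin m → Prop) :
    (∀ j, j ≤ i → Q j) ↔ (∀ j, j < i → Q j) ∧ Q i := by
  constructor
  · exact fun h => ⟨fun j hj => h j hj.le, h i le_rfl⟩
  · rintro ⟨h, h'⟩ j hj
    rcases hj.eq_or_lt with rfl | hj
    · exact h'
    · exact h j hj

end FFRDaux

open FFRD in
/-- key step of Lemma 1 / Appendix A: if two blocks are encoded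
independently, the directed information of the concatenated block is at most the sum of the
directed informations of the two blocks computed from the corresponding marginals. -/
theorem directedInfo_concat_le
    {X Y : Type} [Fintype X] [DecidableEq X] [Fintype Y] [DecidableEq Y]
    (n l : ℕ)
    (p : (Fin (n + l) → X) → ℝ) (hp : IsPMF p)
    (rn : (Fin n → X) → (Fin n → Y) → ℝ) (hrn : IsCondPMF rn)
    (rl : (Fin l → X) → (Fin l → Y) → ℝ) (hrl : IsCondPMF rl)
    (pn : (Fin n → X) → ℝ)
    (hpn : ∀ u, pn u = ∑ x : Fin (n + l) → X,
      if (fun i : Fin n => x (Fin.castAdd l i)) = u then p x else 0)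
    (pl : (Fin l → X) → ℝ)
    (hpl : ∀ u, pl u = ∑ x : Fin (n + l) → X,
      if (fun i : Fin l => x (Fin.natAdd n i)) = u then p x else 0)
    (rc : (Fin (n + l) → X) → (Fin (n + l) → Y) → ℝ)
    (hrc : ∀ x y, rc x y =
      rn (fun i => x (Fin.castAdd l i)) (fun i => y (Fin.castAdd l i)) *
      rl (fun i => x (Fin.natAdd n i)) (fun i => y (Fin.natAdd n i))) :
    directedInfo p rc ≤ directedInfo pn rn + directedInfo pl rl := by
  classical
  have hpn0 : ∀ u, 0 ≤ pn u := fun u => by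
    rw [hpn]; exact Finset.sum_nonneg fun x _ => by split_ifs <;> simp [hp.1]
  have hpl0 : ∀ u, 0 ≤ pl u := fun u => by
    rw [hpl]; exact Finset.sum_nonneg fun x _ => by split_ifs <;> simp [hp.1]
  have hrc0 : ∀ x y, 0 ≤ rc x y := fun x y => by
    rw [hrc]; exact mul_nonneg (hrn.1 _ _) (hrl.1 _ _)
  have pushn := FFRDaux.push_n n l p rn rl hrl pn hpn rc hrc
  have pushl := FFRDaux.push_l n l p rn hrn rl pl hpl rc hrc
  rw [FFRDaux.directedInfo_eq p rc hp.1 hrc0, FFRDaux.directedInfo_eq pn rn hpn0 hrn.1,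
    FFRDaux.directedInfo_eq pl rl hpl0 hrl.1, pushn (fun u v => (Real.log (rn u v) -
      ∑ i, Real.log (FFRDaux.num pn rn u v i / FFRDaux.den pn rn u v i)) / Real.log 2),
    pushl (fun u v => (Real.log (rl u v) -
      ∑ i, Real.log (FFRDaux.num pl rl u v i / FFRDaux.den pl rl u v i)) / Real.log 2)]
  have numn : ∀ x y (i : Fin n), FFRDaux.num p rc x y (Fin.castAdd l i) =
      FFRDaux.num pn rn (fun i => x (Fin.castAdd l i)) (fun i => y (Fin.castAdd l i)) i := by
    intro x y i
    have := pushn (fun u v => if (∀ j, j < i → u j = x (Fin.castAdd l j)) ∧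
      (∀ j, j ≤ i → v j = y (Fin.castAdd l j)) then 1 else 0)
    simp only [mul_ite, mul_one, mul_zero] at this
    unfold FFRDaux.num
    rw [this]
    simp only [FFRDaux.forall_lt_castAdd, FFRDaux.forall_le_castAdd]
  have denn : ∀ x y (i : Fin n), FFRDaux.den p rc x y (Fin.castAdd l i) =
      FFRDaux.den pn rn (fun i => x (Fin.castAdd l i)) (fun i => y (Fin.castAdd l i)) i := by
    intro x y i
    have := pushn (fun u v => if (∀ j, j < i → u j = x (Fin.castAdd l j)) ∧
      (∀ j, j < i → v j = y (Fin.castAdd l j)) then 1 else 0)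
    simp only [mul_ite, mul_one, mul_zero] at this
    unfold FFRDaux.den
    rw [this]
    simp only [FFRDaux.forall_lt_castAdd]
  have key : ∀ i : Fin l, ∑ x, ∑ y, p x * rc x y *
      (Real.log (FFRDaux.num pl rl (fun i => x (Fin.natAdd n i)) (fun i => y (Fin.natAdd n i)) i /
        FFRDaux.den pl rl (fun i => x (Fin.natAdd n i)) (fun i => y (Fin.natAdd n i)) i) -
      Real.log (FFRDaux.num p rc x y (Fin.natAdd n i) /
        FFRDaux.den p rc x y (Fin.natAdd n i))) ≤ 0 := by
    intro i
    let k := Fin.natAdd n i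
    let P : (Fin (n + l) → X) × (Fin (n + l) → Y) → ℝ := fun ω => p ω.1 * rc ω.1 ω.2
    let F : (Fin (n + l) → X) × (Fin (n + l) → Y) →
        ({j // j < k} → X) × ({j // j < k} → Y) :=
      fun ω => (fun j => ω.1 j, fun j => ω.2 j)
    let e : {j // j < i} → {j // j < k} := fun j =>
      ⟨Fin.natAdd n j.1, Fin.lt_def.2 (Nat.add_lt_add_left (Fin.lt_def.1 j.2) n)⟩
    let g : ({j // j < k} → X) × ({j // j < k} → Y) → ({j // j < i} → X) × ({j // j < i} → Y) :=
      fun ab => (fun j => ab.1 (e j), fun j => ab.2 (e j))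
    let Z : (Fin (n + l) → X) × (Fin (n + l) → Y) → Y := fun ω => ω.2 k
    have hF : ∀ ω ω', F ω = F ω' ↔ (∀ j, j < k → ω.1 j = ω'.1 j) ∧ (∀ j, j < k → ω.2 j = ω'.2 j) := by
      intro ω ω'
      simp [F, funext_iff]
    have hG : ∀ ω ω', g (F ω) = g (F ω') ↔
        (∀ j, j < i → ω.1 (Fin.natAdd n j) = ω'.1 (Fin.natAdd n j)) ∧
        (∀ j, j < i → ω.2 (Fin.natAdd n j) = ω'.2 (Fin.natAdd n j)) := by
      intro ω ω'
      simp [F, g, e, funext_iff]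
    have G := FFRDaux.gibbs P (fun ω => mul_nonneg (hp.1 _) (hrc0 _ _)) F g Z
    rw [Fintype.sum_prod_type] at G
    refine le_of_eq_of_le ?_ G
    refine Finset.sum_congr rfl fun x _ => Finset.sum_congr rfl fun y _ => ?_
    have e1 : FFRDaux.num pl rl (fun i => x (Fin.natAdd n i)) (fun i => y (Fin.natAdd n i)) i =
        FFRDaux.mass P (fun ω => (g (F ω), Z ω)) (g (F (x, y)), Z (x, y)) := by
      have := pushl (fun u v => if (∀ j, j < i → u j = x (Fin.natAdd n j)) ∧
        (∀ j, j ≤ i → v j = y (Fin.natAdd n j)) then 1 else 0)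
      simp only [mul_ite, mul_one, mul_zero] at this
      unfold FFRDaux.num FFRDaux.mass
      rw [this, Fintype.sum_prod_type]
      simp only [Prod.mk.injEq, hG, FFRDaux.forall_le_iff, and_assoc, Z, P, k]
    have e2 : FFRDaux.den pl rl (fun i => x (Fin.natAdd n i)) (fun i => y (Fin.natAdd n i)) i =
        FFRDaux.mass P (fun ω => g (F ω)) (g (F (x, y))) := by
      have := pushl (fun u v => if (∀ j, j < i → u j = x (Fin.natAdd n j)) ∧
        (∀ j, j < i → v j = y (Fin.natAdd n j)) then 1 else 0)
      simp only [mul_ite, mul_one, mul_zero] at this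
      unfold FFRDaux.den FFRDaux.mass
      rw [this, Fintype.sum_prod_type]
      simp only [hG, P]
    have e3 : FFRDaux.num p rc x y (Fin.natAdd n i) =
        FFRDaux.mass P (fun ω => (F ω, Z ω)) (F (x, y), Z (x, y)) := by
      unfold FFRDaux.num FFRDaux.mass
      rw [Fintype.sum_prod_type]
      simp only [Prod.mk.injEq, hF, FFRDaux.forall_le_iff, and_assoc, Z, P, k]
    have e4 : FFRDaux.den p rc x y (Fin.natAdd n i) = FFRDaux.mass P F (F (x, y)) := by
      unfold FFRDaux.den FFRDaux.mass
      rw [Fintype.sum_prod_type]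
      simp only [hF, P, k]
    rw [e1, e2, e3, e4]
  have key2 := Finset.sum_nonpos fun i (_ : i ∈ Finset.univ) => key i
  rw [Finset.sum_comm] at key2
  simp_rw [Finset.sum_comm (s := (Finset.univ : Finset (Fin l)))] at key2
  have hl2 : 0 < Real.log 2 := Real.log_pos (by norm_num)
  rw [← sub_nonpos, ← Finset.sum_add_distrib, ← Finset.sum_sub_distrib]
  simp_rw [← Finset.sum_add_distrib, ← Finset.sum_sub_distrib]
  have key3 := div_nonpos_of_nonpos_of_nonneg key2 hl2.le
  refine le_of_eq_of_le ?_ key3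
  rw [Finset.sum_div]
  refine Finset.sum_congr rfl fun x _ => ?_
  rw [Finset.sum_div]
  refine Finset.sum_congr rfl fun y _ => ?_
  rw [← Finset.mul_sum, Finset.sum_sub_distrib, Fin.sum_univ_add]
  simp_rw [numn, denn]
  rcases eq_or_ne (rc x y) 0 with h0 | h0
  · simp [h0]
  have h1 := h0
  rw [hrc] at h1
  have hlog : Real.log (rc x y) = _ := (congrArg Real.log (hrc x y)).trans
    (Real.log_mul (left_ne_zero_of_mul h1) (right_ne_zero_of_mul h1))
  rw [hlog]
  ring
end
end

section
/- Let p be a pmf on 𝒳ⁿ with p(xⁿ) > 0 for all xⁿ, let d: 𝒳ⁿ×𝒳̂ⁿ→[0,∞) be a distortion function, and let D > 0 be such that some conditional pmf r satisfies Σ_{xⁿ,x̂ⁿ} p(xⁿ)r(x̂ⁿ|xⁿ)d(xⁿ,x̂ⁿ) < D. Then Rₙ(D) equals the maximum, over λ ≥ 0 and γ: 𝒳ⁿ→(0,∞) for which there exists a reverse causal conditioning pmf p′(xⁿ||x̂ⁿ) = ∏_{i=1}^n p′_i(x_i|x^{i−1},x̂^i) satisfying p(xⁿ)·γ(xⁿ)·2^{−λ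 d(xⁿ,x̂ⁿ)} ≤ p′(xⁿ||x̂ⁿ) for all xⁿ, x̂ⁿ, of the value (1/n)·( −λD + Σ_{xⁿ} p(xⁿ) log₂ γ(xⁿ) ). -/
open scoped BigOperators
open Filter

noncomputable section

namespace FFRD

/-- A reverse causal conditioning family: `f i x y` is the pmf `p′_i(· | x^{i−1}, x̂^i)` on `X`,
depending on `x` only through coordinates `j < i` and on `y` only through coordinates `j ≤ i`.
The associated reverse causal conditioning pmf is `p′(xⁿ‖x̂ⁿ) = ∏ i, f i x y (x i)`. -/
def IsRevCausalFamily {X Y : Type} [Fintype X] [Fintype Y] {n : ℕ}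
    (f : Fin n → (Fin n → X) → (Fin n → Y) → X → ℝ) : Prop :=
  (∀ i x y, (∀ a, 0 ≤ f i x y a) ∧ ∑ a, f i x y a = 1) ∧
  (∀ i x x' y y', (∀ j, j < i → x j = x' j) → (∀ j, j ≤ i → y j = y' j) →
    f i x y = f i x' y')

end FFRD

namespace FFRDP
open FFRD

variable {X Y : Type} [Fintype X] [DecidableEq X] [Fintype Y] [DecidableEq Y] {n : ℕ}

/-- marginal of the joint pmf on the first `k` source and first `l` reconstruction letters -/
def N (p : (Fin n → X) → ℝ) (r : (Fin n → X) → (Fin n → Y) → ℝ) (k l : ℕ)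
    (x : Fin n → X) (y : Fin n → Y) : ℝ :=
  ∑ x' : Fin n → X, ∑ y' : Fin n → Y,
    if (∀ j : Fin n, j.val < k → x' j = x j) ∧ (∀ j : Fin n, j.val < l → y' j = y j)
      then p x' * r x' y' else 0

lemma causal_eq (p : (Fin n → X) → ℝ) (r : (Fin n → X) → (Fin n → Y) → ℝ) (x : Fin n → X)
    (y : Fin n → Y) :
    causalCond p r x y = ∏ i : Fin n, N p r i (i + 1) x y / N p r i i x y := by
  unfold causalCond N
  simp only [Fin.lt_def, Fin.le_def, Nat.lt_succ_iff]

lemma N_nonneg {p : (Fin n → X) → ℝ} {r : (Fin n → X) → (Fin n → Y) → ℝ}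
    (hp : ∀ x, 0 ≤ p x) (hr : ∀ x y, 0 ≤ r x y) (k l : ℕ) (x : Fin n → X) (y : Fin n → Y) :
    0 ≤ N p r k l x y := by
  unfold N
  refine Finset.sum_nonneg fun x' _ => Finset.sum_nonneg fun y' _ => ?_
  split_ifs
  · exact mul_nonneg (hp _) (hr _ _)
  · exact le_rfl

lemma N_ge {p : (Fin n → X) → ℝ} {r : (Fin n → X) → (Fin n → Y) → ℝ}
    (hp : ∀ x, 0 ≤ p x) (hr : ∀ x y, 0 ≤ r x y) (k l : ℕ) (x : Fin n → X) (y : Fin n → Y) :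
    p x * r x y ≤ N p r k l x y := by
  unfold N
  have hnn : ∀ x' y', (0:ℝ) ≤ if (∀ j : Fin n, j.val < k → x' j = x j) ∧
      (∀ j : Fin n, j.val < l → y' j = y j) then p x' * r x' y' else 0 := by
    intro x' y'
    split_ifs
    · exact mul_nonneg (hp _) (hr _ _)
    · exact le_rfl
  refine le_trans ?_ (Finset.single_le_sum (fun x' _ => Finset.sum_nonneg fun y' _ => hnn x' y')
    (Finset.mem_univ x))
  refine le_trans ?_ (Finset.single_le_sum (fun y' _ => hnn x y') (Finset.mem_univ y))
  simp

lemma N_congr (p : (Fin n → X) → ℝ) (r : (Fin n → X) → (Fin n → Y) → ℝ) (k l : ℕ)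
    {x x' : Fin n → X} {y y' : Fin n → Y} (hx : ∀ j : Fin n, j.val < k → x j = x' j)
    (hy : ∀ j : Fin n, j.val < l → y j = y' j) : N p r k l x y = N p r k l x' y' := by
  unfold N
  refine Finset.sum_congr rfl fun a _ => Finset.sum_congr rfl fun b _ => ?_
  have : ((∀ j : Fin n, j.val < k → a j = x j) ∧ (∀ j : Fin n, j.val < l → b j = y j)) ↔
      ((∀ j : Fin n, j.val < k → a j = x' j) ∧ (∀ j : Fin n, j.val < l → b j = y' j)) := by
    constructor
    · rintro ⟨h1, h2⟩
      exact ⟨fun j hj => (h1 j hj).trans (hx j hj), fun j hj => (h2 j hj).trans (hy j hj)⟩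
    · rintro ⟨h1, h2⟩
      exact ⟨fun j hj => (h1 j hj).trans (hx j hj).symm, fun j hj => (h2 j hj).trans (hy j hj).symm⟩
  simp only [this]

lemma agree_update {Z : Type} [DecidableEq Z] (i : Fin n) (z z' : Fin n → Z) (b : Z) :
    (∀ j : Fin n, j.val < i.val + 1 → z' j = Function.update z i b j) ↔
      (∀ j : Fin n, j.val < i.val → z' j = z j) ∧ z' i = b := by
  constructor
  · intro h
    refine ⟨fun j hj => ?_, ?_⟩
    · have := h j (by omega)
      rwa [Function.update_of_ne (by rintro rfl; omega)] at this
    · simpa using h i (by omega)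
  · rintro ⟨h1, h2⟩ j hj
    by_cases hji : j = i
    · subst hji; simpa using h2
    · rw [Function.update_of_ne hji]
      exact h1 j (by have := Fin.val_ne_of_ne hji; omega)

lemma N_sum_y (p : (Fin n → X) → ℝ) (r : (Fin n → X) → (Fin n → Y) → ℝ) (i : Fin n) (k : ℕ)
    (x : Fin n → X) (y : Fin n → Y) :
    ∑ b, N p r k (i + 1) x (Function.update y i b) = N p r k i x y := by
  unfold N
  rw [Finset.sum_comm]
  refine Finset.sum_congr rfl fun x' _ => ?_
  rw [Finset.sum_comm]
  refine Finset.sum_congr rfl fun y' _ => ?_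
  simp only [agree_update, ← and_assoc]
  simp only [ite_and (_ ∧ _)]
  split_ifs <;> simp

lemma N_sum_x (p : (Fin n → X) → ℝ) (r : (Fin n → X) → (Fin n → Y) → ℝ) (i : Fin n) (l : ℕ)
    (x : Fin n → X) (y : Fin n → Y) :
    ∑ a, N p r (i + 1) l (Function.update x i a) y = N p r i l x y := by
  unfold N
  rw [Finset.sum_comm]
  refine Finset.sum_congr rfl fun x' _ => ?_
  rw [Finset.sum_comm]
  refine Finset.sum_congr rfl fun y' _ => ?_
  simp only [agree_update, and_assoc, and_comm (a := x' i = _)]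
  simp only [← and_assoc]
  simp only [ite_and (_ ∧ _)]
  split_ifs <;> simp

lemma N_zero {p : (Fin n → X) → ℝ} {r : (Fin n → X) → (Fin n → Y) → ℝ} (hp : ∑ x, p x = 1)
    (hr : ∀ x, ∑ y, r x y = 1) (x : Fin n → X) (y : Fin n → Y) : N p r 0 0 x y = 1 := by
  simp [N, ← Finset.mul_sum, hr, hp]

lemma N_last (p : (Fin n → X) → ℝ) (r : (Fin n → X) → (Fin n → Y) → ℝ)
    (x : Fin n → X) (y : Fin n → Y) : N p r n n x y = p x * r x y := by
  simp [N, ← funext_iff, ite_and]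

/-- reverse causal family from r -/
def revF (p : (Fin n → X) → ℝ) (r : (Fin n → X) → (Fin n → Y) → ℝ) :
    Fin n → (Fin n → X) → (Fin n → Y) → X → ℝ := fun i x y a =>
  N p r (i + 1) (i + 1) (Function.update x i a) y / N p r i (i + 1) x y

lemma revF_fam {p : (Fin n → X) → ℝ} {r : (Fin n → X) → (Fin n → Y) → ℝ}
    (hp : ∀ x, 0 < p x) (hr : ∀ x y, 0 < r x y) : IsRevCausalFamily (revF p r) := by
  have hp' := fun x => (hp x).le
  have hr' := fun x y => (hr x y).le
  have hN : ∀ k l x y, 0 < N p r k l x y := fun k l x y =>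
    (mul_pos (hp x) (hr x y)).trans_le (N_ge hp' hr' k l x y)
  refine ⟨fun i x y => ⟨fun a => (div_pos (hN _ _ _ _) (hN _ _ _ _)).le, ?_⟩, ?_⟩
  · unfold revF
    rw [← Finset.sum_div, N_sum_x, div_self (hN _ _ _ _).ne']
  · intro i x x' y y' hx hy
    funext a
    unfold revF
    congr 1
    · apply N_congr
      · intro j hj
        by_cases hji : j = i
        · subst hji; simp
        · rw [Function.update_of_ne hji, Function.update_of_ne hji]
          exact hx j (by have := Fin.val_ne_of_ne hji; rw [Fin.lt_def]; omega)
      · intro j hj; exact hy j (by rw [Fin.le_def]; omega)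
    · apply N_congr
      · intro j hj; exact hx j hj
      · intro j hj; exact hy j (by rw [Fin.le_def]; omega)

lemma causal_mul_rev {p : (Fin n → X) → ℝ} {r : (Fin n → X) → (Fin n → Y) → ℝ}
    (hp : ∀ x, 0 < p x) (hr : ∀ x y, 0 < r x y) (hp1 : ∑ x, p x = 1)
    (hr1 : ∀ x, ∑ y, r x y = 1) (x : Fin n → X) (y : Fin n → Y) :
    causalCond p r x y * ∏ i, revF p r i x y (x i) = p x * r x y := by
  have hp' := fun x => (hp x).le
  have hr' := fun x y => (hr x y).le
  have hN : ∀ k l x y, 0 < N p r k l x y := fun k l x y =>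
    (mul_pos (hp x) (hr x y)).trans_le (N_ge hp' hr' k l x y)
  rw [causal_eq, ← Finset.prod_mul_distrib]
  have : ∀ i : Fin n, N p r i (i + 1) x y / N p r i i x y * revF p r i x y (x i) =
      (fun k => N p r (k + 1) (k + 1) x y / N p r k k x y) i.val := by
    intro i
    simp only [revF, Function.update_eq_self]
    have := (hN i (i+1) x y).ne'
    have := (hN i i x y).ne'
    field_simp
  rw [Finset.prod_congr rfl fun i _ => this i, Fin.prod_univ_eq_prod_range
    (fun k => N p r (k + 1) (k + 1) x y / N p r k k x y) n,
    ← N_last, ← div_one (N p r n n x y), ← N_zero hp1 hr1 x y]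
  have h2 : ∀ m : ℕ, ∏ k ∈ Finset.range m, (N p r (k + 1) (k + 1) x y / N p r k k x y) =
      N p r m m x y / N p r 0 0 x y := by
    intro m
    induction m with
    | zero => simp [div_self (hN 0 0 x y).ne']
    | succ m ih =>
      rw [Finset.prod_range_succ, ih]
      have := (hN m m x y).ne'
      field_simp
  exact h2 n

lemma sum_prod_le {Z : Type} [Fintype Z] (n : ℕ) (g : Fin n → (Fin n → Z) → ℝ)
    (hg : ∀ i z, 0 ≤ g i z)
    (hdep : ∀ i z z', (∀ j, j ≤ i → z j = z' j) → g i z = g i z')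
    (hsum : ∀ i z, ∑ a, g i (Function.update z i a) ≤ 1) :
    ∑ z, ∏ i, g i z ≤ 1 := by
  induction n with
  | zero => simp
  | succ n ih =>
    rcases isEmpty_or_nonempty Z with hZ | ⟨⟨a0⟩⟩
    · simp
    rw [← (Fin.snocEquiv (fun _ => Z)).sum_comp, Fintype.sum_prod_type, Finset.sum_comm]
    have key : ∀ (z : Fin n → Z) (a : Z), ∏ i, g i (Fin.snoc z a : Fin (n+1) → Z) =
        (∏ i : Fin n, g i.castSucc (Fin.snoc z a0 : Fin (n+1) → Z)) *
          g (Fin.last n) (Function.update (Fin.snoc z a0 : Fin (n+1) → Z) (Fin.last n) a) := by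
      intro z a
      rw [Fin.prod_univ_castSucc, Fin.update_snoc_last]
      congr 1
      refine Finset.prod_congr rfl fun i _ => hdep _ _ _ fun j hj => ?_
      have hj' : j.val < n := lt_of_le_of_lt (Fin.le_def.1 hj) (by simp)
      obtain ⟨j', rfl⟩ : ∃ j' : Fin n, j = j'.castSucc := ⟨⟨j, hj'⟩, rfl⟩
      simp
    simp only [Fin.snocEquiv, Equiv.coe_fn_mk]
    calc _ = ∑ z : Fin n → Z, (∏ i : Fin n, g i.castSucc (Fin.snoc z a0 : Fin (n+1) → Z)) *
          ∑ a, g (Fin.last n) (Function.update (Fin.snoc z a0 : Fin (n+1) → Z) (Fin.last n) a) := by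
            refine Finset.sum_congr rfl fun z _ => ?_
            rw [Finset.mul_sum]
            exact Finset.sum_congr rfl fun a _ => key z a
      _ ≤ ∑ z : Fin n → Z, (∏ i : Fin n, g i.castSucc (Fin.snoc z a0 : Fin (n+1) → Z)) := by
            refine Finset.sum_le_sum fun z _ => ?_
            exact mul_le_of_le_one_right (Finset.prod_nonneg fun i _ => hg _ _) (hsum _ _)
      _ ≤ 1 := by
            apply ih (fun i z => g i.castSucc (Fin.snoc z a0 : Fin (n+1) → Z))
            · intro i z; exact hg _ _
            · intro i z z' h
              apply hdep
              intro j hj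
              have hj' : j.val < n := lt_of_le_of_lt (Fin.le_def.1 hj) (by simp)
              obtain ⟨j', rfl⟩ : ∃ j' : Fin n, j = j'.castSucc := ⟨⟨j, hj'⟩, rfl⟩
              simpa using h j' (by simpa using hj)
            · intro i z
              have := hsum i.castSucc (Fin.snoc z a0 : Fin (n+1) → Z)
              simpa [Fin.snoc_update] using this

lemma sum_causal_le {p : (Fin n → X) → ℝ} {r : (Fin n → X) → (Fin n → Y) → ℝ}
    (hp : ∀ x, 0 ≤ p x) (hr : ∀ x y, 0 ≤ r x y)
    {f : Fin n → (Fin n → X) → (Fin n → Y) → X → ℝ} (hf : IsRevCausalFamily f) :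
    ∑ x, ∑ y, causalCond p r x y * ∏ i, f i x y (x i) ≤ 1 := by
  have hN := N_nonneg hp hr
  have e := (Equiv.arrowProdEquivProdArrow (Fin n) (fun _ => X) (fun _ => Y)).sum_comp
    (fun z : (Fin n → X) × (Fin n → Y) => causalCond p r z.1 z.2 * ∏ i, f i z.1 z.2 (z.1 i))
  rw [← Fintype.sum_prod_type', ← e]
  simp only [Equiv.arrowProdEquivProdArrow, Equiv.coe_fn_mk, causal_eq, ← Finset.prod_mul_distrib]
  refine sum_prod_le n (fun i (z : Fin n → X × Y) =>
    N p r i (i + 1) (fun j => (z j).1) (fun j => (z j).2) /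
      N p r i i (fun j => (z j).1) (fun j => (z j).2) *
      f i (fun j => (z j).1) (fun j => (z j).2) (z i).1) ?_ ?_ ?_
  · intro i z
    exact mul_nonneg (div_nonneg (hN _ _ _ _) (hN _ _ _ _)) ((hf.1 _ _ _).1 _)
  · intro i z z' h
    have h1 : ∀ j : Fin n, j.val < i.val → (z j).1 = (z' j).1 := fun j hj => by
      rw [h j (Fin.le_def.2 hj.le)]
    have h2 : ∀ j : Fin n, j.val < i.val → (z j).2 = (z' j).2 := fun j hj => by
      rw [h j (Fin.le_def.2 hj.le)]
    have h3 : ∀ j : Fin n, j.val < i.val + 1 → (z j).2 = (z' j).2 := fun j hj => by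
      rw [h j (Fin.le_def.2 (by omega))]
    rw [N_congr p r i (i+1) h1 h3, N_congr p r i i h1 h2, h i le_rfl,
      hf.2 i _ (fun j => (z' j).1) _ (fun j => (z' j).2) h1
        (fun j hj => h3 j (by have := Fin.le_def.1 hj; omega))]
  · intro i z
    set x := fun j => (z j).1 with hx
    set y := fun j => (z j).2 with hy
    have hu1 : ∀ c : X × Y, (fun j => (Function.update z i c j).1) = Function.update x i c.1 := by
      intro c; funext j; by_cases h : j = i
      · subst h; simp
      · simp [h, hx]
    have hu2 : ∀ c : X × Y, (fun j => (Function.update z i c j).2) = Function.update y i c.2 := by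
      intro c; funext j; by_cases h : j = i
      · subst h; simp
      · simp [h, hy]
    have hux : ∀ c : X, ∀ j : Fin n, j.val < i.val → Function.update x i c j = x j := by
      intro c j hj; rw [Function.update_of_ne (by rintro rfl; omega)]
    have huy : ∀ c : Y, ∀ j : Fin n, j.val < i.val → Function.update y i c j = y j := by
      intro c j hj; rw [Function.update_of_ne (by rintro rfl; omega)]
    simp only [hu1, hu2, Function.update_self]
    rw [Fintype.sum_prod_type, Finset.sum_comm]
    calc _ = ∑ b : Y, ∑ a : X, N p r i (i+1) x (Function.update y i b) / N p r i i x y *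
              f i x (Function.update y i b) a := by
            refine Finset.sum_congr rfl fun b _ => Finset.sum_congr rfl fun a _ => ?_
            dsimp only
            rw [N_congr p r i (i+1) (hux a) (fun j _ => rfl), N_congr p r i i (hux a) (huy b),
              hf.2 i (Function.update x i a) x _ _ (hux a) (fun j _ => rfl)]
      _ = N p r i i x y / N p r i i x y := by
            simp only [← Finset.mul_sum, (hf.1 _ _ _).2, mul_one]
            rw [← Finset.sum_div, N_sum_y]
      _ ≤ 1 := div_self_le_one _

/-- the linear functional -/
def L (p : (Fin n → X) → ℝ) (r : (Fin n → X) → (Fin n → Y) → ℝ)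
    (f : Fin n → (Fin n → X) → (Fin n → Y) → X → ℝ) : ℝ :=
  ∑ x, ∑ y, p x * r x y * Real.logb 2 ((∏ i, f i x y (x i)) / p x)

lemma gibbs {p : (Fin n → X) → ℝ} {r : (Fin n → X) → (Fin n → Y) → ℝ}
    (hp : ∀ x, 0 < p x) (hp1 : ∑ x, p x = 1) (hr : IsCondPMF r)
    {f : Fin n → (Fin n → X) → (Fin n → Y) → X → ℝ} (hf : IsRevCausalFamily f)
    (hfp : ∀ x y, 0 < ∏ i, f i x y (x i)) : L p r f ≤ directedInfo p r := by
  have hp' := fun x => (hp x).le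
  have hl2 : 0 < Real.log 2 := Real.log_pos (by norm_num)
  have hq0 : ∀ x y, 0 ≤ causalCond p r x y := by
    intro x y; rw [causal_eq]
    exact Finset.prod_nonneg fun i _ => div_nonneg (N_nonneg hp' hr.1 _ _ _ _)
      (N_nonneg hp' hr.1 _ _ _ _)
  have key : ∀ x y, (p x * r x y - causalCond p r x y * ∏ i, f i x y (x i)) / Real.log 2 ≤
      p x * r x y * Real.logb 2 (r x y / causalCond p r x y) -
      p x * r x y * Real.logb 2 ((∏ i, f i x y (x i)) / p x) := by
    intro x y
    rcases (hr.1 x y).eq_or_lt with h0 | h0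
    · rw [← h0]
      simp only [mul_zero, zero_mul, zero_sub, sub_zero]
      apply div_nonpos_of_nonpos_of_nonneg _ hl2.le
      have := mul_nonneg (hq0 x y) (hfp x y).le
      linarith
    · have hpr := mul_pos (hp x) h0
      have hq : 0 < causalCond p r x y := by
        rw [causal_eq]
        exact Finset.prod_pos fun i _ => div_pos (hpr.trans_le (N_ge hp' hr.1 _ _ _ _))
          (hpr.trans_le (N_ge hp' hr.1 _ _ _ _))
      have hP := hfp x y
      generalize (∏ i, f i x y (x i)) = P at *
      generalize causalCond p r x y = q at *
      rw [← mul_sub, ← Real.logb_div (div_pos h0 hq).ne' (div_pos hP (hp x)).ne', Real.logb,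
        ← mul_div_assoc]
      apply div_le_div_of_nonneg_right _ hl2.le
      have h1 := Real.one_sub_inv_le_log_of_pos (div_pos (div_pos h0 hq) (div_pos hP (hp x)))
      have h2 := mul_le_mul_of_nonneg_left h1 hpr.le
      refine le_trans (le_of_eq ?_) h2
      have := (hp x).ne'
      field_simp
  have hs := Finset.sum_le_sum fun x (_ : x ∈ Finset.univ) =>
    Finset.sum_le_sum fun y (_ : y ∈ Finset.univ) => key x y
  simp only [Finset.sum_sub_distrib, ← Finset.sum_div] at hs
  have h1 := sum_causal_le hp' hr.1 hf
  have h2 : ∑ x, ∑ y, p x * r x y = 1 := by simp [← Finset.mul_sum, hr.2, hp1]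
  rw [h2] at hs
  have h3 := div_nonneg (sub_nonneg.2 h1) hl2.le
  unfold L directedInfo
  linarith

end FFRDP
namespace FFRDP
open FFRD

variable {X Y : Type} [Fintype X] [DecidableEq X] [Fintype Y] [DecidableEq Y] {n : ℕ}

/-- feasible set with lower bound -/
def K (p : (Fin n → X) → ℝ) (d : (Fin n → X) → (Fin n → Y) → ℝ) (D ε : ℝ) :
    Set ((Fin n → X) → (Fin n → Y) → ℝ) :=
  {r | (∀ x y, ε ≤ r x y) ∧ (∀ x, ∑ y, r x y = 1) ∧ ∑ x, ∑ y, p x * r x y * d x y ≤ D}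

lemma K_compact (p : (Fin n → X) → ℝ) (d : (Fin n → X) → (Fin n → Y) → ℝ) (D ε : ℝ)
    (hε : 0 ≤ ε) : IsCompact (K p d D ε) := by
  refine IsCompact.of_isClosed_subset
    (isCompact_Icc (a := (0 : (Fin n → X) → (Fin n → Y) → ℝ)) (b := 1)) ?_ ?_
  · unfold K
    refine IsClosed.and ?_ (IsClosed.and ?_ ?_)
    · simp only [Set.ofPred_forall]
      refine isClosed_iInter fun x => isClosed_iInter fun y => ?_
      exact isClosed_le (by fun_prop) (by fun_prop)
    · simp only [Set.ofPred_forall]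
      refine isClosed_iInter fun x => ?_
      exact isClosed_eq (by fun_prop) (by fun_prop)
    · exact isClosed_le (by fun_prop) (by fun_prop)
  · rintro r ⟨h1, h2, -⟩
    refine ⟨fun x y => hε.trans (h1 x y), fun x y => ?_⟩
    have := Finset.single_le_sum (f := fun y => r x y) (fun y _ => hε.trans (h1 x y))
      (Finset.mem_univ y)
    simpa [h2 x] using this

lemma N_cont (p : (Fin n → X) → ℝ) (k l : ℕ) (x : Fin n → X) (y : Fin n → Y) :
    Continuous (fun r : (Fin n → X) → (Fin n → Y) → ℝ => N p r k l x y) := by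
  unfold N
  refine continuous_finsetSum _ fun x' _ => continuous_finsetSum _ fun y' _ => ?_
  split_ifs <;> fun_prop

lemma causal_pos {p : (Fin n → X) → ℝ} {r : (Fin n → X) → (Fin n → Y) → ℝ}
    (hp : ∀ x, 0 < p x) (hr : ∀ x y, 0 < r x y) (x : Fin n → X) (y : Fin n → Y) :
    0 < causalCond p r x y := by
  rw [causal_eq]
  exact Finset.prod_pos fun i _ => div_pos
    ((mul_pos (hp x) (hr x y)).trans_le (N_ge (fun x => (hp x).le) (fun x y => (hr x y).le) _ _ _ _))
    ((mul_pos (hp x) (hr x y)).trans_le (N_ge (fun x => (hp x).le) (fun x y => (hr x y).le) _ _ _ _))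

lemma G_cont {p : (Fin n → X) → ℝ} (hp : ∀ x, 0 < p x) (x : Fin n → X) (y : Fin n → Y)
    {r : (Fin n → X) → (Fin n → Y) → ℝ} (hr : ∀ x y, 0 < r x y) :
    ContinuousAt (fun r : (Fin n → X) → (Fin n → Y) → ℝ =>
      Real.logb 2 (r x y / causalCond p r x y)) r := by
  have hq := causal_pos hp hr x y
  have hc : ContinuousAt (fun r : (Fin n → X) → (Fin n → Y) → ℝ => causalCond p r x y) r := by
    simp only [causal_eq]
    refine tendsto_finsetProd _ fun i _ => ?_
    refine ContinuousAt.div (N_cont _ _ _ _ _).continuousAt (N_cont _ _ _ _ _).continuousAt ?_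
    exact ((mul_pos (hp x) (hr x y)).trans_le
      (N_ge (fun x => (hp x).le) (fun x y => (hr x y).le) _ _ _ _)).ne'
  unfold Real.logb
  refine ContinuousAt.div_const (ContinuousAt.log (ContinuousAt.div ?_ hc hq.ne') ?_) _
  · have : Continuous (fun r : (Fin n → X) → (Fin n → Y) → ℝ => r x y) := by fun_prop
    exact this.continuousAt
  · exact (div_pos (hr x y) hq).ne'

lemma rev_ratio {p : (Fin n → X) → ℝ} {r : (Fin n → X) → (Fin n → Y) → ℝ}
    (hp : ∀ x, 0 < p x) (hr : ∀ x y, 0 < r x y) (hp1 : ∑ x, p x = 1)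
    (hr1 : ∀ x, ∑ y, r x y = 1) (x : Fin n → X) (y : Fin n → Y) :
    (∏ i, revF p r i x y (x i)) / p x = r x y / causalCond p r x y := by
  have h := causal_mul_rev hp hr hp1 hr1 x y
  have hq := causal_pos hp hr x y
  rw [div_eq_div_iff (hp x).ne' hq.ne']
  linarith

lemma rev_pos {p : (Fin n → X) → ℝ} {r : (Fin n → X) → (Fin n → Y) → ℝ}
    (hp : ∀ x, 0 < p x) (hr : ∀ x y, 0 < r x y) (x : Fin n → X) (y : Fin n → Y) :
    0 < ∏ i, revF p r i x y (x i) := by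
  have hN : ∀ k l x y, 0 < N p r k l x y := fun k l x y =>
    (mul_pos (hp x) (hr x y)).trans_le
      (N_ge (fun x => (hp x).le) (fun x y => (hr x y).le) k l x y)
  exact Finset.prod_pos fun i _ => div_pos (hN _ _ _ _) (hN _ _ _ _)

lemma L_comb (p : (Fin n → X) → ℝ) (r r' : (Fin n → X) → (Fin n → Y) → ℝ)
    (f : Fin n → (Fin n → X) → (Fin n → Y) → X → ℝ) (s t : ℝ) :
    L p (s • r + t • r') f = s * L p r f + t * L p r' f := by
  unfold L
  simp only [Finset.mul_sum, ← Finset.sum_add_distrib, Pi.add_apply, Pi.smul_apply, smul_eq_mul]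
  refine Finset.sum_congr rfl fun x _ => Finset.sum_congr rfl fun y _ => ?_
  ring

lemma dist_comb (p : (Fin n → X) → ℝ) (d r r' : (Fin n → X) → (Fin n → Y) → ℝ) (s t : ℝ) :
    ∑ x, ∑ y, p x * (s • r + t • r') x y * d x y =
      s * ∑ x, ∑ y, p x * r x y * d x y + t * ∑ x, ∑ y, p x * r' x y * d x y := by
  simp only [Finset.mul_sum, ← Finset.sum_add_distrib, Pi.add_apply, Pi.smul_apply, smul_eq_mul]
  refine Finset.sum_congr rfl fun x _ => Finset.sum_congr rfl fun y _ => ?_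
  ring

lemma sum_comb {r r' : (Fin n → X) → (Fin n → Y) → ℝ} {s t : ℝ} (hst : s + t = 1)
    (hr : ∀ x, ∑ y, r x y = 1) (hr' : ∀ x, ∑ y, r' x y = 1) (x : Fin n → X) :
    ∑ y, (s • r + t • r') x y = 1 := by
  simp only [Pi.add_apply, Pi.smul_apply, smul_eq_mul, Finset.sum_add_distrib, ← Finset.mul_sum,
    hr, hr', mul_one, hst]

lemma K_convex (p : (Fin n → X) → ℝ) (d : (Fin n → X) → (Fin n → Y) → ℝ) (D ε : ℝ) :
    Convex ℝ (K p d D ε) := by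
  rintro r ⟨h1, h2, h3⟩ r' ⟨h1', h2', h3'⟩ s t hs ht hst
  refine ⟨fun x y => ?_, sum_comb hst h2 h2', ?_⟩
  · simp only [Pi.add_apply, Pi.smul_apply, smul_eq_mul]
    calc ε = s * ε + t * ε := by rw [← add_mul, hst, one_mul]
      _ ≤ _ := add_le_add (mul_le_mul_of_nonneg_left (h1 x y) hs)
        (mul_le_mul_of_nonneg_left (h1' x y) ht)
  · rw [dist_comb]
    have e : s * D + t * D = D := by rw [← add_mul, hst, one_mul]
    have := add_le_add (mul_le_mul_of_nonneg_left h3 hs) (mul_le_mul_of_nonneg_left h3' ht)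
    linarith

lemma info_eq {p : (Fin n → X) → ℝ} {r : (Fin n → X) → (Fin n → Y) → ℝ}
    (hp : ∀ x, 0 < p x) (hr : ∀ x y, 0 < r x y) (hp1 : ∑ x, p x = 1)
    (hr1 : ∀ x, ∑ y, r x y = 1) : directedInfo p r = L p r (revF p r) := by
  unfold L directedInfo
  simp only [rev_ratio hp hr hp1 hr1]

lemma step {p : (Fin n → X) → ℝ} (hp : ∀ x, 0 < p x) (hp1 : ∑ x, p x = 1)
    (d : (Fin n → X) → (Fin n → Y) → ℝ) (D ε : ℝ) (hε : 0 < ε) (hne : (K p d D ε).Nonempty) :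
    ∃ r0 ∈ K p d D ε, ∀ r ∈ K p d D ε, directedInfo p r0 ≤ L p r (revF p r0) := by
  have hpos : ∀ r ∈ K p d D ε, ∀ x y, 0 < r x y := fun r hr x y => hε.trans_le (hr.1 x y)
  have hcont : ContinuousOn (fun r => directedInfo p r) (K p d D ε) := by
    intro r hr
    apply ContinuousAt.continuousWithinAt
    unfold directedInfo
    refine tendsto_finsetSum _ fun x _ => tendsto_finsetSum _ fun y _ => ?_
    refine Tendsto.mul ?_ (G_cont hp x y (hpos r hr))
    have : Continuous (fun r : (Fin n → X) → (Fin n → Y) → ℝ => p x * r x y) := by fun_prop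
    exact this.continuousAt
  obtain ⟨r0, hr0, hmin⟩ := (K_compact p d D ε hε.le).exists_isMinOn hne hcont
  refine ⟨r0, hr0, fun r hr => ?_⟩
  rw [info_eq hp (hpos _ hr0) hp1 hr0.2.1]
  let c : ℝ → ((Fin n → X) → (Fin n → Y) → ℝ) := fun t => (1 - t) • r0 + t • r
  have hcc : Continuous c := by fun_prop
  have hc0 : c 0 = r0 := by simp [c]
  have hK : ∀ t ∈ Set.Ioc (0:ℝ) 1, c t ∈ K p d D ε := fun t ht =>
    K_convex p d D ε hr0 hr (by linarith [ht.2]) ht.1.le (by ring)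
  have hle : ∀ t ∈ Set.Ioc (0:ℝ) 1, 0 ≤ L p r (revF p (c t)) - L p r0 (revF p (c t)) := by
    intro t ht
    have hk := hK t ht
    have h1 : directedInfo p r0 ≤ directedInfo p (c t) := hmin hk
    have h2 := gibbs hp hp1 (r := r0) ⟨fun x y => (hpos _ hr0 x y).le, hr0.2.1⟩
      (revF_fam hp (hpos _ hk)) (rev_pos hp (hpos _ hk))
    rw [info_eq hp (hpos _ hk) hp1 hk.2.1] at h1
    have h3 : L p (c t) (revF p (c t)) = (1 - t) * L p r0 (revF p (c t)) +
      t * L p r (revF p (c t)) := L_comb _ _ _ _ _ _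
    have h4 : 0 ≤ t * (L p r (revF p (c t)) - L p r0 (revF p (c t))) := by linarith
    exact nonneg_of_mul_nonneg_right h4 ht.1
  have hlim : ∀ r' : (Fin n → X) → (Fin n → Y) → ℝ,
      Tendsto (fun t => L p r' (revF p (c t))) (nhdsWithin 0 (Set.Ioi 0))
      (nhds (L p r' (revF p r0))) := by
    intro r'
    have h1 : Tendsto (fun t => ∑ x, ∑ y, p x * r' x y *
        Real.logb 2 (c t x y / causalCond p (c t) x y)) (nhdsWithin 0 (Set.Ioi 0))
        (nhds (∑ x, ∑ y, p x * r' x y * Real.logb 2 (r0 x y / causalCond p r0 x y))) := by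
      refine tendsto_finsetSum _ fun x _ => tendsto_finsetSum _ fun y _ => ?_
      refine Tendsto.const_mul _ ?_
      have hg := G_cont hp x y (hpos _ hr0)
      have hct : Tendsto c (nhdsWithin 0 (Set.Ioi 0)) (nhds r0) := by
        rw [← hc0]; exact hcc.continuousAt.tendsto.mono_left nhdsWithin_le_nhds
      exact hg.tendsto.comp hct
    have e0 : L p r' (revF p r0) = 
        ∑ x, ∑ y, p x * r' x y * Real.logb 2 (r0 x y / causalCond p r0 x y) := by
      unfold L; simp only [rev_ratio hp (hpos _ hr0) hp1 hr0.2.1]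
    rw [e0]
    refine h1.congr' ?_
    filter_upwards [Ioc_mem_nhdsGT (zero_lt_one (α := ℝ))] with t ht
    unfold L; simp only [rev_ratio hp (hpos _ (hK t ht)) hp1 (hK t ht).2.1]
  have := ge_of_tendsto ((hlim r).sub (hlim r0)) (b := 0) (by
    filter_upwards [Ioc_mem_nhdsGT (zero_lt_one (α := ℝ))] with t ht
    exact hle t ht)
  linarith

lemma lp {E : Type*} [AddCommGroup E] [Module ℝ E] (S : Set E) (hS : Convex ℝ S) (g h : E → ℝ)
    (hg : ∀ a b s t, s + t = 1 → g (s • a + t • b) = s * g a + t * g b)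
    (hh : ∀ a b s t, s + t = 1 → h (s • a + t • b) = s * h a + t * h b)
    (hgh : ∀ a ∈ S, h a ≤ 0 → 0 ≤ g a) (r0 : E) (hr0 : r0 ∈ S) (h0 : h r0 < 0) :
    ∃ lam : ℝ, 0 ≤ lam ∧ ∀ a ∈ S, 0 ≤ g a + lam * h a := by
  have cross : ∀ a ∈ S, ∀ b ∈ S, h a < 0 → 0 < h b → - g b / h b ≤ g a / (- h a) := by
    intro a ha b hb hna hpb
    have hd : 0 < h b - h a := by linarith
    have hst : h b / (h b - h a) + (- h a) / (h b - h a) = 1 := by field_simp; ring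
    have hm := hS ha hb (div_nonneg hpb.le hd.le) (div_nonneg (by linarith) hd.le) hst
    have h1 := hgh _ hm (by rw [hh _ _ _ _ hst]; apply le_of_eq; field_simp; ring)
    rw [hg _ _ _ _ hst] at h1
    rw [div_le_div_iff₀ hpb (by linarith)]
    have h2 : h b / (h b - h a) * g a + (- h a) / (h b - h a) * g b =
      (h b * g a + (- h a) * g b) / (h b - h a) := by field_simp
    rw [h2] at h1
    have h3 : 0 ≤ h b * g a + (- h a) * g b := by
      by_contra hc
      push Not at hc
      exact absurd (div_neg_of_neg_of_pos hc hd) (not_lt.2 h1)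
    linarith
  let T : Set ℝ := insert 0 ((fun b => - g b / h b) '' {b | b ∈ S ∧ 0 < h b})
  have hub : ∀ a ∈ S, h a < 0 → g a / (- h a) ∈ upperBounds T := by
    intro a ha hna v hv
    rcases hv with rfl | ⟨b, ⟨hb, hpb⟩, rfl⟩
    · exact div_nonneg (hgh a ha hna.le) (by linarith)
    · exact cross a ha b hb hna hpb
  have hT : BddAbove T := ⟨_, hub r0 hr0 h0⟩
  have hTn : T.Nonempty := ⟨0, Or.inl rfl⟩
  refine ⟨sSup T, le_csSup hT (Or.inl rfl), fun a ha => ?_⟩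
  rcases lt_trichotomy (h a) 0 with hn | hz | hpz
  · have := csSup_le hTn (hub a ha hn)
    rw [le_div_iff₀ (by linarith)] at this
    linarith
  · rw [hz]; simpa using hgh a ha hz.le
  · have := le_csSup hT (Or.inr ⟨a, ⟨ha, hpz⟩, rfl⟩)
    rw [div_le_iff₀ hpz] at this
    linarith

end FFRDP
namespace FFRDP
open FFRD

variable {X Y : Type} [Fintype X] [DecidableEq X] [Fintype Y] [DecidableEq Y] {n : ℕ}

lemma fam_le_one {f : Fin n → (Fin n → X) → (Fin n → Y) → X → ℝ} (hf : IsRevCausalFamily f)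
    (i : Fin n) (x : Fin n → X) (y : Fin n → Y) (a : X) : f i x y a ≤ 1 := by
  rw [← (hf.1 i x y).2]
  exact Finset.single_le_sum (f := fun a => f i x y a) (fun a _ => (hf.1 i x y).1 a)
    (Finset.mem_univ a)

lemma fam_compact :
    IsCompact {f : Fin n → (Fin n → X) → (Fin n → Y) → X → ℝ | IsRevCausalFamily f} := by
  refine IsCompact.of_isClosed_subset
    (isCompact_Icc (a := (0 : Fin n → (Fin n → X) → (Fin n → Y) → X → ℝ)) (b := 1)) ?_ ?_
  · unfold IsRevCausalFamily
    refine IsClosed.and ?_ ?_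
    · simp only [Set.ofPred_forall]
      refine isClosed_iInter fun i => isClosed_iInter fun x => isClosed_iInter fun y => ?_
      refine IsClosed.and ?_ ?_
      · simp only [Set.ofPred_forall]
        refine isClosed_iInter fun a => ?_
        exact isClosed_le (by fun_prop) (by fun_prop)
      · exact isClosed_eq (by fun_prop) (by fun_prop)
    · simp only [Set.ofPred_forall]
      refine isClosed_iInter fun i => isClosed_iInter fun x => isClosed_iInter fun x' =>
        isClosed_iInter fun y => isClosed_iInter fun y' => isClosed_iInter fun _ =>
        isClosed_iInter fun _ => ?_
      exact isClosed_eq (by fun_prop) (by fun_prop)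
  · intro f hf
    exact ⟨fun i x y a => (hf.1 i x y).1 a, fun i x y a => fam_le_one hf i x y a⟩

lemma claimA {p : (Fin n → X) → ℝ} (hp : ∀ x, 0 < p x) (hp1 : ∑ x, p x = 1)
    (d : (Fin n → X) → (Fin n → Y) → ℝ) (D R δ : ℝ) (hδ : 0 < δ)
    (rb : (Fin n → X) → (Fin n → Y) → ℝ) (hrb : rb ∈ K p d D δ)
    (hR : ∀ r ∈ K p d D 0, R ≤ directedInfo p r) :
    ∃ f : Fin n → (Fin n → X) → (Fin n → Y) → X → ℝ, IsRevCausalFamily f ∧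
      (∀ x y, 0 < ∏ i, f i x y (x i)) ∧ ∀ r ∈ K p d D 0, R ≤ L p r f := by
  have hmono : ∀ {a b : ℝ}, a ≤ b → K p d D b ⊆ K p d D a := fun {a b} hab r hr =>
    ⟨fun x y => hab.trans (hr.1 x y), hr.2⟩
  have hstep : ∀ ε, 0 < ε → ε ≤ δ → ∃ f : Fin n → (Fin n → X) → (Fin n → Y) → X → ℝ,
      IsRevCausalFamily f ∧ (∀ x y, 0 < ∏ i, f i x y (x i)) ∧
      ∀ r ∈ K p d D ε, R ≤ L p r f := by
    intro ε hε hεδ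
    obtain ⟨r0, hr0, h⟩ := step hp hp1 d D ε hε ⟨rb, hmono hεδ hrb⟩
    have hpos : ∀ x y, 0 < r0 x y := fun x y => hε.trans_le (hr0.1 x y)
    exact ⟨revF p r0, revF_fam hp hpos, rev_pos hp hpos, fun r hr =>
      (hR r0 (hmono hε.le hr0)).trans (h r hr)⟩
  have hε : ∀ k : ℕ, 0 < δ / ((k : ℝ) + 1) := fun k => by positivity
  have hεδ : ∀ k : ℕ, δ / ((k : ℝ) + 1) ≤ δ := fun k => div_le_self hδ.le (by linarith [k.cast_nonneg (α := ℝ)])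
  choose F hF1 hF2 hF3 using fun k : ℕ => hstep _ (hε k) (hεδ k)
  obtain ⟨f, hf, φ, hφ, hlim⟩ := fam_compact.tendsto_subseq (x := F) hF1
  have hple : ∀ x, p x ≤ 1 := fun x => by
    rw [← hp1]; exact Finset.single_le_sum (fun x _ => (hp x).le) (Finset.mem_univ x)
  have hlow : ∀ x y, ∃ c : ℝ, 0 < c ∧ ∀ k, c ≤ ∏ i, F k i x y (x i) := by
    intro x y
    let T : (Fin n → X) → (Fin n → Y) → ℝ := fun x y => p x * rb x y * Real.logb 2 (1 / p x)
    have hrp : ∀ x y, 0 < p x * rb x y := fun x y => mul_pos (hp x) (hδ.trans_le (hrb.1 x y))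
    have hT : ∀ x y, 0 ≤ T x y := fun x y => mul_nonneg (hrp x y).le
      (Real.logb_nonneg (by norm_num) (by rw [le_div_iff₀ (hp x)]; linarith [hple x]))
    refine ⟨p x * 2 ^ ((R - ∑ x, ∑ y, T x y) / (p x * rb x y)), mul_pos (hp x) (by positivity),
      fun k => ?_⟩
    let U : (Fin n → X) → (Fin n → Y) → ℝ := fun x y =>
      p x * rb x y * Real.logb 2 ((∏ i, F k i x y (x i)) / p x)
    have hUT : ∀ x y, 0 ≤ T x y - U x y := by
      intro x y
      rw [sub_nonneg]
      refine mul_le_mul_of_nonneg_left ?_ (hrp x y).le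
      refine Real.logb_le_logb_of_le (by norm_num) (div_pos (hF2 k x y) (hp x)) ?_
      refine div_le_div_of_nonneg_right ?_ (hp x).le
      exact Finset.prod_le_one (fun i _ => ((hF1 k).1 _ _ _).1 _)
        (fun i _ => fam_le_one (hF1 k) _ _ _ _)
    have h1 : R ≤ ∑ x, ∑ y, U x y := hF3 k rb (hmono (hεδ k) hrb)
    have h2 : T x y - U x y ≤ ∑ x, ∑ y, (T x y - U x y) :=
      (Finset.single_le_sum (f := fun y => T x y - U x y) (fun y _ => hUT x y)
        (Finset.mem_univ y)).trans
      (Finset.single_le_sum (f := fun x => ∑ y, (T x y - U x y))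
        (fun x _ => Finset.sum_nonneg fun y _ => hUT x y) (Finset.mem_univ x))
    simp only [Finset.sum_sub_distrib] at h2
    have h3 : R - ∑ x, ∑ y, T x y ≤
        Real.logb 2 ((∏ i, F k i x y (x i)) / p x) * (p x * rb x y) := by
      have := hT x y
      have e : U x y = Real.logb 2 ((∏ i, F k i x y (x i)) / p x) * (p x * rb x y) := mul_comm _ _
      linarith
    rw [← div_le_iff₀ (hrp x y), Real.le_logb_iff_rpow_le (by norm_num)
      (div_pos (hF2 k x y) (hp x)), le_div_iff₀ (hp x)] at h3
    linarith
  have hPlim : ∀ x y, Tendsto (fun k => ∏ i, F (φ k) i x y (x i)) atTop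
      (nhds (∏ i, f i x y (x i))) := by
    intro x y
    have hc : Continuous (fun f : Fin n → (Fin n → X) → (Fin n → Y) → X → ℝ =>
      ∏ i, f i x y (x i)) := by fun_prop
    exact (hc.tendsto f).comp hlim
  have hpos : ∀ x y, 0 < ∏ i, f i x y (x i) := by
    intro x y
    obtain ⟨c, hc, h⟩ := hlow x y
    exact hc.trans_le (ge_of_tendsto' (hPlim x y) fun k => h (φ k))
  have hLlim : ∀ r : (Fin n → X) → (Fin n → Y) → ℝ,
      Tendsto (fun k => L p r (F (φ k))) atTop (nhds (L p r f)) := by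
    intro r
    unfold L
    refine tendsto_finsetSum _ fun x _ => tendsto_finsetSum _ fun y _ => ?_
    refine Tendsto.const_mul _ ?_
    unfold Real.logb
    refine Tendsto.div_const (Tendsto.log ((hPlim x y).div_const _) ?_) _
    exact (div_pos (hpos x y) (hp x)).ne'
  refine ⟨f, hf, hpos, fun r hr => ?_⟩
  have hs : ∀ s ∈ Set.Ioc (0:ℝ) 1, R ≤ (1 - s) * L p r f + s * L p rb f := by
    intro s hs
    rw [← L_comb]
    refine ge_of_tendsto (hLlim _) ?_
    have h0 : Tendsto (fun k : ℕ => δ / ((φ k : ℝ) + 1)) atTop (nhds 0) := by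
      have := (tendsto_const_div_atTop_nhds_zero_nat δ).comp (tendsto_add_atTop_nat 1)
      have h2 := this.comp hφ.tendsto_atTop
      refine h2.congr fun k => ?_
      simp
    filter_upwards [h0.eventually_lt_const (mul_pos hs.1 hδ)] with k hk
    apply hF3
    have hc := K_convex p d D 0 hr (hmono hδ.le hrb) (a := 1 - s) (b := s)
      (by linarith [hs.2]) hs.1.le (by ring)
    refine ⟨fun x y => hk.le.trans ?_, hc.2⟩
    simp only [Pi.add_apply, Pi.smul_apply, smul_eq_mul]
    have h1 := mul_nonneg (by linarith [hs.2] : 0 ≤ 1 - s) (hr.1 x y)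
    have h2 := mul_le_mul_of_nonneg_left (hrb.1 x y) hs.1.le
    linarith
  have hcs : Tendsto (fun s : ℝ => (1 - s) * L p r f + s * L p rb f) (nhdsWithin 0 (Set.Ioi 0))
      (nhds (L p r f)) := by
    have : Continuous (fun s : ℝ => (1 - s) * L p r f + s * L p rb f) := by fun_prop
    have h := this.tendsto 0
    simp only [sub_zero, one_mul, zero_mul, add_zero] at h
    exact h.mono_left nhdsWithin_le_nhds
  refine ge_of_tendsto hcs ?_
  filter_upwards [Ioc_mem_nhdsGT (zero_lt_one (α := ℝ))] with s hs'
  exact hs s hs'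

lemma weak {p : (Fin n → X) → ℝ} (hp : ∀ x, 0 < p x) (hp1 : ∑ x, p x = 1)
    (d : (Fin n → X) → (Fin n → Y) → ℝ) (D : ℝ) (r : (Fin n → X) → (Fin n → Y) → ℝ)
    (hr : IsCondPMF r) (hrD : ∑ x, ∑ y, p x * r x y * d x y ≤ D) (lam : ℝ) (hl : 0 ≤ lam)
    (γ : (Fin n → X) → ℝ) (hγ : ∀ x, 0 < γ x)
    (f : Fin n → (Fin n → X) → (Fin n → Y) → X → ℝ) (hf : IsRevCausalFamily f)
    (h : ∀ x y, p x * γ x * 2 ^ (-(lam * d x y)) ≤ ∏ i, f i x y (x i)) :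
    -(lam * D) + ∑ x, p x * Real.logb 2 (γ x) ≤ directedInfo p r := by
  have h0 : ∀ x y, 0 < p x * γ x * (2:ℝ) ^ (-(lam * d x y)) := fun x y =>
    mul_pos (mul_pos (hp x) (hγ x)) (by positivity)
  have hpos : ∀ x y, 0 < ∏ i, f i x y (x i) := fun x y => (h0 x y).trans_le (h x y)
  refine le_trans ?_ (gibbs hp hp1 hr hf hpos)
  have key : ∀ x y, p x * r x y * Real.logb 2 (γ x) - lam * (p x * r x y * d x y) ≤
      p x * r x y * Real.logb 2 ((∏ i, f i x y (x i)) / p x) := by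
    intro x y
    have h1 : Real.logb 2 (γ x) + -(lam * d x y) ≤ Real.logb 2 ((∏ i, f i x y (x i)) / p x) := by
      rw [Real.le_logb_iff_rpow_le (by norm_num) (div_pos (hpos x y) (hp x)),
        Real.rpow_add (by norm_num), Real.rpow_logb (by norm_num) (by norm_num) (hγ x),
        le_div_iff₀ (hp x)]
      linarith [h x y]
    have := mul_le_mul_of_nonneg_left h1 (mul_nonneg (hp x).le (hr.1 x y))
    linarith
  have hs := Finset.sum_le_sum fun x (_ : x ∈ Finset.univ) =>
    Finset.sum_le_sum fun y (_ : y ∈ Finset.univ) => key x y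
  simp only [Finset.sum_sub_distrib, ← Finset.mul_sum] at hs
  have e : ∑ x, ∑ y, p x * r x y * Real.logb 2 (γ x) = ∑ x, p x * Real.logb 2 (γ x) := by
    refine Finset.sum_congr rfl fun x _ => ?_
    rw [← Finset.sum_mul, ← Finset.mul_sum, hr.2, mul_one]
  rw [e] at hs
  have := mul_le_mul_of_nonneg_left hrD hl
  unfold L
  linarith

lemma exists_rb {p : (Fin n → X) → ℝ} (hp : ∀ x, 0 < p x)
    (d : (Fin n → X) → (Fin n → Y) → ℝ) (hd : ∀ x y, 0 ≤ d x y) (D : ℝ)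
    (x0 : Fin n → X)
    (r0 : (Fin n → X) → (Fin n → Y) → ℝ) (hr0 : IsCondPMF r0)
    (h0 : ∑ x, ∑ y, p x * r0 x y * d x y < D) :
    ∃ δ > 0, ∃ rb, rb ∈ K p d D δ := by
  have hne : Nonempty (Fin n → Y) := by
    by_contra hc
    rw [not_nonempty_iff] at hc
    have := hr0.2 x0
    simp at this
  set m : ℝ := ((Fintype.card (Fin n → Y) : ℕ) : ℝ) with hm
  have hmpos : 0 < m := by rw [hm]; exact_mod_cast Fintype.card_pos
  let u : (Fin n → X) → (Fin n → Y) → ℝ := fun _ _ => 1 / m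
  have hu1 : ∀ x, ∑ y, u x y = 1 := by
    intro x
    simp only [u, Finset.sum_const, Finset.card_univ, nsmul_eq_mul, ← hm]
    field_simp
  set a := ∑ x, ∑ y, p x * r0 x y * d x y with ha
  set b := ∑ x, ∑ y, p x * u x y * d x y with hb
  have ha0 : 0 ≤ a := Finset.sum_nonneg fun x _ => Finset.sum_nonneg fun y _ =>
    mul_nonneg (mul_nonneg (hp x).le (hr0.1 x y)) (hd x y)
  have hb0 : 0 ≤ b := Finset.sum_nonneg fun x _ => Finset.sum_nonneg fun y _ =>
    mul_nonneg (mul_nonneg (hp x).le (by positivity)) (hd x y)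
  have hden : 0 < D - a + b + 1 := by linarith
  set t := (D - a) / (D - a + b + 1) with ht
  have ht0 : 0 < t := div_pos (by linarith) hden
  have ht1 : t ≤ 1 := by rw [ht, div_le_one hden]; linarith
  have htb : t * b ≤ D - a := by
    rw [ht, div_mul_eq_mul_div, div_le_iff₀ hden]
    exact mul_le_mul_of_nonneg_left (by linarith) (by linarith)
  refine ⟨t * (1 / m), by positivity, (1 - t) • r0 + t • u, fun x y => ?_,
    sum_comb (by ring) hr0.2 hu1, ?_⟩
  · simp only [Pi.add_apply, Pi.smul_apply, smul_eq_mul]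
    have := mul_nonneg (by linarith : 0 ≤ 1 - t) (hr0.1 x y)
    show _ ≤ (1 - t) * r0 x y + t * (1 / m)
    linarith
  · rw [dist_comb, ← ha, ← hb]
    have := mul_nonneg ht0.le ha0
    linarith

lemma strong {p : (Fin n → X) → ℝ} (hp : ∀ x, 0 < p x) (hp1 : ∑ x, p x = 1)
    (d : (Fin n → X) → (Fin n → Y) → ℝ) (hd : ∀ x y, 0 ≤ d x y) (D R : ℝ)
    (r0 : (Fin n → X) → (Fin n → Y) → ℝ) (hr0 : IsCondPMF r0)
    (h0 : ∑ x, ∑ y, p x * r0 x y * d x y < D)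
    (hR : ∀ r, IsCondPMF r → ∑ x, ∑ y, p x * r x y * d x y ≤ D → R ≤ directedInfo p r) :
    ∃ (lam : ℝ) (γ : (Fin n → X) → ℝ), 0 ≤ lam ∧ (∀ x, 0 < γ x) ∧
      (∃ f : Fin n → (Fin n → X) → (Fin n → Y) → X → ℝ, IsRevCausalFamily f ∧
          ∀ x y, p x * γ x * 2 ^ (-(lam * d x y)) ≤ ∏ i, f i x y (x i)) ∧
      R ≤ -(lam * D) + ∑ x, p x * Real.logb 2 (γ x) := by
  obtain ⟨x0⟩ : Nonempty (Fin n → X) := by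
    by_contra hc
    rw [not_nonempty_iff] at hc
    simp at hp1
  obtain ⟨δ, hδ, rb, hrb⟩ := exists_rb hp d hd D x0 r0 hr0 h0
  have hne : Nonempty (Fin n → Y) := by
    by_contra hc
    rw [not_nonempty_iff] at hc
    have := hr0.2 x0
    simp at this
  obtain ⟨f, hf, hfp, hL⟩ := claimA hp hp1 d D R δ hδ rb hrb
    (fun r hr => hR r ⟨hr.1, hr.2.1⟩ hr.2.2)
  obtain ⟨lam, hlam, hlp⟩ := lp {r : (Fin n → X) → (Fin n → Y) → ℝ | IsCondPMF r}
    (by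
      rintro r ⟨h1, h2⟩ r' ⟨h1', h2'⟩ s t hs ht hst
      refine ⟨fun x y => ?_, sum_comb hst h2 h2'⟩
      simp only [Pi.add_apply, Pi.smul_apply, smul_eq_mul]
      exact add_nonneg (mul_nonneg hs (h1 x y)) (mul_nonneg ht (h1' x y)))
    (fun r => L p r f - R) (fun r => ∑ x, ∑ y, p x * r x y * d x y - D)
    (by
      intro a b s t hst
      simp only [L_comb]
      linear_combination R * hst)
    (by
      intro a b s t hst
      simp only [dist_comb]
      linear_combination D * hst)
    (by
      intro r hr h
      have := hL r ⟨hr.1, hr.2, by linarith⟩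
      linarith) r0 hr0 (by linarith)
  let A : (Fin n → X) → (Fin n → Y) → ℝ := fun x y =>
    Real.logb 2 ((∏ i, f i x y (x i)) / p x) + lam * d x y
  choose ym hym using fun x => Finite.exists_min (A x)
  refine ⟨lam, fun x => 2 ^ (A x (ym x)), hlam, fun x => by positivity, ⟨f, hf, fun x y => ?_⟩, ?_⟩
  · have h1 : A x (ym x) + -(lam * d x y) ≤ Real.logb 2 ((∏ i, f i x y (x i)) / p x) := by
      have := hym x y
      have e : A x y = Real.logb 2 ((∏ i, f i x y (x i)) / p x) + lam * d x y := rfl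
      linarith
    rw [Real.le_logb_iff_rpow_le (by norm_num) (div_pos (hfp x y) (hp x)),
        Real.rpow_add (by norm_num), le_div_iff₀ (hp x)] at h1
    linarith
  · have h1 := hlp (fun x y => if y = ym x then 1 else 0)
      ⟨fun x y => by positivity, fun x => by simp⟩
    simp only [L, mul_ite, ite_mul, mul_one, mul_zero, zero_mul, Finset.sum_ite_eq',
      Finset.mem_univ, if_true] at h1
    have e : ∑ x, p x * Real.logb 2 ((2:ℝ) ^ (A x (ym x))) =
      ∑ x, p x * Real.logb 2 ((∏ i, f i x (ym x) (x i)) / p x) + lam * ∑ x, p x * d x (ym x) := by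
      rw [Finset.mul_sum, ← Finset.sum_add_distrib]
      refine Finset.sum_congr rfl fun x _ => ?_
      rw [Real.logb_rpow (by norm_num) (by norm_num)]
      simp only [A]; ring
    rw [e]
    linarith

end FFRDP

open FFRD in
/-- Theorem 6, dual form: `Rₙ(D)` equals the maximum over `λ ≥ 0` and
`γ > 0` for which some reverse causal conditioning pmf `p′` satisfies
`p(xⁿ)γ(xⁿ)2^{−λd(xⁿ,x̂ⁿ)} ≤ p′(xⁿ‖x̂ⁿ)`, of `(1/n)(−λD + Σ p log₂ γ)`. -/
theorem Rn_eq_max_dual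
    {X Y : Type} [Fintype X] [DecidableEq X] [Fintype Y] [DecidableEq Y]
    (n : ℕ) (hn : 1 ≤ n)
    (p : (Fin n → X) → ℝ) (hp : IsPMF p) (hppos : ∀ x, 0 < p x)
    (d : (Fin n → X) → (Fin n → Y) → ℝ) (hd : ∀ x y, 0 ≤ d x y)
    (D : ℝ) (hD : 0 < D)
    (hfeas : ∃ r : (Fin n → X) → (Fin n → Y) → ℝ, IsCondPMF r ∧
      (∑ x, ∑ y, p x * r x y * d x y) < D) :
    IsGreatest
      {v : ℝ | ∃ (lam : ℝ) (γ : (Fin n → X) → ℝ),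
        0 ≤ lam ∧ (∀ x, 0 < γ x) ∧
        (∃ f : Fin n → (Fin n → X) → (Fin n → Y) → X → ℝ, IsRevCausalFamily f ∧
          ∀ x y, p x * γ x * 2 ^ (-(lam * d x y)) ≤ ∏ i, f i x y (x i)) ∧
        v = (1 / (n : ℝ)) * (-(lam * D) + ∑ x, p x * Real.logb 2 (γ x))}
      (Rn n p d D) := by
  obtain ⟨r0, hr0, h0⟩ := hfeas
  have hnpos : (0:ℝ) < 1 / (n : ℝ) := by
    have : (0:ℝ) < n := by exact_mod_cast hn
    positivity
  set V : Set ℝ := {v | ∃ r : (Fin n → X) → (Fin n → Y) → ℝ, IsCondPMF r ∧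
      (∑ x, ∑ y, p x * r x y * d x y) ≤ D ∧ v = directedInfo p r} with hV
  have hRn : Rn n p d D = (1 / (n : ℝ)) * sInf V := rfl
  have hVne : V.Nonempty := ⟨_, r0, hr0, h0.le, rfl⟩
  have hweak : ∀ (lam : ℝ) (γ : (Fin n → X) → ℝ), 0 ≤ lam → (∀ x, 0 < γ x) →
      (∃ f : Fin n → (Fin n → X) → (Fin n → Y) → X → ℝ, IsRevCausalFamily f ∧
          ∀ x y, p x * γ x * 2 ^ (-(lam * d x y)) ≤ ∏ i, f i x y (x i)) →
      ∀ v ∈ V, -(lam * D) + ∑ x, p x * Real.logb 2 (γ x) ≤ v := by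
    rintro lam γ hl hγ ⟨f, hf, h⟩ v ⟨r, hr, hrD, rfl⟩
    exact FFRDP.weak hppos hp.2 d D r hr hrD lam hl γ hγ f hf h
  have hXne : Nonempty X := by
    have h1 : Nonempty (Fin n → X) := by
      by_contra hc
      rw [not_nonempty_iff] at hc
      have := hp.2
      simp at this
    exact ⟨h1.some ⟨0, hn⟩⟩
  have hbdd : BddBelow V := by
    let c : ℝ := ((Fintype.card X : ℕ) : ℝ)
    have hc : 0 < c := by
      have := Fintype.card_pos (α := X)
      exact Nat.cast_pos.2 this
    refine ⟨_, fun v hv => hweak 0 (fun x => (1 / c) ^ n / p x) le_rfl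
      (fun x => div_pos (by positivity) (hppos x)) ⟨fun _ _ _ _ => 1 / c, ⟨?_, ?_⟩, ?_⟩ v hv⟩
    · intro i x y
      refine ⟨fun a => by positivity, ?_⟩
      simp only [Finset.sum_const, Finset.card_univ, nsmul_eq_mul]
      change c * (1 / c) = 1
      field_simp
    · intros; rfl
    · intro x y
      have := (hppos x).ne'
      simp only [zero_mul, neg_zero, Real.rpow_zero, mul_one, Finset.prod_const, Finset.card_univ,
        Fintype.card_fin]
      rw [mul_div_cancel₀ _ this]
  constructor
  · obtain ⟨lam, γ, hl, hγ, hf, hle⟩ := FFRDP.strong hppos hp.2 d hd D (sInf V) r0 hr0 h0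
      (fun r hr hrD => csInf_le hbdd ⟨r, hr, hrD, rfl⟩)
    refine ⟨lam, γ, hl, hγ, hf, ?_⟩
    rw [hRn]
    congr 1
    exact le_antisymm hle (le_csInf hVne (hweak lam γ hl hγ hf))
  · rintro v ⟨lam, γ, hl, hγ, hf, rfl⟩
    rw [hRn]
    exact mul_le_mul_of_nonneg_left (le_csInf hVne (hweak lam γ hl hγ hf)) hnpos.le
end
end

section
/- Let p be a pmf on 𝒳ⁿ with p(xⁿ) > 0 for all xⁿ, let d: 𝒳ⁿ×𝒳̂ⁿ→[0,∞) be a distortion function, and let D > 0 be such that some conditional pmf r satisfies Σ_{xⁿ,x̂ⁿ} p(xⁿ)r(x̂ⁿ|xⁿ)d(xⁿ,x̂ⁿ) < D. Then the n-th order rate distortion function with feed-forward admits the geometric programming form Rₙ(D) = max (1/n)·( −λD + Σ_{xⁿ} p(xⁿ) log₂ γ(xⁿ) ), where the maximum is over λ ≥ 0, γ: 𝒳ⁿ→(0,∞), and families {p′_i(x_i|x^{i−1},x̂^i)}_{i=1}^n of strictly positive conditional pmfs on 𝒳, subject to the constraints log₂ p(xⁿ) + log₂ γ(xⁿ) − λ·d(xⁿ,x̂ⁿ)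 − Σ_{i=1}^n log₂ p′_i(x_i|x^{i−1},x̂^i) ≤ 0 for all xⁿ, x̂ⁿ, and Σ_{x_i} p′_i(x_i|x^{i−1},x̂^i) = 1 for all i, x^{i−1}, x̂^i. -/
open scoped BigOperators
open Filter

noncomputable section

namespace GPF

lemma lagrange {V : Type*} [AddCommGroup V] [Module ℝ V] {Ω : Type*} [Fintype Ω]
    (S : Set V) (o : V → ℝ) (c : Ω → V → ℝ) (ho : ConcaveOn ℝ S o)
    (hc : ∀ ω, ConvexOn ℝ S (c ω)) (slater : ∃ z ∈ S, ∀ ω, c ω z < 0) (v : ℝ)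
    (hv : ∀ z ∈ S, (∀ ω, c ω z ≤ 0) → o z ≤ v) :
    ∃ m : Ω → ℝ, (∀ ω, 0 ≤ m ω) ∧ ∀ z ∈ S, o z - ∑ ω, m ω * c ω z ≤ v := by
  classical
  let A : Set ((Ω → ℝ) × ℝ) := {q | ∃ z ∈ S, (∀ ω, c ω z < q.1 ω) ∧ q.2 < o z}
  have hAo : IsOpen A := by
    have : A = ⋃ z ∈ S, {q : (Ω → ℝ) × ℝ | (∀ ω, c ω z < q.1 ω) ∧ q.2 < o z} := by
      ext q; simp only [A, Set.mem_ofPred_eq, Set.mem_iUnion, exists_prop]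
    rw [this]
    refine isOpen_biUnion fun z _ => ?_
    have h1 : IsOpen {q : (Ω → ℝ) × ℝ | ∀ ω, c ω z < q.1 ω} := by
      rw [Set.ofPred_forall]
      refine isOpen_iInter_of_finite fun ω => ?_
      exact isOpen_lt (by fun_prop) (by fun_prop)
    have h2 : IsOpen {q : (Ω → ℝ) × ℝ | q.2 < o z} := isOpen_lt (by fun_prop) (by fun_prop)
    exact h1.inter h2
  have hAc : Convex ℝ A := by
    rintro q ⟨z, hz, h1, h2⟩ q' ⟨z', hz', h1', h2'⟩ a b ha hb hab
    refine ⟨a • z + b • z', ho.1 hz hz' ha hb hab, fun ω => ?_, ?_⟩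
    · refine lt_of_le_of_lt ((hc ω).2 hz hz' ha hb hab) ?_
      simp only [smul_eq_mul, Prod.fst_add, Prod.smul_fst, Pi.add_apply, Pi.smul_apply]
      rcases ha.eq_or_lt with rfl | ha
      · obtain rfl : b = 1 := by linarith
        simpa using h1' ω
      · have := mul_lt_mul_of_pos_left (h1 ω) ha
        have := mul_le_mul_of_nonneg_left (h1' ω).le hb
        linarith
    · refine lt_of_lt_of_le ?_ (ho.2 hz hz' ha hb hab)
      simp only [smul_eq_mul, Prod.snd_add, Prod.smul_snd]
      rcases ha.eq_or_lt with rfl | ha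
      · obtain rfl : b = 1 := by linarith
        simpa using h2'
      · have := mul_lt_mul_of_pos_left h2 ha
        have := mul_le_mul_of_nonneg_left h2'.le hb
        linarith
  have hnot : ((0 : Ω → ℝ), v) ∉ A := by
    rintro ⟨z, hz, h1, h2⟩
    have := hv z hz (fun ω => (h1 ω).le)
    simp only at h2
    linarith
  obtain ⟨F, hF⟩ := geometric_hahn_banach_open_point hAc hAo hnot
  set s := F (0, 1) with hs
  set m : Ω → ℝ := fun ω => - F (Pi.single ω 1, 0) with hm
  have hFe : ∀ u t, F (u, t) = - ∑ ω, m ω * u ω + s * t := by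
    intro u t
    have h1 : (u, t) = (∑ ω, (u ω) • ((Pi.single ω 1, 0) : (Ω → ℝ) × ℝ)) + t • (0, 1) := by
      ext i
      · simp [Prod.fst_sum, Finset.sum_apply, Pi.single_apply]
      · simp [Prod.snd_sum]
    rw [h1, map_add, map_sum]
    simp only [map_smul, smul_eq_mul, hm, hs, neg_mul, Finset.sum_neg_distrib, neg_neg]
    congr 1
    · exact Finset.sum_congr rfl fun _ _ => mul_comm _ _
    · ring
  have key : ∀ z ∈ S, ∀ (u : Ω → ℝ) (t : ℝ), (∀ ω, c ω z < u ω) → t < o z →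
      - ∑ ω, m ω * u ω + s * t < s * v := by
    intro z hz u t h1 h2
    have := hF (u, t) ⟨z, hz, h1, h2⟩
    rw [hFe, hFe] at this
    simpa using this
  obtain ⟨z0, hz0, hsl⟩ := slater
  have hs0 : 0 ≤ s := by
    by_contra hneg
    push Not at hneg
    set B := - ∑ ω, m ω * (0:ℝ) with hB
    have h := key z0 hz0 (fun _ => 0) (min (o z0 - 1) (v - 1)) hsl
      (by have := min_le_left (o z0 - 1) (v - 1); linarith)
    have h3 := min_le_right (o z0 - 1) (v - 1)
    simp only [mul_zero, Finset.sum_const_zero] at h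
    nlinarith
  have hm0 : ∀ ω, 0 ≤ m ω := by
    intro ω
    by_contra hneg
    push Not at hneg
    have hK : ∀ K : ℝ, 0 ≤ K → -(m ω * K) + s * (o z0 - 1) < s * v := by
      intro K hK
      have h := key z0 hz0 (fun ω' => if ω' = ω then K else 0) (o z0 - 1)
        (fun ω' => by
          have := hsl ω'
          by_cases h : ω' = ω <;> simp [h] <;> [(subst h; linarith); exact this]) (by linarith)
      simpa using h
    have h := hK (|s * v - s * (o z0 - 1)| / (- m ω)) (div_nonneg (abs_nonneg _) (by linarith))
    have h2 : -(m ω * (|s * v - s * (o z0 - 1)| / (- m ω))) = |s * v - s * (o z0 - 1)| := by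
      rw [div_neg, mul_neg, neg_neg, mul_div_cancel₀ _ hneg.ne]
    rw [h2] at h
    have := le_abs_self (s * v - s * (o z0 - 1))
    linarith
  have hspos : 0 < s := by
    refine lt_of_le_of_ne hs0 fun h0 => ?_
    obtain h := key z0 hz0 (fun _ => 0) (o z0 - 1) hsl (by linarith)
    rw [← h0] at h
    simp at h
  refine ⟨fun ω => m ω / s, fun ω => div_nonneg (hm0 ω) hs0, fun z hz => ?_⟩
  have hlim : ∀ ε : ℝ, 0 < ε → - ∑ ω, m ω * (c ω z + ε) + s * (o z - ε) ≤ s * v := fun ε hε =>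
    (key z hz (fun ω => c ω z + ε) (o z - ε) (fun ω => by linarith) (by linarith)).le
  have h0 : - ∑ ω, m ω * (c ω z + 0) + s * (o z - 0) ≤ s * v := by
    have hcont : Tendsto (fun ε : ℝ => - ∑ ω, m ω * (c ω z + ε) + s * (o z - ε)) (nhdsWithin 0 (Set.Ioi 0))
        (nhds (- ∑ ω, m ω * (c ω z + 0) + s * (o z - 0))) := by
      have : Continuous (fun ε : ℝ => - ∑ ω, m ω * (c ω z + ε) + s * (o z - ε)) := by fun_prop
      exact (this.tendsto 0).mono_left nhdsWithin_le_nhds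
    exact le_of_tendsto hcont (by filter_upwards [self_mem_nhdsWithin] with ε hε using hlim ε hε)
  simp only [add_zero, sub_zero] at h0
  have h4 : ∑ ω, m ω / s * c ω z = (∑ ω, m ω * c ω z) / s := by
    rw [Finset.sum_div]; exact Finset.sum_congr rfl fun _ _ => by ring
  rw [h4]
  have h5 : s * (o z - (∑ ω, m ω * c ω z) / s) = s * o z - ∑ ω, m ω * c ω z := by
    field_simp
  refine le_of_mul_le_mul_left ?_ hspos
  rw [h5]; linarith

lemma gibbs {Ω X : Type*} [Fintype Ω] [Fintype X] [DecidableEq X]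
    (w : Ω → ℝ) (hw : ∀ ω, 0 ≤ w ω) (R : Ω → Ω → Prop) [DecidableRel R] (hR : Equivalence R)
    (ξ : Ω → X) (f : Ω → X → ℝ) (hf : ∀ ω a, 0 < f ω a) (hfR : ∀ ω ω', R ω ω' → f ω = f ω')
    (hf1 : ∀ ω, ∑ a, f ω a = 1) :
    ∑ ω, w ω * Real.logb 2 (f ω (ξ ω)) ≤ ∑ ω, w ω * Real.logb 2
      ((∑ ω', if R ω' ω ∧ ξ ω' = ξ ω then w ω' else 0) / (∑ ω', if R ω' ω then w ω' else 0)) := by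
  classical
  set A : Ω → ℝ := fun ω => ∑ ω', if R ω' ω ∧ ξ ω' = ξ ω then w ω' else 0 with hA
  set B : Ω → ℝ := fun ω => ∑ ω', if R ω' ω then w ω' else 0 with hB
  have hA0 : ∀ ω, w ω ≤ A ω := by
    intro ω
    have := Finset.single_le_sum (f := fun ω' => if R ω' ω ∧ ξ ω' = ξ ω then w ω' else 0)
      (fun i _ => by split_ifs <;> simp [hw]) (Finset.mem_univ ω)
    simpa [hR.refl ω] using this
  have hB0 : ∀ ω, w ω ≤ B ω := by
    intro ω
    have := Finset.single_le_sum (f := fun ω' => if R ω' ω then w ω' else 0)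
      (fun i _ => by split_ifs <;> simp [hw]) (Finset.mem_univ ω)
    simpa [hR.refl ω] using this
  have hsum : ∑ ω, w ω * (f ω (ξ ω) * B ω / A ω) ≤ ∑ ω, w ω := by
    have e1 : ∑ ω, w ω * (f ω (ξ ω) * B ω / A ω) =
        ∑ ω', w ω' * ∑ a, f ω' a * ∑ ω, (if R ω' ω ∧ a = ξ ω then w ω / A ω else 0) := by
      simp only [hB, Finset.mul_sum, Finset.sum_div]
      rw [Finset.sum_comm]
      refine Finset.sum_congr rfl fun ω' _ => ?_
      rw [Finset.sum_comm]
      refine Finset.sum_congr rfl fun ω _ => ?_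
      by_cases h : R ω' ω
      · simp only [h, if_true, true_and]
        simp [hfR ω' ω h]
        ring
      · simp [h]
    rw [e1]
    refine Finset.sum_le_sum fun ω' _ => ?_
    refine mul_le_of_le_one_right (hw ω') ?_
    rw [← hf1 ω']
    refine Finset.sum_le_sum fun a _ => mul_le_of_le_one_right (hf _ _).le ?_
    set T := ∑ ω, (if R ω' ω ∧ a = ξ ω then w ω else 0) with hT
    have e2 : ∑ ω, (if R ω' ω ∧ a = ξ ω then w ω / A ω else 0) = T / T := by
      conv_rhs => rw [hT, Finset.sum_div]
      refine Finset.sum_congr rfl fun ω _ => ?_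
      split_ifs with h
      · congr 1
        refine Finset.sum_congr rfl fun ω'' _ => ?_
        have : (R ω'' ω ∧ ξ ω'' = ξ ω) ↔ (R ω' ω'' ∧ a = ξ ω'') := by
          rw [← h.2]
          constructor
          · exact fun h' => ⟨hR.trans h.1 (hR.symm h'.1), h'.2.symm⟩
          · exact fun h' => ⟨hR.trans (hR.symm h'.1) h.1, h'.2.symm⟩
        simp only [this]
      · simp
    rw [e2]; exact div_self_le_one T
  have hl2 : 0 < Real.log 2 := Real.log_pos (by norm_num)
  have hpt : ∀ ω, w ω * Real.logb 2 (f ω (ξ ω)) - w ω * Real.logb 2 (A ω / B ω) ≤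
      (w ω * (f ω (ξ ω) * B ω / A ω) - w ω) / Real.log 2 := by
    intro ω
    rcases (hw ω).eq_or_lt with h | h
    · simp [← h]
    · have hAp := h.trans_le (hA0 ω)
      have hBp := h.trans_le (hB0 ω)
      have hfp := hf ω (ξ ω)
      rw [le_div_iff₀ hl2]
      have : (w ω * Real.logb 2 (f ω (ξ ω)) - w ω * Real.logb 2 (A ω / B ω)) * Real.log 2
          = w ω * Real.log (f ω (ξ ω) * B ω / A ω) := by
        rw [Real.logb, Real.logb, Real.log_div hAp.ne' hBp.ne', Real.log_div (by positivity) hAp.ne',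
          Real.log_mul hfp.ne' hBp.ne']
        field_simp
        ring
      rw [this]
      have := Real.log_le_sub_one_of_pos (x := f ω (ξ ω) * B ω / A ω) (by positivity)
      nlinarith
  have := Finset.sum_le_sum fun ω (_ : ω ∈ Finset.univ) => hpt ω
  rw [Finset.sum_sub_distrib, ← Finset.sum_div, Finset.sum_sub_distrib] at this
  have h2 : (∑ ω, w ω * (f ω (ξ ω) * B ω / A ω) - ∑ ω, w ω) / Real.log 2 ≤ 0 :=
    div_nonpos_of_nonpos_of_nonneg (by linarith) hl2.le
  linarith

section
variable {X Y : Type} [Fintype X] [DecidableEq X] [Fintype Y] [DecidableEq Y] {n : ℕ}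

def M (w : (Fin n → X) → (Fin n → Y) → ℝ) (a b : ℕ) (x : Fin n → X) (y : Fin n → Y) : ℝ :=
  ∑ x' : Fin n → X, ∑ y' : Fin n → Y,
    if (∀ j : Fin n, (j : ℕ) < a → x' j = x j) ∧ (∀ j : Fin n, (j : ℕ) < b → y' j = y j)
    then w x' y' else 0

def N (w : (Fin n → X) → (Fin n → Y) → ℝ) (i : Fin n) (x : Fin n → X) (y : Fin n → Y) (a : X) : ℝ :=
  ∑ x' : Fin n → X, ∑ y' : Fin n → Y,
    if ((∀ j : Fin n, (j : ℕ) < i → x' j = x j) ∧ (∀ j : Fin n, (j : ℕ) < i + 1 → y' j = y j)) ∧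
      x' i = a then w x' y' else 0

structure Fam (f : Fin n → (Fin n → X) → (Fin n → Y) → X → ℝ) : Prop where
  pos : ∀ i x y a, 0 < f i x y a
  causal : ∀ i x x' y y', (∀ j, j < i → x j = x' j) → (∀ j, j ≤ i → y j = y' j) →
          f i x y = f i x' y'
  norm : ∀ i x y, ∑ a, f i x y a = 1

lemma M_ge (w : (Fin n → X) → (Fin n → Y) → ℝ) (hw : ∀ x y, 0 ≤ w x y) (a b : ℕ) (x y) :
    w x y ≤ M w a b x y := by
  unfold M
  have h1 := Finset.single_le_sum (f := fun y' => if (∀ j : Fin n, (j : ℕ) < a → x j = x j) ∧ (∀ j : Fin n, (j : ℕ) < b → y' j = y j)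
    then w x y' else 0) (fun i _ => by split_ifs <;> simp [hw]) (Finset.mem_univ y)
  have h2 := Finset.single_le_sum (f := fun x' => ∑ y' : Fin n → Y, if (∀ j : Fin n, (j : ℕ) < a → x' j = x j) ∧ (∀ j : Fin n, (j : ℕ) < b → y' j = y j)
    then w x' y' else 0) (fun i _ => Finset.sum_nonneg fun _ _ => by split_ifs <;> simp [hw]) (Finset.mem_univ x)
  refine le_trans ?_ (h1.trans h2)
  simp

lemma N_nonneg (w : (Fin n → X) → (Fin n → Y) → ℝ) (hw : ∀ x y, 0 ≤ w x y) (i) (x y) (a) :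
    0 ≤ N w i x y a :=
  Finset.sum_nonneg fun _ _ => Finset.sum_nonneg fun _ _ => by split_ifs <;> simp [hw]

lemma N_sum (w : (Fin n → X) → (Fin n → Y) → ℝ) (i) (x y) :
    ∑ a, N w i x y a = M w i (i + 1) x y := by
  unfold N M
  rw [Finset.sum_comm]
  refine Finset.sum_congr rfl fun x' _ => ?_
  rw [Finset.sum_comm]
  refine Finset.sum_congr rfl fun y' _ => ?_
  simp only [ite_and]
  simp

lemma succ_iff (i : Fin n) (x' x : Fin n → X) :
    (∀ j : Fin n, (j : ℕ) < i + 1 → x' j = x j) ↔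
      (∀ j : Fin n, (j : ℕ) < i → x' j = x j) ∧ x' i = x i := by
  constructor
  · exact fun h => ⟨fun j hj => h j (by omega), h i (by omega)⟩
  · rintro ⟨h1, h2⟩ j hj
    rcases Nat.lt_succ_iff_lt_or_eq.mp hj with h | h
    · exact h1 j h
    · rw [Fin.ext h]; exact h2

lemma N_self (w : (Fin n → X) → (Fin n → Y) → ℝ) (i : Fin n) (x y) :
    N w i x y (x i) = M w (i + 1) (i + 1) x y := by
  unfold N M
  refine Finset.sum_congr rfl fun x' _ => Finset.sum_congr rfl fun y' _ => ?_
  refine if_congr ?_ rfl rfl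
  rw [succ_iff i x' x]
  tauto

lemma pre_congr {Z : Type} (k : ℕ) (x₁ x₂ x' : Fin n → Z) (h : ∀ j : Fin n, (j : ℕ) < k → x₁ j = x₂ j) :
    (∀ j : Fin n, (j : ℕ) < k → x' j = x₁ j) ↔ (∀ j : Fin n, (j : ℕ) < k → x' j = x₂ j) :=
  forall_congr' fun j => forall_congr' fun hj => by rw [h j hj]

lemma N_causal (w : (Fin n → X) → (Fin n → Y) → ℝ) (i : Fin n) (x x' y y')
    (h1 : ∀ j, j < i → x j = x' j) (h2 : ∀ j, j ≤ i → y j = y' j) :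
    N w i x y = N w i x' y' := by
  funext a
  unfold N
  refine Finset.sum_congr rfl fun u _ => Finset.sum_congr rfl fun v _ => ?_
  refine if_congr ?_ rfl rfl
  rw [pre_congr _ x x' u (fun j hj => h1 j hj),
    pre_congr _ y y' v (fun j hj => h2 j (by rw [Fin.le_def]; omega))]

lemma M_zero (w : (Fin n → X) → (Fin n → Y) → ℝ) (x y) : M w 0 0 x y = ∑ x, ∑ y, w x y := by
  simp [M]

lemma M_n (w : (Fin n → X) → (Fin n → Y) → ℝ) (x y) : M w n n x y = w x y := by
  have : ∀ (Z : Type) (a b : Fin n → Z), (∀ j : Fin n, (j : ℕ) < n → a j = b j) ↔ a = b := by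
    intro Z a b
    simp [funext_iff]
  simp only [M, this, ite_and]
  simp

lemma tele (g : ℕ → ℝ) (hg : ∀ k, g k ≠ 0) (m : ℕ) :
    ∏ i : Fin m, g (i + 1) / g i = g m / g 0 := by
  rw [Fin.prod_univ_eq_prod_range (fun i => g (i + 1) / g i) m]
  induction m with
  | zero => simp [hg]
  | succ k ih => rw [Finset.prod_range_succ, ih]; field_simp [hg]

lemma causal_eq (p : (Fin n → X) → ℝ) (r : (Fin n → X) → (Fin n → Y) → ℝ) (x y) :
    FFRD.causalCond p r x y = ∏ i : Fin n,
      M (fun x y => p x * r x y) i (i + 1) x y / M (fun x y => p x * r x y) i i x y := by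
  unfold FFRD.causalCond M
  refine Finset.prod_congr rfl fun i _ => ?_
  congr 1
  refine Finset.sum_congr rfl fun u _ => Finset.sum_congr rfl fun v _ => ?_
  refine if_congr ?_ rfl rfl
  simp only [Fin.lt_def, Fin.le_def, Nat.lt_succ_iff]

lemma directed_eq (p : (Fin n → X) → ℝ) (hp : FFRD.IsPMF p) (hppos : ∀ x, 0 < p x)
    (r : (Fin n → X) → (Fin n → Y) → ℝ) (hr : FFRD.IsCondPMF r) :
    FFRD.directedInfo p r = ∑ x, ∑ y, p x * r x y * ((∑ i : Fin n, Real.logb 2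
      (M (fun x y => p x * r x y) (i + 1) (i + 1) x y / M (fun x y => p x * r x y) i (i + 1) x y))
        - Real.logb 2 (p x)) := by
  unfold FFRD.directedInfo
  refine Finset.sum_congr rfl fun x _ => Finset.sum_congr rfl fun y _ => ?_
  rcases (hr.1 x y).eq_or_lt with h | h
  · simp [← h]
  congr 1
  set w : (Fin n → X) → (Fin n → Y) → ℝ := fun x y => p x * r x y with hw
  have hw0 : ∀ x y, 0 ≤ w x y := fun x y => mul_nonneg (hppos x).le (hr.1 x y)
  have hwp : 0 < w x y := mul_pos (hppos x) h
  have hM : ∀ a b, 0 < M w a b x y := fun a b => hwp.trans_le (M_ge w hw0 a b x y)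
  rw [← Real.logb_prod _ _ (fun i _ => (div_pos (hM _ _) (hM _ _)).ne'),
    ← Real.logb_div (Finset.prod_pos fun i _ => (div_pos (hM _ _) (hM _ _))).ne' (hppos x).ne']
  congr 1
  rw [causal_eq]
  have hq : 0 < ∏ i : Fin n, M w i (i + 1) x y / M w i i x y :=
    Finset.prod_pos fun i _ => (div_pos (hM _ _) (hM _ _))
  rw [div_eq_div_iff hq.ne' (hppos x).ne', ← Finset.prod_mul_distrib]
  have h1 : ∏ i : Fin n, (M w (i + 1) (i + 1) x y / M w i (i + 1) x y *
      (M w i (i + 1) x y / M w i i x y)) = ∏ i : Fin n, M w (i + 1) (i + 1) x y / M w i i x y := by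
    refine Finset.prod_congr rfl fun i _ => ?_
    rw [div_mul_div_cancel₀ (hM _ _).ne']
  rw [h1, tele (fun k => M w k k x y) (fun k => (hM _ _).ne') n, M_n, M_zero]
  have h2 : ∑ x, ∑ y, w x y = 1 := by
    simp only [hw, ← Finset.mul_sum, hr.2, mul_one, hp.2]
  rw [h2, div_one, mul_comm]

lemma gibbs' (w : (Fin n → X) → (Fin n → Y) → ℝ) (hw : ∀ x y, 0 ≤ w x y)
    (f : Fin n → (Fin n → X) → (Fin n → Y) → X → ℝ) (hf : Fam f) (i : Fin n) :
    ∑ x, ∑ y, w x y * Real.logb 2 (f i x y (x i)) ≤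
      ∑ x, ∑ y, w x y * Real.logb 2 (M w (i + 1) (i + 1) x y / M w i (i + 1) x y) := by
  classical
  have h := gibbs (Ω := (Fin n → X) × (Fin n → Y)) (fun ω => w ω.1 ω.2) (fun ω => hw _ _)
    (fun ω' ω => (∀ j : Fin n, (j : ℕ) < i → ω'.1 j = ω.1 j) ∧
      (∀ j : Fin n, (j : ℕ) < i + 1 → ω'.2 j = ω.2 j))
    ⟨fun ω => ⟨fun _ _ => rfl, fun _ _ => rfl⟩,
      fun h => ⟨fun j hj => (h.1 j hj).symm, fun j hj => (h.2 j hj).symm⟩,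
      fun h h' => ⟨fun j hj => (h.1 j hj).trans (h'.1 j hj), fun j hj => (h.2 j hj).trans (h'.2 j hj)⟩⟩
    (fun ω => ω.1 i) (fun ω a => f i ω.1 ω.2 a) (fun ω a => hf.pos _ _ _ _)
    (fun ω ω' h => hf.causal i _ _ _ _ (fun j hj => h.1 j hj)
      (fun j hj => h.2 j (by rw [Fin.le_def] at hj; omega)))
    (fun ω => hf.norm _ _ _)
  simp only [Fintype.sum_prod_type] at h
  refine h.trans (le_of_eq ?_)
  refine Finset.sum_congr rfl fun x _ => Finset.sum_congr rfl fun y _ => ?_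
  rw [← N_self]
  rfl

lemma gibbs_sum (w : (Fin n → X) → (Fin n → Y) → ℝ) (hw : ∀ x y, 0 ≤ w x y)
    (f : Fin n → (Fin n → X) → (Fin n → Y) → X → ℝ) (hf : Fam f) :
    ∑ x, ∑ y, w x y * ∑ i, Real.logb 2 (f i x y (x i)) ≤
      ∑ x, ∑ y, w x y * ∑ i : Fin n, Real.logb 2 (M w (i + 1) (i + 1) x y / M w i (i + 1) x y) := by
  have e : ∀ G : Fin n → (Fin n → X) → (Fin n → Y) → ℝ,
      ∑ x, ∑ y, w x y * ∑ i, G i x y = ∑ i, ∑ x, ∑ y, w x y * G i x y := by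
    intro G
    simp only [Finset.mul_sum]
    rw [Finset.sum_comm]
    conv_rhs => rw [Finset.sum_comm]
    rw [Finset.sum_comm]
    exact Finset.sum_congr rfl fun x _ => Finset.sum_comm
  rw [e (fun i x y => Real.logb 2 (f i x y (x i))),
    e (fun i x y => Real.logb 2 (M w (i + 1) (i + 1) x y / M w i (i + 1) x y))]
  exact Finset.sum_le_sum fun i _ => gibbs' w hw f hf i

lemma weak (p : (Fin n → X) → ℝ) (hp : FFRD.IsPMF p) (hppos : ∀ x, 0 < p x)
    (r : (Fin n → X) → (Fin n → Y) → ℝ) (hr : FFRD.IsCondPMF r)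
    (d : (Fin n → X) → (Fin n → Y) → ℝ) (D lam : ℝ) (g : (Fin n → X) → ℝ)
    (f : Fin n → (Fin n → X) → (Fin n → Y) → X → ℝ) (hf : Fam f)
    (hc : ∀ x y, Real.logb 2 (p x) + g x - lam * d x y -
          (∑ i, Real.logb 2 (f i x y (x i))) ≤ 0) :
    -(lam * D) + ∑ x, p x * g x ≤
      FFRD.directedInfo p r + lam * ((∑ x, ∑ y, p x * r x y * d x y) - D) := by
  have hw0 : ∀ x y, 0 ≤ p x * r x y := fun x y => mul_nonneg (hppos x).le (hr.1 x y)
  have h1 : ∑ x, p x * g x = ∑ x, ∑ y, p x * r x y * g x := by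
    refine Finset.sum_congr rfl fun x _ => ?_
    rw [← Finset.sum_mul, ← Finset.mul_sum, hr.2, mul_one]
  have h2 : ∑ x, ∑ y, p x * r x y * g x ≤ ∑ x, ∑ y, (lam * (p x * r x y * d x y) +
      p x * r x y * (∑ i, Real.logb 2 (f i x y (x i))) - p x * r x y * Real.logb 2 (p x)) := by
    refine Finset.sum_le_sum fun x _ => Finset.sum_le_sum fun y _ => ?_
    have := mul_le_mul_of_nonneg_left (hc x y) (hw0 x y)
    linarith
  have h3 := gibbs_sum (fun x y => p x * r x y) hw0 f hf
  rw [directed_eq p hp hppos r hr]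
  simp only [mul_sub, Finset.sum_sub_distrib, Finset.sum_add_distrib, ← Finset.mul_sum] at *
  linarith

lemma recover (p : (Fin n → X) → ℝ) (hp : FFRD.IsPMF p) (hppos : ∀ x, 0 < p x) [Nonempty X]
    (r : (Fin n → X) → (Fin n → Y) → ℝ) (hr : FFRD.IsCondPMF r) (v : ℝ)
    (H : ∀ f : Fin n → (Fin n → X) → (Fin n → Y) → X → ℝ, Fam f →
      ∑ x, ∑ y, p x * r x y * ((∑ i, Real.logb 2 (f i x y (x i))) - Real.logb 2 (p x)) ≤ v) :
    FFRD.directedInfo p r ≤ v := by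
  set w : (Fin n → X) → (Fin n → Y) → ℝ := fun x y => p x * r x y with hw
  have hw0 : ∀ x y, 0 ≤ w x y := fun x y => mul_nonneg (hppos x).le (hr.1 x y)
  have hX : (0 : ℝ) < Fintype.card X := by exact_mod_cast Fintype.card_pos
  let F : ℝ → Fin n → (Fin n → X) → (Fin n → Y) → X → ℝ := fun ε i x y a =>
    (N w i x y a + ε) / ((∑ a, N w i x y a) + ε * Fintype.card X)
  have hF : ∀ ε, 0 < ε → Fam (F ε) := by
    intro ε hε
    have hd : ∀ i x y, 0 < (∑ a, N w i x y a) + ε * Fintype.card X := fun i x y =>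
      add_pos_of_nonneg_of_pos (Finset.sum_nonneg fun a _ => N_nonneg w hw0 _ _ _ _) (by positivity)
    refine ⟨fun i x y a => div_pos (add_pos_of_nonneg_of_pos (N_nonneg w hw0 _ _ _ _) hε) (hd i x y),
      fun i x x' y y' h1 h2 => ?_, fun i x y => ?_⟩
    · simp only [F, N_causal w i x x' y y' h1 h2]
    · simp only [F]
      rw [← Finset.sum_div, div_eq_one_iff_eq (hd i x y).ne', Finset.sum_add_distrib]
      simp [mul_comm]
  rw [directed_eq p hp hppos r hr]
  have hT : Tendsto (fun ε => ∑ x, ∑ y, p x * r x y * ((∑ i, Real.logb 2 (F ε i x y (x i))) - Real.logb 2 (p x)))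
      (nhdsWithin 0 (Set.Ioi 0)) (nhds (∑ x, ∑ y, p x * r x y * ((∑ i : Fin n, Real.logb 2
      (M w (i + 1) (i + 1) x y / M w i (i + 1) x y)) - Real.logb 2 (p x)))) := by
    refine tendsto_finsetSum _ fun x _ => tendsto_finsetSum _ fun y _ => ?_
    rcases (hw0 x y).eq_or_lt with h | h
    · have h' : p x * r x y = 0 := h.symm
      simp [h']
    · refine Tendsto.const_mul _ (Tendsto.sub_const (tendsto_finsetSum _ fun i _ => ?_) _)
      have hA := h.trans_le (M_ge w hw0 (i + 1) (i + 1) x y)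
      have hB := h.trans_le (M_ge w hw0 i (i + 1) x y)
      have hc : ContinuousAt (fun ε => Real.logb 2 (F ε i x y (x i))) 0 := by
        simp only [F, N_self, N_sum]
        have h1 : ContinuousAt (fun ε : ℝ => (M w (i + 1) (i + 1) x y + ε) /
            (M w i (i + 1) x y + ε * (Fintype.card X : ℝ))) 0 := by
          refine ContinuousAt.div (by fun_prop) (by fun_prop) (by simpa using hB.ne')
        simp only [Real.logb]
        exact (h1.log (by simpa using ⟨hA.ne', hB.ne'⟩)).div_const _
      have := (hc.tendsto).mono_left (nhdsWithin_le_nhds (s := Set.Ioi 0))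
      simpa [F, N_self, N_sum] using this
  exact le_of_tendsto hT (by filter_upwards [self_mem_nhdsWithin] with ε hε using H _ (hF ε hε))

lemma feas_iff (p : (Fin n → X) → ℝ) (hppos : ∀ x, 0 < p x)
    (d : (Fin n → X) → (Fin n → Y) → ℝ) (lam : ℝ) (g : (Fin n → X) → ℝ)
    (f : Fin n → (Fin n → X) → (Fin n → Y) → X → ℝ) :
    (Fam f ∧ ∀ x y, Real.logb 2 (p x) + g x - lam * d x y -
          (∑ i, Real.logb 2 (f i x y (x i))) ≤ 0) ↔
    ((∀ i x y a, 0 ≤ f i x y a) ∧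
      (∀ i x x' y y', (∀ j, j < i → x j = x' j) → (∀ j, j ≤ i → y j = y' j) →
          f i x y = f i x' y') ∧ (∀ i x y, ∑ a, f i x y a = 1) ∧
      ∀ x y, p x * (2 : ℝ) ^ (g x) ≤ (2 : ℝ) ^ (lam * d x y) * ∏ i, f i x y (x i)) := by
  have key : (∀ i x y a, 0 < f i x y a) → ∀ x y, (Real.logb 2 (p x) + g x - lam * d x y -
          (∑ i, Real.logb 2 (f i x y (x i))) ≤ 0 ↔
          p x * (2 : ℝ) ^ (g x) ≤ (2 : ℝ) ^ (lam * d x y) * ∏ i, f i x y (x i)) := by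
    intro hf x y
    have h2 : ∀ t : ℝ, (0:ℝ) < 2 ^ t := fun t => Real.rpow_pos_of_pos (by norm_num) t
    have hP : 0 < ∏ i, f i x y (x i) := Finset.prod_pos fun i _ => hf _ _ _ _
    rw [← Real.logb_le_logb (b := 2) (by norm_num) (mul_pos (hppos x) (h2 _)) (mul_pos (h2 _) hP),
      Real.logb_mul (hppos x).ne' (h2 _).ne', Real.logb_mul (h2 _).ne' hP.ne',
      Real.logb_rpow (by norm_num) (by norm_num), Real.logb_rpow (by norm_num) (by norm_num),
      Real.logb_prod _ _ (fun i _ => (hf _ _ _ _).ne')]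
    constructor <;> intro h <;> linarith
  constructor
  · rintro ⟨hf, hc⟩
    exact ⟨fun i x y a => (hf.pos i x y a).le, hf.causal, hf.norm,
      fun x y => (key hf.pos x y).1 (hc x y)⟩
  · rintro ⟨h0, h1, h2, h3⟩
    have hf : ∀ i x y a, 0 < f i x y a := by
      intro i x y a
      refine lt_of_le_of_ne (h0 i x y a) fun hz => ?_
      have hx : f i (Function.update x i a) y = f i x y :=
        h1 i _ _ _ _ (fun j hj => Function.update_of_ne hj.ne _ _) (fun _ _ => rfl)
      have := h3 (Function.update x i a) y
      rw [Finset.prod_eq_zero (Finset.mem_univ i) (by simp [hx, ← hz]), mul_zero] at this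
      have h4 : 0 < p (Function.update x i a) * (2:ℝ) ^ (g (Function.update x i a)) :=
        mul_pos (hppos _) (Real.rpow_pos_of_pos (by norm_num) _)
      linarith
    exact ⟨⟨hf, h1, h2⟩, fun x y => (key hf x y).2 (h3 x y)⟩

lemma exists_uniform (p : (Fin n → X) → ℝ) [Nonempty X] (ε : ℝ) :
    ∃ (g : (Fin n → X) → ℝ) (f : Fin n → (Fin n → X) → (Fin n → Y) → X → ℝ), Fam f ∧
      ∀ x y, Real.logb 2 (p x) + g x - (∑ i, Real.logb 2 (f i x y (x i))) = - ε := by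
  have hX : (0 : ℝ) < Fintype.card X := by exact_mod_cast Fintype.card_pos
  refine ⟨fun x => - ε - Real.logb 2 (p x) + ∑ i : Fin n, Real.logb 2 (1 / Fintype.card X),
    fun _ _ _ _ => 1 / Fintype.card X, ⟨fun _ _ _ _ => by positivity, fun _ _ _ _ _ _ _ => rfl,
    fun _ _ _ => by simp⟩, fun x y => by ring⟩

abbrev VV (X Y : Type) (n : ℕ) : Type :=
  ℝ × ((Fin n → X) → ℝ) × (Fin n → (Fin n → X) → (Fin n → Y) → X → ℝ)

lemma exists_max (p : (Fin n → X) → ℝ) (hp : FFRD.IsPMF p) (hppos : ∀ x, 0 < p x)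
    [Nonempty X] [Nonempty Y]
    (d : (Fin n → X) → (Fin n → Y) → ℝ) (hd : ∀ x y, 0 ≤ d x y) (D : ℝ) (hD : 0 < D)
    (r : (Fin n → X) → (Fin n → Y) → ℝ) (hr : FFRD.IsCondPMF r)
    (hrD : (∑ x, ∑ y, p x * r x y * d x y) < D) :
    ∃ (lam : ℝ) (g : (Fin n → X) → ℝ) (f : Fin n → (Fin n → X) → (Fin n → Y) → X → ℝ),
      0 ≤ lam ∧ Fam f ∧ (∀ x y, Real.logb 2 (p x) + g x - lam * d x y -
          (∑ i, Real.logb 2 (f i x y (x i))) ≤ 0) ∧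
      ∀ (lam' : ℝ) (g' : (Fin n → X) → ℝ) (f' : Fin n → (Fin n → X) → (Fin n → Y) → X → ℝ),
      0 ≤ lam' → Fam f' → (∀ x y, Real.logb 2 (p x) + g' x - lam' * d x y -
          (∑ i, Real.logb 2 (f' i x y (x i))) ≤ 0) →
        -(lam' * D) + ∑ x, p x * g' x ≤ -(lam * D) + ∑ x, p x * g x := by
  obtain ⟨g0, f0, hf0, hc0⟩ := exists_uniform (Y := Y) p 0
  set v0 := ∑ x, p x * g0 x with hv0
  let o : VV X Y n → ℝ := fun z => -(z.1 * D) + ∑ x, p x * z.2.1 x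
  have ho : Continuous o := by fun_prop
  let K : Set (VV X Y n) := {z | 0 ≤ z.1 ∧ v0 ≤ o z ∧ ((∀ i x y a, 0 ≤ z.2.2 i x y a) ∧
      (∀ i x x' y y', (∀ j, j < i → x j = x' j) → (∀ j, j ≤ i → y j = y' j) →
          z.2.2 i x y = z.2.2 i x' y') ∧ (∀ i x y, ∑ a, z.2.2 i x y a = 1) ∧
      ∀ x y, p x * (2 : ℝ) ^ (z.2.1 x) ≤ (2 : ℝ) ^ (z.1 * d x y) * ∏ i, z.2.2 i x y (x i))}
  have hK : IsClosed K := by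
    have c1 : IsClosed {z : VV X Y n | 0 ≤ z.1} := isClosed_le (by fun_prop) (by fun_prop)
    have c2 : IsClosed {z : VV X Y n | v0 ≤ o z} := isClosed_le (by fun_prop) ho
    have c3 : IsClosed {z : VV X Y n | ∀ i x y a, 0 ≤ z.2.2 i x y a} := by
      simp only [Set.ofPred_forall]
      refine isClosed_iInter fun i => isClosed_iInter fun x => isClosed_iInter fun y =>
        isClosed_iInter fun a => isClosed_le (by fun_prop) (by fun_prop)
    have c4 : IsClosed {z : VV X Y n | ∀ i x x' y y', (∀ j, j < i → x j = x' j) → (∀ j, j ≤ i → y j = y' j) →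
          z.2.2 i x y = z.2.2 i x' y'} := by
      simp only [Set.ofPred_forall]
      refine isClosed_iInter fun i => isClosed_iInter fun x => isClosed_iInter fun x' =>
        isClosed_iInter fun y => isClosed_iInter fun y' => isClosed_iInter fun _ =>
        isClosed_iInter fun _ => isClosed_eq (by fun_prop) (by fun_prop)
    have c5 : IsClosed {z : VV X Y n | ∀ i x y, ∑ a, z.2.2 i x y a = 1} := by
      simp only [Set.ofPred_forall]
      refine isClosed_iInter fun i => isClosed_iInter fun x => isClosed_iInter fun y =>
        isClosed_eq (by fun_prop) (by fun_prop)
    have c6 : IsClosed {z : VV X Y n | ∀ x y, p x * (2 : ℝ) ^ (z.2.1 x) ≤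
        (2 : ℝ) ^ (z.1 * d x y) * ∏ i, z.2.2 i x y (x i)} := by
      simp only [Set.ofPred_forall]
      refine isClosed_iInter fun x => isClosed_iInter fun y => isClosed_le ?_ ?_
      · refine continuous_const.mul (Continuous.rpow continuous_const (by fun_prop) ?_)
        intro _; left; norm_num
      · refine Continuous.mul (Continuous.rpow continuous_const (by fun_prop) ?_) (by fun_prop)
        intro _; left; norm_num
    exact c1.inter (c2.inter (c3.inter (c4.inter (c5.inter c6))))
  have hfeas : ∀ z ∈ K, Fam z.2.2 ∧ ∀ x y, Real.logb 2 (p x) + z.2.1 x - z.1 * d x y -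
          (∑ i, Real.logb 2 (z.2.2 i x y (x i))) ≤ 0 := fun z hz =>
    (feas_iff p hppos d z.1 z.2.1 z.2.2).2 hz.2.2
  set D0 := ∑ x, ∑ y, p x * r x y * d x y with hD0
  set L : ℝ := (FFRD.directedInfo p r - v0) / (D - D0) with hL
  obtain ⟨y0⟩ : Nonempty (Fin n → Y) := inferInstance
  set G : (Fin n → X) → ℝ := fun x => L * d x y0 - Real.logb 2 (p x) with hG
  set S : ℝ := ∑ x, p x * G x - v0 with hS
  have hle1 : ∀ f : Fin n → (Fin n → X) → (Fin n → Y) → X → ℝ, Fam f → ∀ i x y a, f i x y a ≤ 1 := by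
    intro f hf i x y a
    rw [← hf.norm i x y]
    exact Finset.single_le_sum (fun b _ => (hf.pos i x y b).le) (Finset.mem_univ a)
  have hsub : K ⊆ Set.Icc ((0, fun x => G x - S / p x, fun _ _ _ _ => 0) : VV X Y n)
      (L, G, fun _ _ _ _ => 1) := by
    intro z hz
    obtain ⟨hf, hc⟩ := hfeas z hz
    have hlam : z.1 ≤ L := by
      rw [hL, le_div_iff₀ (by linarith)]
      have := weak p hp hppos r hr d D z.1 z.2.1 z.2.2 hf hc
      have h2 : v0 ≤ _ := hz.2.1
      simp only [o] at h2
      linarith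
    have hg : ∀ x, z.2.1 x ≤ G x := by
      intro x
      have h1 := hc x y0
      have h2 : ∑ i, Real.logb 2 (z.2.2 i x y0 (x i)) ≤ 0 :=
        Finset.sum_nonpos fun i _ => Real.logb_nonpos (by norm_num) (hf.pos _ _ _ _).le
          (hle1 _ hf _ _ _ _)
      have h3 := mul_le_mul_of_nonneg_right hlam (hd x y0)
      simp only [hG]
      linarith
    refine ⟨⟨hz.1, fun x => ?_, fun i x y a => (hf.pos i x y a).le⟩,
      ⟨hlam, hg, fun i x y a => hle1 _ hf i x y a⟩⟩
    have h1 := Finset.single_le_sum (f := fun x => p x * (G x - z.2.1 x))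
      (fun x _ => mul_nonneg (hppos x).le (sub_nonneg.2 (hg x))) (Finset.mem_univ x)
    simp only [mul_sub, Finset.sum_sub_distrib] at h1
    have h2 : v0 ≤ _ := hz.2.1
    simp only [o] at h2
    have h3 : 0 ≤ z.1 * D := mul_nonneg hz.1 hD.le
    have h4 : G x - z.2.1 x ≤ S / p x := by
      rw [le_div_iff₀ (hppos x)]
      linarith
    change G x - S / p x ≤ z.2.1 x
    linarith
  have hKc : IsCompact K := isCompact_Icc.of_isClosed_subset hK hsub
  have hz0 : ((0, g0, f0) : VV X Y n) ∈ K := by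
    refine ⟨le_rfl, by simp [o, hv0], (feas_iff p hppos d 0 g0 f0).1 ⟨hf0, fun x y => ?_⟩⟩
    have := hc0 x y
    linarith
  obtain ⟨z, hz, hmax⟩ := hKc.exists_isMaxOn ⟨_, hz0⟩ ho.continuousOn
  obtain ⟨hf, hc⟩ := hfeas z hz
  refine ⟨z.1, z.2.1, z.2.2, hz.1, hf, hc, fun lam' g' f' hl hf' hc' => ?_⟩
  by_cases h : v0 ≤ o (lam', g', f')
  · exact hmax (show ((lam', g', f') : VV X Y n) ∈ K from
      ⟨hl, h, (feas_iff p hppos d lam' g' f').1 ⟨hf', hc'⟩⟩)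
  · exact (not_le.1 h).le.trans hz.2.1

lemma strong (p : (Fin n → X) → ℝ) (hp : FFRD.IsPMF p) (hppos : ∀ x, 0 < p x)
    [Nonempty X]
    (d : (Fin n → X) → (Fin n → Y) → ℝ) (D : ℝ) (v : ℝ)
    (hv : ∀ (lam' : ℝ) (g' : (Fin n → X) → ℝ) (f' : Fin n → (Fin n → X) → (Fin n → Y) → X → ℝ),
      0 ≤ lam' → Fam f' → (∀ x y, Real.logb 2 (p x) + g' x - lam' * d x y -
          (∑ i, Real.logb 2 (f' i x y (x i))) ≤ 0) →
        -(lam' * D) + ∑ x, p x * g' x ≤ v) :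
    ∃ r : (Fin n → X) → (Fin n → Y) → ℝ, FFRD.IsCondPMF r ∧
      (∑ x, ∑ y, p x * r x y * d x y) ≤ D ∧ FFRD.directedInfo p r ≤ v := by
  classical
  obtain ⟨g0, f0, hf0, hc0⟩ := exists_uniform (Y := Y) p 1
  let S : Set (VV X Y n) := {z | 0 ≤ z.1 ∧ Fam z.2.2}
  have hSc : Convex ℝ S := by
    rintro z ⟨hz, hzf⟩ z' ⟨hz', hzf'⟩ a b ha hb hab
    refine ⟨add_nonneg (mul_nonneg ha hz) (mul_nonneg hb hz'), ⟨fun i x y t => ?_,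
      fun i x x' y y' h1 h2 => ?_, fun i x y => ?_⟩⟩
    · exact (convex_Ioi (0 : ℝ)) (hzf.pos i x y t) (hzf'.pos i x y t) ha hb hab
    · funext t
      change a * z.2.2 i x y t + b * z'.2.2 i x y t = a * z.2.2 i x' y' t + b * z'.2.2 i x' y' t
      rw [hzf.causal i x x' y y' h1 h2, hzf'.causal i x x' y y' h1 h2]
    · change ∑ t, (a * z.2.2 i x y t + b * z'.2.2 i x y t) = 1
      rw [Finset.sum_add_distrib, ← Finset.mul_sum, ← Finset.mul_sum, hzf.norm, hzf'.norm]
      linarith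
  let o : VV X Y n → ℝ := fun z => -(z.1 * D) + ∑ x, p x * z.2.1 x
  let c : (Fin n → X) × (Fin n → Y) → VV X Y n → ℝ := fun ω z =>
    Real.logb 2 (p ω.1) + z.2.1 ω.1 - z.1 * d ω.1 ω.2 -
          (∑ i, Real.logb 2 (z.2.2 i ω.1 ω.2 (ω.1 i)))
  have ho : ConcaveOn ℝ S o := by
    refine ⟨hSc, fun z _ z' _ a b ha hb hab => le_of_eq ?_⟩
    change a * (-(z.1 * D) + ∑ x, p x * z.2.1 x) + b * (-(z'.1 * D) + ∑ x, p x * z'.2.1 x) =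
      -((a * z.1 + b * z'.1) * D) + ∑ x, p x * (a * z.2.1 x + b * z'.2.1 x)
    have : ∑ x, p x * (a * z.2.1 x + b * z'.2.1 x) =
        a * ∑ x, p x * z.2.1 x + b * ∑ x, p x * z'.2.1 x := by
      rw [Finset.mul_sum, Finset.mul_sum, ← Finset.sum_add_distrib]
      exact Finset.sum_congr rfl fun x _ => by ring
    rw [this]; ring
  have hlog : ∀ s t a b : ℝ, 0 < s → 0 < t → 0 ≤ a → 0 ≤ b → a + b = 1 →
      a * Real.logb 2 s + b * Real.logb 2 t ≤ Real.logb 2 (a * s + b * t) := by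
    intro s t a b hs ht ha hb hab
    have h := strictConcaveOn_log_Ioi.concaveOn.2 hs ht ha hb hab
    simp only [smul_eq_mul] at h
    have hl2 : 0 < Real.log 2 := Real.log_pos (by norm_num)
    simp only [Real.logb]
    rw [← mul_div_assoc, ← mul_div_assoc, ← add_div]
    exact div_le_div_of_nonneg_right h hl2.le
  have hc : ∀ ω, ConvexOn ℝ S (c ω) := by
    rintro ⟨x, y⟩
    refine ⟨hSc, fun z hz z' hz' a b ha hb hab => ?_⟩
    change Real.logb 2 (p x) + (a * z.2.1 x + b * z'.2.1 x) - (a * z.1 + b * z'.1) * d x y -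
          (∑ i, Real.logb 2 (a * z.2.2 i x y (x i) + b * z'.2.2 i x y (x i))) ≤
      a * (Real.logb 2 (p x) + z.2.1 x - z.1 * d x y - (∑ i, Real.logb 2 (z.2.2 i x y (x i)))) +
      b * (Real.logb 2 (p x) + z'.2.1 x - z'.1 * d x y - (∑ i, Real.logb 2 (z'.2.2 i x y (x i))))
    have h1 : a * (∑ i, Real.logb 2 (z.2.2 i x y (x i))) + b * (∑ i, Real.logb 2 (z'.2.2 i x y (x i)))
        ≤ ∑ i, Real.logb 2 (a * z.2.2 i x y (x i) + b * z'.2.2 i x y (x i)) := by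
      rw [Finset.mul_sum, Finset.mul_sum, ← Finset.sum_add_distrib]
      exact Finset.sum_le_sum fun i _ => hlog _ _ a b (hz.2.pos _ _ _ _) (hz'.2.pos _ _ _ _) ha hb hab
    have h2 : Real.logb 2 (p x) = a * Real.logb 2 (p x) + b * Real.logb 2 (p x) := by
      rw [← add_mul, hab, one_mul]
    linarith
  obtain ⟨m, hm, H⟩ := lagrange S o c ho hc
    ⟨(0, g0, f0), ⟨le_rfl, hf0⟩, fun ω => by
      have := hc0 ω.1 ω.2
      simp only [c]
      linarith⟩ v
    (fun z hz h => hv z.1 z.2.1 z.2.2 hz.1 hz.2 (fun x y => h (x, y)))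
  have H' : ∀ (lam : ℝ) (g : (Fin n → X) → ℝ) (f : Fin n → (Fin n → X) → (Fin n → Y) → X → ℝ),
      0 ≤ lam → Fam f → lam * ((∑ x, ∑ y, m (x, y) * d x y) - D) +
        ∑ x, (p x - ∑ y, m (x, y)) * g x +
        ∑ x, ∑ y, m (x, y) * ((∑ i, Real.logb 2 (f i x y (x i))) - Real.logb 2 (p x)) ≤ v := by
    intro lam g f hl hf
    have h := H (lam, g, f) ⟨hl, hf⟩
    simp only [o, c, Fintype.sum_prod_type] at h
    refine le_trans (le_of_eq ?_) h
    have e1 : ∑ x, ∑ y, m (x, y) * (Real.logb 2 (p x) + g x - lam * d x y -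
        ∑ i, Real.logb 2 (f i x y (x i))) = ∑ x, (∑ y, m (x, y)) * g x -
        lam * (∑ x, ∑ y, m (x, y) * d x y) -
        ∑ x, ∑ y, m (x, y) * ((∑ i, Real.logb 2 (f i x y (x i))) - Real.logb 2 (p x)) := by
      simp only [Finset.mul_sum, Finset.sum_mul, ← Finset.sum_sub_distrib]
      refine Finset.sum_congr rfl fun x _ => Finset.sum_congr rfl fun y _ => ?_
      ring
    rw [e1]
    simp only [sub_mul, Finset.sum_sub_distrib]
    ring
  have lin : ∀ a b : ℝ, (∀ t : ℝ, 0 ≤ t → t * a + b ≤ v) → a ≤ 0 := by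
    intro a b h
    by_contra ha
    push Not at ha
    have := h ((|v - b| + 1) / a) (by positivity)
    rw [div_mul_cancel₀ _ ha.ne'] at this
    have := le_abs_self (v - b)
    linarith
  have hlamD : (∑ x, ∑ y, m (x, y) * d x y) ≤ D := by
    have := lin _ _ (fun t ht => by
      have := H' t 0 f0 ht hf0
      rw [add_assoc] at this
      exact this)
    linarith
  have hmp : ∀ x, ∑ y, m (x, y) = p x := by
    intro x
    have hs : ∀ t : ℝ, ∑ x', (p x' - ∑ y, m (x', y)) * (Pi.single x t : (Fin n → X) → ℝ) x' =
        t * (p x - ∑ y, m (x, y)) := by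
      intro t
      rw [Finset.sum_eq_single x]
      · simp [mul_comm]
      · intro b _ hb; simp [hb]
      · simp
    have h1 := lin (p x - ∑ y, m (x, y)) _ (fun t ht => by
      have := H' 0 (Pi.single x t) f0 le_rfl hf0
      rw [hs, zero_mul, zero_add] at this
      exact this)
    have h2 := lin (-(p x - ∑ y, m (x, y))) _ (fun t ht => by
      have := H' 0 (Pi.single x (-t)) f0 le_rfl hf0
      rw [hs, zero_mul, zero_add, neg_mul, ← mul_neg] at this
      exact this)
    linarith
  have hpr : ∀ x y, p x * (m (x, y) / p x) = m (x, y) := fun x y => by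
    rw [mul_div_cancel₀ _ (hppos x).ne']
  have hr : FFRD.IsCondPMF (fun x y => m (x, y) / p x) :=
    ⟨fun x y => div_nonneg (hm _) (hppos x).le, fun x => by
      rw [← Finset.sum_div, hmp, div_self (hppos x).ne']⟩
  refine ⟨fun x y => m (x, y) / p x, hr, by simpa only [hpr] using hlamD,
    recover p hp hppos _ hr v fun f hf => ?_⟩
  simp only [hpr]
  simpa using H' 0 0 f le_rfl hf

end

end GPF


open FFRD in
/-- Theorem 3, geometric programming form: `Rₙ(D)` equals the maximum of
`(1/n)(−λD + Σ_{xⁿ} p(xⁿ) log₂ γ(xⁿ))` over `λ ≥ 0`, `γ > 0` and strictly positive causal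
families `p′_i(x_i|x^{i−1},x̂^i)`, subject to the log-form constraint and normalization. -/
theorem Rn_geometric_programming_form
    {X Y : Type} [Fintype X] [DecidableEq X] [Fintype Y] [DecidableEq Y]
    (n : ℕ) (hn : 1 ≤ n)
    (p : (Fin n → X) → ℝ) (hp : IsPMF p) (hppos : ∀ x, 0 < p x)
    (d : (Fin n → X) → (Fin n → Y) → ℝ) (hd : ∀ x y, 0 ≤ d x y)
    (D : ℝ) (hD : 0 < D)
    (hfeas : ∃ r : (Fin n → X) → (Fin n → Y) → ℝ, IsCondPMF r ∧
      (∑ x, ∑ y, p x * r x y * d x y) < D) :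
    IsGreatest
      {v : ℝ | ∃ (lam : ℝ) (γ : (Fin n → X) → ℝ)
        (f : Fin n → (Fin n → X) → (Fin n → Y) → X → ℝ),
        0 ≤ lam ∧ (∀ x, 0 < γ x) ∧
        (∀ i x y a, 0 < f i x y a) ∧
        (∀ i x x' y y', (∀ j, j < i → x j = x' j) → (∀ j, j ≤ i → y j = y' j) →
          f i x y = f i x' y') ∧
        (∀ i x y, ∑ a, f i x y a = 1) ∧
        (∀ x y, Real.logb 2 (p x) + Real.logb 2 (γ x) - lam * d x y -
          (∑ i, Real.logb 2 (f i x y (x i))) ≤ 0) ∧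
        v = (1 / (n : ℝ)) * (-(lam * D) + ∑ x, p x * Real.logb 2 (γ x))}
      (Rn n p d D) := by
  obtain ⟨r, hr, hrD⟩ := hfeas
  have i1 : Nonempty (Fin n → X) := by
    by_contra h
    rw [not_nonempty_iff] at h
    have := hp.2
    simp at this
  obtain ⟨x0⟩ := i1
  have i2 : Nonempty (Fin n → Y) := by
    by_contra h
    rw [not_nonempty_iff] at h
    have := hr.2 x0
    simp at this
  obtain ⟨y0⟩ := i2
  have j1 : Nonempty X := ⟨x0 ⟨0, hn⟩⟩
  have j2 : Nonempty Y := ⟨y0 ⟨0, hn⟩⟩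
  have hn0 : (0 : ℝ) ≤ 1 / (n : ℝ) := by positivity
  obtain ⟨lam, g, f, hl, hf, hc, hmax⟩ := GPF.exists_max p hp hppos d hd D hD r hr hrD
  obtain ⟨r', hr', hrD', hI⟩ := GPF.strong p hp hppos d D _ hmax
  have hweak : ∀ r : (Fin n → X) → (Fin n → Y) → ℝ, IsCondPMF r →
      (∑ x, ∑ y, p x * r x y * d x y) ≤ D →
      -(lam * D) + ∑ x, p x * g x ≤ directedInfo p r := by
    intro r hr h
    have h1 := GPF.weak p hp hppos r hr d D lam g f hf hc
    have h2 := mul_nonpos_of_nonneg_of_nonpos hl (sub_nonpos.2 h)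
    linarith
  have hR : Rn n p d D = (1 / (n : ℝ)) * (-(lam * D) + ∑ x, p x * g x) := by
    unfold Rn
    congr 1
    refine IsLeast.csInf_eq ⟨⟨r', hr', hrD', le_antisymm (hweak r' hr' hrD') hI⟩, ?_⟩
    rintro v ⟨r, hr, h, rfl⟩
    exact hweak r hr h
  have hg2 : ∀ x, Real.logb 2 ((2 : ℝ) ^ (g x)) = g x := fun x =>
    Real.logb_rpow (by norm_num) (by norm_num)
  rw [hR]
  constructor
  · refine ⟨lam, fun x => (2 : ℝ) ^ (g x), f, hl, fun x => Real.rpow_pos_of_pos (by norm_num) _,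
      hf.pos, hf.causal, hf.norm, ?_, ?_⟩
    · simpa only [hg2] using hc
    · simp only [hg2]
  · rintro v ⟨lam', γ, f', hl', hγ, h1, h2, h3, h4, rfl⟩
    exact mul_le_mul_of_nonneg_left
      (hmax lam' (fun x => Real.logb 2 (γ x)) f' hl' ⟨h1, h2, h3⟩ h4) hn0
end
end

section
/- Fix a pmf p on 𝒳ⁿ with p(xⁿ) > 0 for all xⁿ, λ ≥ 0, a distortion function d: 𝒳ⁿ×𝒳̂ⁿ→[0,∞), and a strictly positive causal conditioning pmf q. Define r*(x̂ⁿ|xⁿ) = q(x̂ⁿ||x^{n−1})·2^{−λ d(xⁿ,x̂ⁿ)} / Σ_{x̂ⁿ} q(x̂ⁿ||x^{n−1})·2^{−λ d(xⁿ,x̂ⁿ)}. Then r* minimizes K(r,q) = I_FF(r,q) + λ·Σ_{xⁿ,x̂ⁿ} p(xⁿ)r(x̂ⁿ|xⁿ)d(xⁿ,x̂ⁿ) over all conditional pmfs r on 𝒳̂ⁿ given 𝒳ⁿ: K(r,q) ≥ K(r*,q) for every conditional pmf r. -/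
open scoped BigOperators
open Filter

noncomputable section

namespace FFRD

/-- `q` is a causal conditioning pmf `q(x̂ⁿ‖x^{n−1}) = ∏ᵢ qᵢ(x̂ᵢ | x̂^{i−1}, x^{i−1})`,
where each factor is a pmf on `Y` depending only on the strict pasts of `x` and `y`. -/
def IsCausalCondKernel {X Y : Type} [Fintype X] [Fintype Y] {n : ℕ}
    (q : (Fin n → X) → (Fin n → Y) → ℝ) : Prop :=
  ∃ qi : Fin n → (Fin n → X) → (Fin n → Y) → Y → ℝ,
    (∀ i x y, (∀ b, 0 ≤ qi i x y b) ∧ ∑ b, qi i x y b = 1) ∧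
    (∀ i x x' y y', (∀ j, j < i → x j = x' j) → (∀ j, j < i → y j = y' j) →
      qi i x y = qi i x' y') ∧
    (∀ x y, q x y = ∏ i, qi i x y (y i))

/-- `I_FF(r, q) = Σ_{xⁿ,x̂ⁿ} p(xⁿ) r(x̂ⁿ|xⁿ) log₂ ( r(x̂ⁿ|xⁿ) / q(x̂ⁿ‖x^{n−1}) )`. -/
def IFF {X Y : Type} [Fintype X] [Fintype Y] {n : ℕ} (p : (Fin n → X) → ℝ)
    (r q : (Fin n → X) → (Fin n → Y) → ℝ) : ℝ :=
  ∑ x, ∑ y, p x * r x y * Real.logb 2 (r x y / q x y)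

end FFRD

open FFRD in
/-- Lemma 10: for fixed strictly positive causal conditioning `q`, the
conditional pmf `r*(x̂ⁿ|xⁿ) ∝ q(x̂ⁿ‖x^{n−1})·2^{−λd(xⁿ,x̂ⁿ)}` minimizes
`K(r,q) = I_FF(r,q) + λ·E_r[d]` over conditional pmfs `r`. -/
theorem exponential_tilt_minimizes_K
    {X Y : Type} [Fintype X] [DecidableEq X] [Fintype Y] [DecidableEq Y]
    (n : ℕ)
    (p : (Fin n → X) → ℝ) (hp : IsPMF p) (hppos : ∀ x, 0 < p x)
    (lam : ℝ) (hlam : 0 ≤ lam)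
    (d : (Fin n → X) → (Fin n → Y) → ℝ) (hd : ∀ x y, 0 ≤ d x y)
    (q : (Fin n → X) → (Fin n → Y) → ℝ) (hq : IsCausalCondKernel q)
    (hqpos : ∀ x y, 0 < q x y)
    (rstar : (Fin n → X) → (Fin n → Y) → ℝ)
    (hrstar : ∀ x y, rstar x y =
      q x y * 2 ^ (-(lam * d x y)) / ∑ y', q x y' * 2 ^ (-(lam * d x y'))) :
    ∀ r : (Fin n → X) → (Fin n → Y) → ℝ, IsCondPMF r →
      IFF p rstar q + lam * (∑ x, ∑ y, p x * rstar x y * d x y) ≤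
      IFF p r q + lam * (∑ x, ∑ y, p x * r x y * d x y) := by
  intro r hr
  have hl2 : (0:ℝ) < Real.log 2 := Real.log_pos (by norm_num)
  have key : ∀ x, ∑ y, (rstar x y * Real.logb 2 (rstar x y / q x y) + lam * (rstar x y * d x y)) ≤
      ∑ y, (r x y * Real.logb 2 (r x y / q x y) + lam * (r x y * d x y)) := by
    intro x
    have hne : Nonempty (Fin n → Y) := by
      by_contra h
      rw [not_nonempty_iff] at h
      have := hr.2 x
      simp at this
    obtain ⟨Z, hZ⟩ : ∃ Z, Z = ∑ y', q x y' * (2:ℝ) ^ (-(lam * d x y')) := ⟨_, rfl⟩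
    have hZpos : 0 < Z := by
      rw [hZ]
      exact Finset.sum_pos (fun y _ => mul_pos (hqpos x y) (Real.rpow_pos_of_pos (by norm_num) _))
        Finset.univ_nonempty
    have hs : ∀ y, rstar x y = q x y * (2:ℝ) ^ (-(lam * d x y)) / Z := by
      intro y
      rw [hrstar, hZ]
    have hspos : ∀ y, 0 < rstar x y := by
      intro y
      rw [hs]
      exact div_pos (mul_pos (hqpos x y) (Real.rpow_pos_of_pos (by norm_num) _)) hZpos
    have hssum : ∑ y, rstar x y = 1 := by
      simp_rw [hs]
      rw [← Finset.sum_div, ← hZ, div_self hZpos.ne']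
    have hlog : ∀ y, Real.log (rstar x y) =
        Real.log (q x y) - lam * d x y * Real.log 2 - Real.log Z := by
      intro y
      have h2 : (2:ℝ) ^ (-(lam * d x y)) ≠ 0 := (Real.rpow_pos_of_pos (by norm_num) _).ne'
      rw [hs, Real.log_div (mul_ne_zero (hqpos x y).ne' h2) hZpos.ne',
        Real.log_mul (hqpos x y).ne' h2, Real.log_rpow (by norm_num)]
      ring
    have e1 : ∑ y, (rstar x y * Real.logb 2 (rstar x y / q x y) + lam * (rstar x y * d x y))
        = - Real.log Z / Real.log 2 := by
      have : ∀ y, rstar x y * Real.logb 2 (rstar x y / q x y) + lam * (rstar x y * d x y)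
          = rstar x y * (- Real.log Z / Real.log 2) := by
        intro y
        rw [Real.logb, Real.log_div (hspos y).ne' (hqpos x y).ne', hlog]
        field_simp
        ring
      rw [Finset.sum_congr rfl (fun y _ => this y), ← Finset.sum_mul, hssum, one_mul]
    have e2 : ∑ y, (r x y * (- Real.log Z / Real.log 2) + (r x y - rstar x y) / Real.log 2)
        = - Real.log Z / Real.log 2 := by
      rw [Finset.sum_add_distrib, ← Finset.sum_mul, ← Finset.sum_div, Finset.sum_sub_distrib,
        hssum, hr.2 x]
      simp
    rw [e1, ← e2]
    refine Finset.sum_le_sum fun y _ => ?_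
    rcases (hr.1 x y).eq_or_lt with h0 | h0
    · rw [← h0]
      have := div_pos (hspos y) hl2
      have h3 : (0 - rstar x y) / Real.log 2 = - (rstar x y / Real.log 2) := by ring
      rw [h3]
      simp only [zero_mul, mul_zero, add_zero, zero_add]
      linarith
    · have h1 := Real.log_le_sub_one_of_pos (div_pos (hspos y) h0)
      rw [Real.log_div (hspos y).ne' h0.ne', hlog] at h1
      have h4 := mul_le_mul_of_nonneg_left h1 h0.le
      have h5 : r x y * (rstar x y / r x y - 1) = rstar x y - r x y := by
        field_simp
      rw [h5] at h4
      rw [Real.logb, Real.log_div h0.ne' (hqpos x y).ne']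
      have h6 : r x y * (- Real.log Z / Real.log 2) + (r x y - rstar x y) / Real.log 2
        = (r x y * (- Real.log Z) + (r x y - rstar x y)) / Real.log 2 := by ring
      have h7 : r x y * ((Real.log (r x y) - Real.log (q x y)) / Real.log 2)
          + lam * (r x y * d x y)
        = (r x y * (Real.log (r x y) - Real.log (q x y))
          + lam * (r x y * d x y) * Real.log 2) / Real.log 2 := by
        field_simp
      rw [h6, h7]
      apply div_le_div_of_nonneg_right _ hl2.le
      linarith
  have K : ∀ s : (Fin n → X) → (Fin n → Y) → ℝ,
      IFF p s q + lam * (∑ x, ∑ y, p x * s x y * d x y) =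
      ∑ x, p x * ∑ y, (s x y * Real.logb 2 (s x y / q x y) + lam * (s x y * d x y)) := by
    intro s
    unfold IFF
    simp only [Finset.mul_sum, ← Finset.sum_add_distrib]
    refine Finset.sum_congr rfl fun x _ => Finset.sum_congr rfl fun y _ => ?_
    ring
  rw [K, K]
  exact Finset.sum_le_sum fun x _ => mul_le_mul_of_nonneg_left (key x) (hppos x).le
end
end

section
/- Fix a pmf p on 𝒳ⁿ with p(xⁿ) > 0 for all xⁿ, λ ≥ 0, a distortion function d: 𝒳ⁿ×𝒳̂ⁿ→[0,∞), and consider the Blahut–Arimoto-type iteration: starting from a strictly positive causal conditioning pmf q⁰, for k ≥ 1 set r^k(x̂ⁿ|xⁿ) = q^{k−1}(x̂ⁿ||x^{n−1})2^{−λd(xⁿ,x̂ⁿ)} / Σ_{x̂ⁿ} q^{k−1}(x̂ⁿ||x^{n−1})2^{−λd(xⁿ,x̂ⁿ)} and let q^k be the causal conditioning pmf induced by the joint p·r^k. Then with K(r,q) = I_FF(r,q) + λ·Σ_{xⁿ,x̂ⁿ} p(xⁿ)r(x̂ⁿ|xⁿ)d(xⁿ,x̂ⁿ), one has K(r^k,q^k)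 ≥ K(r^{k+1},q^{k+1}) for all k ≥ 1, and the inequality is strict unless r^k = r^{k+1} and q^k = q^{k+1}. -/
open scoped BigOperators
open Filter

noncomputable section

namespace FFRD

theorem aux_inner {α : Type} [Fintype α] (E F : α → α → Prop) [DecidableRel E] [DecidableRel F]
    (hEr : ∀ a, E a a) (hEs : ∀ a b, E a b → E b a) (hEt : ∀ a b c, E a b → E b c → E a c)
    (hFt : ∀ a b c, F a b → F b c → F a c)
    (hEF : ∀ a b, E a b → F a b)
    (w v : α → ℝ) (hw : ∀ a, 0 < w a) (u : α) :
    ∑ z, (if F z u then w z * (∑ t, if E t z then v t else 0) / (∑ t, if E t z then w t else 0)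
      else 0) = ∑ t, if F t u then v t else 0 := by
  have hN : ∀ z, 0 < ∑ t, (if E t z then w t else 0) := by
    intro z
    apply Finset.sum_pos'
    · intro i _; split_ifs; exacts [(hw i).le, le_rfl]
    · exact ⟨z, Finset.mem_univ _, by simp [hEr z, hw z]⟩
  have hinv : ∀ a b, E a b → (∑ t, (if E t a then w t else 0)) = ∑ t, if E t b then w t else 0 := by
    intro a b hab
    refine Finset.sum_congr rfl fun t _ => ?_
    have : E t a ↔ E t b := ⟨fun h => hEt _ _ _ h hab, fun h => hEt _ _ _ h (hEs _ _ hab)⟩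
    simp [this]
  have h1 : ∀ z, (if F z u then w z * (∑ t, if E t z then v t else 0) /
      (∑ t, if E t z then w t else 0) else 0)
      = ∑ t, (if F t u then v t else 0) * ((if E z t then w z else 0) /
        (∑ s, if E s t then w s else 0)) := by
    intro z
    by_cases hz : F z u
    · rw [if_pos hz, Finset.mul_sum, Finset.sum_div]
      refine Finset.sum_congr rfl fun t _ => ?_
      by_cases ht : E t z
      · have h2 : E z t := hEs _ _ ht
        have h3 : F t u := hFt _ _ _ (hEF _ _ ht) hz
        rw [if_pos ht, if_pos h2, if_pos h3, hinv z t h2]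
        ring
      · have h2 : ¬ E z t := fun h => ht (hEs _ _ h)
        simp [ht, h2]
    · rw [if_neg hz]
      symm
      refine Finset.sum_eq_zero fun t _ => ?_
      by_cases ht : E z t
      · have h3 : ¬ F t u := fun h => hz (hFt _ _ _ (hEF _ _ ht) h)
        simp [h3]
      · simp [ht]
  simp_rw [h1]
  rw [Finset.sum_comm]
  refine Finset.sum_congr rfl fun t _ => ?_
  rw [← Finset.mul_sum, ← Finset.sum_div, div_self (hN t).ne', mul_one]

theorem aux_cond {α : Type} [Fintype α] (E F : α → α → Prop) [DecidableRel E] [DecidableRel F]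
    (hEr : ∀ a, E a a) (hEs : ∀ a b, E a b → E b a) (hEt : ∀ a b c, E a b → E b c → E a c)
    (hFr : ∀ a, F a a) (hFs : ∀ a b, F a b → F b a) (hFt : ∀ a b c, F a b → F b c → F a c)
    (hEF : ∀ a b, E a b → F a b)
    (w v : α → ℝ) (hw : ∀ a, 0 < w a) (hv : ∀ a, 0 < v a) :
    0 ≤ ∑ z, w z * (Real.log ((∑ t, if E t z then w t else 0) / (∑ t, if F t z then w t else 0))
      - Real.log ((∑ t, if E t z then v t else 0) / (∑ t, if F t z then v t else 0))) := by
  have pos : ∀ (R : α → α → Prop) [DecidableRel R], (∀ a, R a a) → ∀ (g : α → ℝ), (∀ a, 0 < g a) →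
      ∀ z, 0 < ∑ t, (if R t z then g t else 0) := by
    intro R _ hR g hg z
    apply Finset.sum_pos'
    · intro i _; split_ifs; exacts [(hg i).le, le_rfl]
    · exact ⟨z, Finset.mem_univ _, by simp [hR z, hg z]⟩
  set N' : α → ℝ := fun z => ∑ t, if E t z then w t else 0 with hN'
  set M' : α → ℝ := fun z => ∑ t, if F t z then w t else 0 with hM'
  set N : α → ℝ := fun z => ∑ t, if E t z then v t else 0 with hN
  set M : α → ℝ := fun z => ∑ t, if F t z then v t else 0 with hM
  have pN' : ∀ z, 0 < N' z := pos E hEr w hw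
  have pM' : ∀ z, 0 < M' z := pos F hFr w hw
  have pN : ∀ z, 0 < N z := pos E hEr v hv
  have pM : ∀ z, 0 < M z := pos F hFr v hv
  have hMinv : ∀ a b, F a b → M a = M b := by
    intro a b hab
    refine Finset.sum_congr rfl fun t _ => ?_
    have : F t a ↔ F t b := ⟨fun h => hFt _ _ _ h hab, fun h => hFt _ _ _ h (hFs _ _ hab)⟩
    simp [this]
  have key : ∑ z, w z * ((N z / M z) / (N' z / M' z)) = ∑ z, w z := by
    have h1 : ∀ z, w z * ((N z / M z) / (N' z / M' z))
        = ∑ u, w u / M u * (if F z u then w z * N z / N' z else 0) := by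
      intro z
      have : w z * ((N z / M z) / (N' z / M' z)) = M' z * (w z * N z / N' z / M z) := by
        have := (pN' z).ne'; have := (pM' z).ne'; have := (pM z).ne'
        field_simp
      rw [this]
      simp only [hM']
      rw [Finset.sum_mul]
      refine Finset.sum_congr rfl fun u _ => ?_
      by_cases h : F u z
      · rw [if_pos h, if_pos (hFs _ _ h), hMinv u z h]; ring
      · have h2 : ¬ F z u := fun h' => h (hFs _ _ h')
        simp [h, h2]
    simp_rw [h1]
    rw [Finset.sum_comm]
    refine Finset.sum_congr rfl fun u _ => ?_
    rw [← Finset.mul_sum, aux_inner E F hEr hEs hEt hFt hEF w v hw u]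
    exact div_mul_cancel₀ _ (pM u).ne'
  have hle : ∑ z, (w z - w z * ((N z / M z) / (N' z / M' z)))
      ≤ ∑ z, w z * (Real.log (N' z / M' z) - Real.log (N z / M z)) := by
    refine Finset.sum_le_sum fun z _ => ?_
    have a1 : 0 < N z / M z := div_pos (pN z) (pM z)
    have a2 : 0 < N' z / M' z := div_pos (pN' z) (pM' z)
    have h := Real.log_le_sub_one_of_pos (div_pos a1 a2)
    rw [Real.log_div a1.ne' a2.ne'] at h
    nlinarith [hw z]
  rw [Finset.sum_sub_distrib, key, sub_self] at hle
  exact hle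

section
variable {X Y : Type} [Fintype X] [DecidableEq X] [Fintype Y] [DecidableEq Y] {n : ℕ}

theorem aux_sum_pos (p : (Fin n → X) → ℝ) (hp : ∀ x, 0 < p x)
    (r : (Fin n → X) → (Fin n → Y) → ℝ) (hr : ∀ x y, 0 < r x y)
    (P : (Fin n → X) → (Fin n → Y) → Prop) [∀ a b, Decidable (P a b)]
    (x : Fin n → X) (y : Fin n → Y) (h : P x y) :
    0 < ∑ x', ∑ y', if P x' y' then p x' * r x' y' else 0 := by
  have h0 : ∀ x' y', 0 ≤ if P x' y' then p x' * r x' y' else 0 := by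
    intro a b; split_ifs; exacts [(mul_pos (hp a) (hr a b)).le, le_rfl]
  refine Finset.sum_pos' (fun a _ => Finset.sum_nonneg fun b _ => h0 a b)
    ⟨x, Finset.mem_univ _, Finset.sum_pos' (fun b _ => h0 x b) ⟨y, Finset.mem_univ _, ?_⟩⟩
  rw [if_pos h]; exact mul_pos (hp x) (hr x y)

theorem aux_cc_pos (p : (Fin n → X) → ℝ) (hp : ∀ x, 0 < p x)
    (r : (Fin n → X) → (Fin n → Y) → ℝ) (hr : ∀ x y, 0 < r x y) (x : Fin n → X) (y : Fin n → Y) :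
    0 < causalCond p r x y := by
  unfold causalCond
  refine Finset.prod_pos fun i _ => div_pos ?_ ?_
  · exact aux_sum_pos p hp r hr
      (fun x' y' => (∀ j, j < i → x' j = x j) ∧ (∀ j, j ≤ i → y' j = y j)) x y (by simp)
  · exact aux_sum_pos p hp r hr
      (fun x' y' => (∀ j, j < i → x' j = x j) ∧ (∀ j, j < i → y' j = y j)) x y (by simp)

theorem aux_q (p : (Fin n → X) → ℝ) (hp : ∀ x, 0 < p x)
    (r r' : (Fin n → X) → (Fin n → Y) → ℝ) (hr : ∀ x y, 0 < r x y) (hr' : ∀ x y, 0 < r' x y) :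
    0 ≤ ∑ x, ∑ y, p x * r' x y *
      (Real.log (causalCond p r' x y) - Real.log (causalCond p r x y)) := by
  have hlog : ∀ (s : (Fin n → X) → (Fin n → Y) → ℝ), (∀ x y, 0 < s x y) → ∀ x y,
      Real.log (causalCond p s x y) = ∑ i : Fin n, Real.log
    ((∑ x' : Fin n → X, ∑ y' : Fin n → Y,
        if (∀ j, j < i → x' j = x j) ∧ (∀ j, j ≤ i → y' j = y j)
        then p x' * s x' y' else 0) /
      (∑ x' : Fin n → X, ∑ y' : Fin n → Y,
        if (∀ j, j < i → x' j = x j) ∧ (∀ j, j < i → y' j = y j)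
        then p x' * s x' y' else 0)) := by
    intro s hs x y
    unfold causalCond
    refine Real.log_prod fun i _ => (div_pos ?_ ?_).ne'
    · exact aux_sum_pos p hp s hs
        (fun x' y' => (∀ j, j < i → x' j = x j) ∧ (∀ j, j ≤ i → y' j = y j)) x y (by simp)
    · exact aux_sum_pos p hp s hs
        (fun x' y' => (∀ j, j < i → x' j = x j) ∧ (∀ j, j < i → y' j = y j)) x y (by simp)
  simp_rw [hlog r hr, hlog r' hr', ← Finset.sum_sub_distrib, Finset.mul_sum]
  rw [← Fintype.sum_prod_type'
    (f := fun x y => ∑ i : Fin n, p x * r' x y * (Real.log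
    ((∑ x' : Fin n → X, ∑ y' : Fin n → Y,
        if (∀ j, j < i → x' j = x j) ∧ (∀ j, j ≤ i → y' j = y j)
        then p x' * r' x' y' else 0) /
      (∑ x' : Fin n → X, ∑ y' : Fin n → Y,
        if (∀ j, j < i → x' j = x j) ∧ (∀ j, j < i → y' j = y j)
        then p x' * r' x' y' else 0)) - Real.log
    ((∑ x' : Fin n → X, ∑ y' : Fin n → Y,
        if (∀ j, j < i → x' j = x j) ∧ (∀ j, j ≤ i → y' j = y j)
        then p x' * r x' y' else 0) /
      (∑ x' : Fin n → X, ∑ y' : Fin n → Y,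
        if (∀ j, j < i → x' j = x j) ∧ (∀ j, j < i → y' j = y j)
        then p x' * r x' y' else 0)))), Finset.sum_comm]
  refine Finset.sum_nonneg fun i _ => ?_
  have := aux_cond (α := (Fin n → X) × (Fin n → Y))
    (fun a b => (∀ j, j < i → a.1 j = b.1 j) ∧ (∀ j, j ≤ i → a.2 j = b.2 j))
    (fun a b => (∀ j, j < i → a.1 j = b.1 j) ∧ (∀ j, j < i → a.2 j = b.2 j))
    (fun a => ⟨fun _ _ => rfl, fun _ _ => rfl⟩)
    (fun a b h => ⟨fun j hj => (h.1 j hj).symm, fun j hj => (h.2 j hj).symm⟩)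
    (fun a b c h k => ⟨fun j hj => (h.1 j hj).trans (k.1 j hj),
      fun j hj => (h.2 j hj).trans (k.2 j hj)⟩)
    (fun a => ⟨fun _ _ => rfl, fun _ _ => rfl⟩)
    (fun a b h => ⟨fun j hj => (h.1 j hj).symm, fun j hj => (h.2 j hj).symm⟩)
    (fun a b c h k => ⟨fun j hj => (h.1 j hj).trans (k.1 j hj),
      fun j hj => (h.2 j hj).trans (k.2 j hj)⟩)
    (fun a b h => ⟨h.1, fun j hj => h.2 j hj.le⟩)
    (fun z => p z.1 * r' z.1 z.2) (fun z => p z.1 * r z.1 z.2)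
    (fun z => mul_pos (hp _) (hr' _ _)) (fun z => mul_pos (hp _) (hr _ _))
  simpa only [Fintype.sum_prod_type] using this

theorem aux_kl_pt (a b : ℝ) (ha : 0 < a) (hb : 0 < b) :
    0 ≤ a * (Real.log a - Real.log b) - (a - b) ∧
    (a * (Real.log a - Real.log b) - (a - b) = 0 → b = a) := by
  have hba : 0 < b / a := div_pos hb ha
  have e : a * (b / a) = b := mul_div_cancel₀ b ha.ne'
  constructor
  · have h := Real.log_le_sub_one_of_pos hba
    rw [Real.log_div hb.ne' ha.ne'] at h
    nlinarith
  · intro h0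
    by_contra hne
    have h := Real.log_lt_sub_one_of_pos hba (fun h => hne (by rwa [div_eq_one_iff_eq ha.ne'] at h))
    rw [Real.log_div hb.ne' ha.ne'] at h
    nlinarith

theorem aux_step (p : (Fin n → X) → ℝ) (hp : ∀ x, 0 < p x) (lam : ℝ)
    (d r r' q q' : (Fin n → X) → (Fin n → Y) → ℝ)
    (hr : ∀ x y, 0 < r x y) (hr' : ∀ x y, 0 < r' x y)
    (hq : ∀ x y, 0 < q x y) (hq' : ∀ x y, 0 < q' x y)
    (hs : ∀ x, ∑ y, r x y = ∑ y, r' x y)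
    (hdef : ∀ x y, r' x y = q x y * 2 ^ (-(lam * d x y)) /
        ∑ y', q x y' * 2 ^ (-(lam * d x y')))
    (hqq : 0 ≤ ∑ x, ∑ y, p x * r' x y * (Real.log (q' x y) - Real.log (q x y))) :
    (IFF p r' q' + lam * (∑ x, ∑ y, p x * r' x y * d x y) ≤
        IFF p r q + lam * (∑ x, ∑ y, p x * r x y * d x y)) ∧
      ((IFF p r' q' + lam * (∑ x, ∑ y, p x * r' x y * d x y) =
        IFF p r q + lam * (∑ x, ∑ y, p x * r x y * d x y)) → r' = r) := by
  have l2 : 0 < Real.log 2 := Real.log_pos (by norm_num)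
  set Z : (Fin n → X) → ℝ := fun x => ∑ y', q x y' * 2 ^ (-(lam * d x y')) with hZ
  have hlogr' : ∀ x y, Real.log (r' x y) = Real.log (q x y) - lam * d x y * Real.log 2
      - Real.log (Z x) := by
    intro x y
    have hZp : 0 < Z x := Finset.sum_pos (fun y' _ => mul_pos (hq x y') (by positivity))
      ⟨y, Finset.mem_univ _⟩
    have h2 : (0:ℝ) < 2 ^ (-(lam * d x y)) := by positivity
    rw [hdef x y, Real.log_div (mul_pos (hq x y) h2).ne' hZp.ne',
      Real.log_mul (hq x y).ne' h2.ne', Real.log_rpow (by norm_num)]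
    ring
  have hK : ∀ (s t : (Fin n → X) → (Fin n → Y) → ℝ), (∀ x y, 0 < s x y) → (∀ x y, 0 < t x y) →
      (IFF p s t + lam * (∑ x, ∑ y, p x * s x y * d x y)) * Real.log 2 =
      ∑ x, ∑ y, p x * s x y * (Real.log (s x y) - Real.log (t x y) + lam * d x y * Real.log 2) := by
    intro s t hs ht
    unfold IFF
    simp only [Finset.mul_sum, ← Finset.sum_add_distrib, Finset.sum_mul]
    refine Finset.sum_congr rfl fun x _ => Finset.sum_congr rfl fun y _ => ?_
    rw [Real.logb, Real.log_div (hs x y).ne' (ht x y).ne']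
    field_simp
  have hdiff : (IFF p r q + lam * (∑ x, ∑ y, p x * r x y * d x y)) * Real.log 2
      - (IFF p r' q' + lam * (∑ x, ∑ y, p x * r' x y * d x y)) * Real.log 2
      = (∑ x, ∑ y, p x * (r x y * (Real.log (r x y) - Real.log (r' x y)) - (r x y - r' x y)))
        + ∑ x, ∑ y, p x * r' x y * (Real.log (q' x y) - Real.log (q x y)) := by
    rw [hK r q hr hq, hK r' q' hr' hq', ← Finset.sum_sub_distrib, ← Finset.sum_add_distrib]
    refine Finset.sum_congr rfl fun x _ => ?_
    have hz : ∑ y, p x * (r x y - r' x y) * (1 - Real.log (Z x)) = 0 := by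
      rw [← Finset.sum_mul, ← Finset.mul_sum, Finset.sum_sub_distrib, hs x]; ring
    rw [← Finset.sum_sub_distrib, ← Finset.sum_add_distrib, ← sub_eq_zero,
      ← Finset.sum_sub_distrib, ← hz]
    refine Finset.sum_congr rfl fun y _ => ?_
    rw [hlogr' x y]
    ring
  have hpt : ∀ x y, 0 ≤ p x * (r x y * (Real.log (r x y) - Real.log (r' x y))
      - (r x y - r' x y)) := fun x y =>
    mul_nonneg (hp x).le (aux_kl_pt _ _ (hr x y) (hr' x y)).1
  have hkl := Finset.sum_nonneg fun x (_ : x ∈ Finset.univ) =>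
    Finset.sum_nonneg fun y (_ : y ∈ Finset.univ) => hpt x y
  constructor
  · refine le_of_mul_le_mul_right ?_ l2
    linarith
  · intro he
    rw [he, sub_self] at hdiff
    have h0 : ∑ x, ∑ y, p x * (r x y * (Real.log (r x y) - Real.log (r' x y))
      - (r x y - r' x y)) = 0 := by linarith
    funext x y
    rw [Finset.sum_eq_zero_iff_of_nonneg
      (fun x _ => Finset.sum_nonneg fun y _ => hpt x y)] at h0
    have h1 := h0 x (Finset.mem_univ _)
    rw [Finset.sum_eq_zero_iff_of_nonneg (fun y _ => hpt x y)] at h1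
    have h2 := (mul_eq_zero.1 (h1 y (Finset.mem_univ _))).resolve_left (hp x).ne'
    exact (aux_kl_pt _ _ (hr x y) (hr' x y)).2 h2

end

end FFRD

open FFRD in
/-- Lemma 11: along the Blahut–Arimoto-type iteration, the value
`K(r^k,q^k) = I_FF(r^k,q^k) + λ·E_{r^k}[d]` is non-increasing, and strictly decreasing
unless the iterates have stabilized. -/
theorem BA_iteration_monotone
    {X Y : Type} [Fintype X] [DecidableEq X] [Fintype Y] [DecidableEq Y]
    (n : ℕ)
    (p : (Fin n → X) → ℝ) (hp : IsPMF p) (hppos : ∀ x, 0 < p x)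
    (lam : ℝ) (hlam : 0 ≤ lam)
    (d : (Fin n → X) → (Fin n → Y) → ℝ) (hd : ∀ x y, 0 ≤ d x y)
    (r : ℕ → (Fin n → X) → (Fin n → Y) → ℝ)
    (q : ℕ → (Fin n → X) → (Fin n → Y) → ℝ)
    (hq0 : IsCausalCondKernel (q 0)) (hq0pos : ∀ x y, 0 < q 0 x y)
    (hr : ∀ k, 1 ≤ k → ∀ x y, r k x y =
      q (k - 1) x y * 2 ^ (-(lam * d x y)) /
        ∑ y', q (k - 1) x y' * 2 ^ (-(lam * d x y')))
    (hqk : ∀ k, 1 ≤ k → q k = causalCond p (r k)) :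
    ∀ k, 1 ≤ k →
      (IFF p (r (k + 1)) (q (k + 1)) +
          lam * (∑ x, ∑ y, p x * r (k + 1) x y * d x y) ≤
        IFF p (r k) (q k) + lam * (∑ x, ∑ y, p x * r k x y * d x y)) ∧
      ((IFF p (r (k + 1)) (q (k + 1)) +
          lam * (∑ x, ∑ y, p x * r (k + 1) x y * d x y) =
        IFF p (r k) (q k) + lam * (∑ x, ∑ y, p x * r k x y * d x y)) →
        r (k + 1) = r k ∧ q (k + 1) = q k) := by
  have rpos : ∀ k, (∀ x y, 0 < q k x y) → ∀ x y, 0 < r (k + 1) x y := by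
    intro k hk x y
    rw [hr (k + 1) (by omega) x y, Nat.add_sub_cancel]
    exact div_pos (mul_pos (hk x y) (by positivity))
      (Finset.sum_pos (fun y' _ => mul_pos (hk x y') (by positivity)) ⟨y, Finset.mem_univ _⟩)
  have qpos : ∀ k, ∀ x y, 0 < q k x y := by
    intro k
    induction k with
    | zero => exact hq0pos
    | succ k ih =>
      rw [hqk (k + 1) (by omega)]
      exact aux_cc_pos p hppos _ (rpos k ih)
  have rsum : ∀ k, ∀ x, (Finset.univ : Finset (Fin n → Y)).Nonempty →
      ∑ y, r (k + 1) x y = 1 := by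
    intro k x hne
    simp_rw [hr (k + 1) (by omega) x, Nat.add_sub_cancel]
    rw [← Finset.sum_div]
    exact div_self (Finset.sum_pos (fun y' _ => mul_pos (qpos k x y') (by positivity)) hne).ne'
  intro k hk
  obtain ⟨m, rfl⟩ : ∃ m, k = m + 1 := ⟨k - 1, by omega⟩
  have hs : ∀ x, ∑ y, r (m + 1) x y = ∑ y, r (m + 1 + 1) x y := by
    intro x
    rcases (Finset.univ : Finset (Fin n → Y)).eq_empty_or_nonempty with h | h
    · rw [h]; simp
    · rw [rsum m x h, rsum (m + 1) x h]
  have hqq := aux_q p hppos (r (m + 1)) (r (m + 1 + 1)) (rpos m (qpos m))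
    (rpos (m + 1) (qpos (m + 1)))
  rw [← hqk (m + 1) hk, ← hqk (m + 1 + 1) (by omega)] at hqq
  obtain ⟨h1, h2⟩ := aux_step p hppos lam d (r (m + 1)) (r (m + 1 + 1)) (q (m + 1))
    (q (m + 1 + 1)) (rpos m (qpos m)) (rpos (m + 1) (qpos (m + 1))) (qpos _) (qpos _) hs
    (fun x y => by simpa using hr (m + 1 + 1) (by omega) x y) hqq
  refine ⟨h1, fun he => ?_⟩
  have := h2 he
  exact ⟨this, by rw [hqk (m + 1) hk, hqk (m + 1 + 1) (by omega), this]⟩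
end
end
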